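/- If 0 < δ < 1, then there exists a constant c_{δ,n}, depending only on δ, n, and the kernel K, such that for every f ∈ L^∞_c and every x ∈ ℝⁿ, (Tf)_δ^#(x) ≤ c_{δ,n} Mf(x). -/

import Mathlib

/-!
Fix a cube `Q ∋ x` of side `h` and split `f = f1 + f2`, where `f1` is the restriction of `f` to a ball
`U` of radius comparable with `h` around `x`. Since `T` is of weak type `(1,1)`, Kolmogorov's
inequality (`kolmogorov`) bounds the average of `|T f1| ^ δ` over `Q` by a multiple of
`(‖f1‖₁ / |Q|) ^ δ`, hence of `Mf(x) ^ δ`. The regularity of `K` shows that `T f2` deviates on `Q`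
from the constant `T f2(x)` by at most a multiple of `Mf(x)` (`far_part`).

All estimates are made for the kernels `kk Ω ε R`, that is `K` cut off by Lipschitz functions at the
scales `ε` and `R`. They are continuous with compact support and satisfy the size, regularity and
cancellation conditions of the class `CZ` with a constant independent of `ε` and `R` (`kk_cz`).
Operators with kernels in `CZ` are bounded on `L²` because the Fourier transforms of the kernels are
bounded (`fourier_bound`, `l2_bound`), and of weak type `(1,1)` by the Calderón–Zygmund decomposition
(`cz_split`, `weak_one_one`), both with bounds depending only on the constant. Fatou's lemma along
`ε → 0` then transfers the estimate on `Q` to `T f` (`cube_bound`).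

This last step needs the convergence of the truncations to `T f` almost everywhere, which is not
part of the hypotheses: `Tsing` is defined by a limit that has an arbitrary value where the limit
does not exist. The truncations are Cauchy in `L²` (`l2_cauchy`), with a limit `g` along a sequence
of scales (`l2_limit`). The kernel `kk Ω ε R` differs from the mollification at scale `ε` of
`kk Ω η R`, `η ≤ ε`, by a function dominated by an integrable profile of scale `ε`
(`mollify_bound`), so that at common Lebesgue points of `f` and `g` the truncations converge to
`g x` (`kk_limit`). There, the sharp truncations `Teps` defining `T f` have the same limit
(`teps_sub_small`, `tendsto_tsing`).
-/

open MeasureTheory ENNReal Filter Set Topology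

noncomputable section

namespace VarExp

/-- Euclidean space ℝⁿ. -/
abbrev E (n : ℕ) := EuclideanSpace ℝ (Fin n)

/-- An axis-parallel cube in ℝⁿ. -/
def IsCube {n : ℕ} (Q : Set (E n)) : Prop :=
  ∃ (a : E n) (h : ℝ), 0 < h ∧ Q = {x : E n | ∀ i, a i ≤ x i ∧ x i ≤ a i + h}

/-- The average of `f` over a set `Q` (w.r.t. Lebesgue measure). -/
def cubeAvg {n : ℕ} (Q : Set (E n)) (f : E n → ℝ) : ℝ :=
  (volume Q).toReal⁻¹ * ∫ x in Q, f x

/-- The BMO seminorm `‖b‖_* = sup_Q |Q|⁻¹ ∫_Q |b - b_Q|`. -/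
def bmoNorm {n : ℕ} (b : E n → ℝ) : ℝ≥0∞ :=
  ⨆ (Q : Set (E n)) (_ : IsCube Q),
    (∫⁻ x in Q, ENNReal.ofReal |b x - cubeAvg Q b|) / volume Q

/-- `b ∈ BMO(ℝⁿ)`. -/
def MemBMO {n : ℕ} (b : E n → ℝ) : Prop :=
  LocallyIntegrable b volume ∧ bmoNorm b < ⊤

/-- Hardy-Littlewood maximal function (over axis-parallel cubes) of an
`ℝ≥0∞`-valued function. -/
def emaximal {n : ℕ} (f : E n → ℝ≥0∞) (x : E n) : ℝ≥0∞ :=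
  ⨆ (Q : Set (E n)) (_ : IsCube Q ∧ x ∈ Q), (∫⁻ y in Q, f y) / volume Q

/-- Hardy-Littlewood maximal function of a real function. -/
def maximal {n : ℕ} (f : E n → ℝ) : E n → ℝ≥0∞ :=
  emaximal (fun y => ENNReal.ofReal |f y|)

/-- Luxemburg-Nakano norm of an `ℝ≥0∞`-valued function for a variable exponent `p`. -/
def eLux {n : ℕ} (p : E n → ℝ) (f : E n → ℝ≥0∞) : ℝ≥0∞ :=
  sInf {lam : ℝ≥0∞ | lam ≠ 0 ∧ ∫⁻ x, (f x / lam) ^ (p x) ≤ 1}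

/-- Luxemburg-Nakano norm `‖f‖_{L^{p(·)}}` of a real function. -/
def vNorm {n : ℕ} (p : E n → ℝ) (f : E n → ℝ) : ℝ≥0∞ :=
  eLux p (fun x => ENNReal.ofReal |f x|)

/-- Membership `f ∈ L^{p(·)}(ℝⁿ)`: the modular of `λf` is finite for some `λ > 0`. -/
def MemVarLp {n : ℕ} (p : E n → ℝ) (f : E n → ℝ) : Prop :=
  AEStronglyMeasurable f volume ∧
    ∃ lam : ℝ, 0 < lam ∧ ∫⁻ x, (ENNReal.ofReal (lam * |f x|)) ^ (p x) < ⊤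

/-- Condition (*): `p` measurable, `1 ≤ p`, `1 < p_- := essinf p` and
`p_+ := esssup p < ∞` (i.e. `p` essentially bounded above). -/
def GoodExp {n : ℕ} (p : E n → ℝ) : Prop :=
  Measurable p ∧ (∀ x, 1 ≤ p x) ∧ 1 < essInf p volume ∧
    ∃ B : ℝ, ∀ᵐ x ∂(volume : Measure (E n)), p x ≤ B

/-- The constant `r_p := 1 + 1/p_- - 1/p_+`. -/
def rp {n : ℕ} (p : E n → ℝ) : ℝ :=
  1 + (essInf p volume)⁻¹ - (essSup p volume)⁻¹

/-- The conjugate exponent `p'(x) = p(x)/(p(x)-1)`. -/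
def conjExp {n : ℕ} (p : E n → ℝ) : E n → ℝ := fun x => p x / (p x - 1)

/-- The class `𝓜(ℝⁿ)`: `p` satisfies (*) and the Hardy-Littlewood maximal operator
is bounded on `L^{p(·)}(ℝⁿ)`. -/
def MemClassM {n : ℕ} (p : E n → ℝ) : Prop :=
  GoodExp p ∧ ∃ c : ℝ≥0∞, c ≠ ⊤ ∧ ∀ f : E n → ℝ, AEStronglyMeasurable f volume →
    eLux p (maximal f) ≤ c * vNorm p f

/-- Bounded measurable functions with compact support. -/
def MemLinftyC {n : ℕ} (f : E n → ℝ) : Prop :=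
  Measurable f ∧ (∃ C : ℝ, ∀ x, |f x| ≤ C) ∧ HasCompactSupport f

/-- The Calderón-Zygmund kernel data: `Ω` is homogeneous of degree zero, infinitely
differentiable away from the origin (equivalently, on the unit sphere), and has
mean value zero over the unit sphere (expressed, via homogeneity, as mean zero
over the annulus `1 ≤ ‖x‖ ≤ 2`). -/
structure IsCZKernel {n : ℕ} (Ω : E n → ℝ) : Prop where
  hom : ∀ (x : E n) (t : ℝ), 0 < t → Ω (t • x) = Ω x
  smooth : ContDiffOn ℝ (⊤ : ℕ∞) Ω {x : E n | x ≠ 0}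
  mean : ∫ x in {x : E n | 1 ≤ ‖x‖ ∧ ‖x‖ ≤ 2}, Ω x = 0

/-- The kernel `K(x) = Ω(x)/|x|ⁿ`. -/
def kernelFn {n : ℕ} (Ω : E n → ℝ) : E n → ℝ := fun x => Ω x / ‖x‖ ^ n

/-- The truncated kernel `K_ε = K·χ_{|y|>ε}`. -/
def kernelEps {n : ℕ} (Ω : E n → ℝ) (ε : ℝ) : E n → ℝ :=
  fun y => if ε < ‖y‖ then kernelFn Ω y else 0

/-- The truncated singular integral `T_ε f(x) = ∫_{|y|>ε} K(y) f(x-y) dy`. -/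
def Teps {n : ℕ} (Ω : E n → ℝ) (ε : ℝ) (f : E n → ℝ) (x : E n) : ℝ :=
  ∫ y in {y : E n | ε < ‖y‖}, kernelFn Ω y * f (x - y)

/-- The principal value singular integral `T f(x) = lim_{ε→0⁺} T_ε f(x)`. -/
def Tsing {n : ℕ} (Ω : E n → ℝ) (f : E n → ℝ) (x : E n) : ℝ :=
  limUnder (𝓝[>] (0 : ℝ)) (fun ε => Teps Ω ε f x)

/-- The commutator `[b,T]f = b·Tf - T(bf)`. -/
def commutator {n : ℕ} (b : E n → ℝ) (Ω : E n → ℝ) (f : E n → ℝ) : E n → ℝ :=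
  fun x => b x * Tsing Ω f x - Tsing Ω (fun y => b y * f y) x

/-- The non-increasing rearrangement `f^*(t)` (ℝ≥0∞-valued, `t ∈ ℝ≥0∞`). -/
def rearr {n : ℕ} (f : E n → ℝ) (t : ℝ≥0∞) : ℝ≥0∞ :=
  sInf {α : ℝ≥0∞ | volume {x : E n | α < ENNReal.ofReal |f x|} ≤ t}

/-- The local sharp maximal function
`M_λ^# f(x) = sup_{Q ∋ x} inf_c ((f-c)χ_Q)^*(λ|Q|)`. -/
def localSharp {n : ℕ} (lam : ℝ) (f : E n → ℝ) (x : E n) : ℝ≥0∞ :=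
  ⨆ (Q : Set (E n)) (_ : IsCube Q ∧ x ∈ Q),
    ⨅ c : ℝ, rearr (Q.indicator (fun y => f y - c)) (ENNReal.ofReal lam * volume Q)

/-- The sharp maximal function
`f_δ^#(x) = sup_{Q ∋ x} inf_c (|Q|⁻¹ ∫_Q |f-c|^δ)^{1/δ}`. -/
def sharpDelta {n : ℕ} (δ : ℝ) (f : E n → ℝ) (x : E n) : ℝ≥0∞ :=
  ⨆ (Q : Set (E n)) (_ : IsCube Q ∧ x ∈ Q),
    ⨅ c : ℝ, ((∫⁻ y in Q, ENNReal.ofReal (|f y - c| ^ δ)) / volume Q) ^ (1 / δ)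

/-- `f ∈ L^δ_loc(ℝⁿ)` (local δ-integrability over cubes). -/
def MemLdeltaLoc {n : ℕ} (δ : ℝ) (f : E n → ℝ) : Prop :=
  AEStronglyMeasurable f volume ∧
    ∀ Q : Set (E n), IsCube Q → ∫⁻ y in Q, ENNReal.ofReal (|f y| ^ δ) < ⊤

/-- `f ∈ L log L(Q)`: `∫_Q |f| log⁺|f| < ∞`. -/
def MemLlogL {n : ℕ} (Q : Set (E n)) (f : E n → ℝ) : Prop :=
  AEStronglyMeasurable f volume ∧
    ∫⁻ x in Q, ENNReal.ofReal (|f x| * Real.log (max |f x| 1)) < ⊤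

/-- `g ∈ L_exp(Q)`: `∫_Q exp(λ|g|) < ∞` for some `λ > 0`. -/
def MemLexp {n : ℕ} (Q : Set (E n)) (g : E n → ℝ) : Prop :=
  AEStronglyMeasurable g volume ∧
    ∃ lam : ℝ, 0 < lam ∧ ∫⁻ x in Q, ENNReal.ofReal (Real.exp (lam * |g x|)) < ⊤

/-- `f^{**}(t) = t⁻¹ ∫_0^t f^*(s) ds`. -/
def starStar {n : ℕ} (f : E n → ℝ) (t : ℝ) : ℝ≥0∞ :=
  (∫⁻ s in Set.Ioc (0 : ℝ) t, rearr f (ENNReal.ofReal s)) / ENNReal.ofReal t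

/-- The Zygmund norm `‖f‖_{L log L(Q)} = ∫_0^{|Q|} (fχ_Q)^{**}(t) dt`. -/
def llogLNorm {n : ℕ} (Q : Set (E n)) (f : E n → ℝ) : ℝ≥0∞ :=
  ∫⁻ t in Set.Ioc (0 : ℝ) (volume Q).toReal, starStar (Q.indicator f) t

/-- The norm `‖g‖_{L_exp(Q)} = sup_{0<t<|Q|} g^{**}(t)/(1 + log(|Q|/t))`. -/
def lexpNorm {n : ℕ} (Q : Set (E n)) (g : E n → ℝ) : ℝ≥0∞ :=
  ⨆ (t : ℝ) (_ : t ∈ Set.Ioo (0 : ℝ) (volume Q).toReal),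
    starStar (Q.indicator g) t / ENNReal.ofReal (1 + Real.log ((volume Q).toReal / t))

/-- The Orlicz-type norm `‖f‖⁰ = sup {∫ |fg| : ‖g‖_{L^{p'(·)}} ≤ 1}`. -/
def orliczNorm {n : ℕ} (p : E n → ℝ) (f : E n → ℝ) : ℝ≥0∞ :=
  ⨆ (g : E n → ℝ) (_ : MemVarLp (conjExp p) g ∧ vNorm (conjExp p) g ≤ 1),
    ∫⁻ x, ENNReal.ofReal |f x * g x|

/-- The associate (Köthe dual) norm of `L^{p(·)}`:
`‖g‖' = sup {∫ |gh| : ‖h‖_{L^{p(·)}} ≤ 1}`. -/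
def assocNorm {n : ℕ} (p : E n → ℝ) (g : E n → ℝ) : ℝ≥0∞ :=
  ⨆ (h : E n → ℝ) (_ : MemVarLp p h ∧ vNorm p h ≤ 1),
    ∫⁻ x, ENNReal.ofReal |g x * h x|

section

open Metric

/-! ### Cubes, balls and radial majorants -/

/-- The volume of the unit ball of `ℝⁿ`, as a real number. -/
def unitVol (n : ℕ) : ℝ := (volume (ball (0 : E n) 1)).toReal

lemma unitVol_pos (n : ℕ) : 0 < unitVol n :=
  ENNReal.toReal_pos (measure_ball_pos _ _ one_pos).ne' measure_ball_lt_top.ne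

lemma volume_closedBall {n : ℕ} (x : E n) {r : ℝ} (hr : 0 ≤ r) :
    volume (closedBall x r) = ENNReal.ofReal (r ^ n * unitVol n) := by
  rw [Measure.addHaar_closedBall _ _ hr, ENNReal.ofReal_mul (by positivity), unitVol,
    ENNReal.ofReal_toReal measure_ball_lt_top.ne]
  simp

lemma volume_cube {n : ℕ} (a : E n) {h : ℝ} (hh : 0 < h) :
    volume {x : E n | ∀ i, a i ≤ x i ∧ x i ≤ a i + h} = ENNReal.ofReal (h ^ n) := by
  have h1 : {x : E n | ∀ i, a i ≤ x i ∧ x i ≤ a i + h}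
      = (MeasurableEquiv.toLp 2 (Fin n → ℝ)).symm ⁻¹' (Icc (a.ofLp) (fun i => a i + h)) := by
    ext x
    simp only [mem_ofPred_eq, mem_preimage, mem_Icc, Pi.le_def, forall_and]
    rfl
  rw [h1, (EuclideanSpace.volume_preserving_symm_measurableEquiv_toLp (Fin n)).measure_preimage
    measurableSet_Icc.nullMeasurableSet, Real.volume_Icc_pi]
  simp [ENNReal.ofReal_pow hh.le]

lemma measurableSet_cube {n : ℕ} {Q : Set (E n)} (hQ : IsCube Q) : MeasurableSet Q := by
  obtain ⟨a, h, hh, rfl⟩ := hQ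
  have : {x : E n | ∀ i, a i ≤ x i ∧ x i ≤ a i + h}
      = ⋂ i, {x : E n | a i ≤ x i ∧ x i ≤ a i + h} := by ext; simp
  rw [this]
  exact MeasurableSet.iInter fun i =>
    MeasurableSet.inter (s₁ := {x : E n | a i ≤ x i}) (s₂ := {x : E n | x i ≤ a i + h})
      (measurableSet_le measurable_const (by fun_prop))
      (measurableSet_le (by fun_prop) measurable_const)

/-- Balls are comparable with cubes, so the maximal function over cubes controls averages over
balls. -/
lemma lintegral_closedBall_le_maximal {n : ℕ} (f : E n → ℝ) {x z : E n} {r : ℝ} (hr : 0 < r)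
    (hx : ‖x - z‖ ≤ r) :
    ∫⁻ y in closedBall z r, ENNReal.ofReal |f y| ≤
      ENNReal.ofReal ((2 * r) ^ n) * maximal f x := by
  set a : E n := z - WithLp.toLp 2 (fun _ => r) with ha
  set Q : Set (E n) := {y : E n | ∀ i, a i ≤ y i ∧ y i ≤ a i + 2 * r} with hQ
  have hcube : IsCube Q := ⟨a, 2 * r, by positivity, rfl⟩
  have hsub : closedBall z r ⊆ Q := by
    intro y hy i
    have h1 : ‖(y - z) i‖ ≤ r := (PiLp.norm_apply_le (y - z) i).trans (by
      simpa [dist_eq_norm] using hy)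
    simp only [ha, PiLp.sub_apply, Real.norm_eq_abs, abs_le] at h1 ⊢
    constructor <;> linarith
  have hxQ : x ∈ Q := hsub (by simpa [dist_eq_norm] using hx)
  have hvol : volume Q = ENNReal.ofReal ((2 * r) ^ n) := volume_cube _ (by positivity)
  have hle : (∫⁻ y in Q, ENNReal.ofReal |f y|) / volume Q ≤ maximal f x :=
    le_iSup₂_of_le (f := fun (Q : Set (E n)) (_ : IsCube Q ∧ x ∈ Q) =>
      (∫⁻ y in Q, ENNReal.ofReal |f y|) / volume Q) Q ⟨hcube, hxQ⟩ le_rfl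
  calc _ ≤ ∫⁻ y in Q, ENNReal.ofReal |f y| := lintegral_mono_set hsub
    _ ≤ volume Q * maximal f x := by
      rw [mul_comm]
      refine (ENNReal.div_le_iff ?_ ?_).1 hle
      · rw [hvol]; simp; positivity
      · rw [hvol]; simp
    _ = _ := by rw [hvol]

/-- The integrable radial majorant `min (r⁻ⁿ) (r / ‖y‖ⁿ⁺¹)` at scale `r`. -/
def tailFn (n : ℕ) (r : ℝ) (y : E n) : ℝ :=
  if ‖y‖ ≤ r then (r ^ n)⁻¹ else r / ‖y‖ ^ (n + 1)

lemma tailFn_nonneg {n : ℕ} {r : ℝ} (hr : 0 ≤ r) (y : E n) : 0 ≤ tailFn n r y := by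
  unfold tailFn; split_ifs <;> positivity

lemma measurable_tailFn {n : ℕ} {r : ℝ} : Measurable (tailFn n r) :=
  Measurable.ite (measurableSet_le (by fun_prop) measurable_const) (by fun_prop) (by fun_prop)

/-- Dyadic decomposition of `tailFn` into multiples of averages over balls. -/
lemma lintegral_tailFn_le {n : ℕ} {r : ℝ} (hr : 0 < r) {F : E n → ℝ≥0∞} (hF : Measurable F)
    (z : E n) :
    ∫⁻ y, ENNReal.ofReal (tailFn n r (z - y)) * F y ≤
      ∑' j : ℕ, ENNReal.ofReal (2 ^ (n + 1) * (1 / 2) ^ j * ((2 ^ j * r) ^ n)⁻¹) *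
        ∫⁻ y in closedBall z (2 ^ j * r), F y := by
  simp_rw [← lintegral_indicator (isClosed_closedBall (x := z)).measurableSet]
  simp_rw [← lintegral_const_mul _ (hF.indicator (isClosed_closedBall (x := z)).measurableSet)]
  rw [← lintegral_tsum fun j =>
    (Measurable.const_mul (hF.indicator isClosed_closedBall.measurableSet) _).aemeasurable]
  refine lintegral_mono fun y => ?_
  have key : ∃ j : ℕ, ‖z - y‖ ≤ 2 ^ j * r ∧
      tailFn n r (z - y) ≤ 2 ^ (n + 1) * (1 / 2) ^ j * ((2 ^ j * r) ^ n)⁻¹ := by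
    unfold tailFn
    split_ifs with h
    · refine ⟨0, by simpa using h, ?_⟩
      have : (1 : ℝ) ≤ 2 ^ (n + 1) := one_le_pow₀ (by norm_num)
      have h2 : 0 ≤ (r ^ n)⁻¹ := by positivity
      simp only [pow_zero, mul_one, one_mul]
      nlinarith
    · push Not at h
      have hex : ∃ j : ℕ, ‖z - y‖ ≤ 2 ^ j * r := by
        obtain ⟨j, hj⟩ := pow_unbounded_of_one_lt (‖z - y‖ / r) (one_lt_two)
        exact ⟨j, by rw [div_lt_iff₀ hr] at hj; exact hj.le⟩
      classical
      have h1 := Nat.find_spec hex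
      have h2 : Nat.find hex ≠ 0 := by
        intro h0
        rw [h0] at h1
        simp at h1; linarith
      obtain ⟨i, hi⟩ := Nat.exists_eq_succ_of_ne_zero h2
      have h3 := Nat.find_min hex (m := i) (by omega)
      push Not at h3
      refine ⟨Nat.find hex, h1, ?_⟩
      rw [hi]
      calc r / ‖z - y‖ ^ (n + 1) ≤ r / (2 ^ i * r) ^ (n + 1) := by gcongr
        _ = _ := by
          have e1 : (1 / 2 : ℝ) ^ (i + 1) = 1 / 2 ^ (i + 1) := by simp
          simp only [Nat.succ_eq_add_one]
          rw [e1]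
          field_simp
          ring
  obtain ⟨j, hj, hj2⟩ := key
  refine le_trans ?_ (ENNReal.le_tsum j)
  rw [indicator_of_mem (by simpa [dist_eq_norm, norm_sub_rev] using hj)]
  gcongr

lemma tsum_geo_half (c : ℝ) (hc : 0 ≤ c) :
    ∑' j : ℕ, ENNReal.ofReal (c * (1 / 2) ^ j) = ENNReal.ofReal (2 * c) := by
  rw [← ENNReal.ofReal_tsum_of_nonneg (fun j => by positivity)
    (summable_geometric_two.mul_left c), tsum_mul_left, tsum_geometric_two, mul_comm]

/-- If all averages of `F` over balls centred at `z` of radius at least `r` are `≤ M`, so is, up to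
a constant, the integral of `F` against the majorant `tailFn`. -/
lemma lintegral_tailFn_le' {n : ℕ} {r : ℝ} (hr : 0 < r) {F : E n → ℝ≥0∞} (hF : Measurable F)
    (z : E n) (M : ℝ≥0∞)
    (hM : ∀ s, r ≤ s → ∫⁻ y in closedBall z s, F y ≤ ENNReal.ofReal (s ^ n) * M) :
    ∫⁻ y, ENNReal.ofReal (tailFn n r (z - y)) * F y ≤ ENNReal.ofReal (2 ^ (n + 2)) * M := by
  refine (lintegral_tailFn_le hr hF z).trans ?_
  calc _ ≤ ∑' j : ℕ, ENNReal.ofReal (2 ^ (n + 1) * (1 / 2) ^ j) * M := by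
        refine ENNReal.tsum_le_tsum fun j => ?_
        refine (mul_le_mul_right (hM (2 ^ j * r) ?_) _).trans_eq ?_
        · have : (1 : ℝ) ≤ 2 ^ j := one_le_pow₀ (by norm_num)
          nlinarith
        · rw [← mul_assoc, ← ENNReal.ofReal_mul (by positivity)]
          congr 2
          field_simp
    _ = _ := by
        rw [ENNReal.tsum_mul_right, tsum_geo_half _ (by positivity)]
        congr 2
        ring

lemma lintegral_tailFn {n : ℕ} {r : ℝ} (hr : 0 < r) :
    ∫⁻ y : E n, ENNReal.ofReal (tailFn n r y) ≤ ENNReal.ofReal (2 ^ (n + 2) * unitVol n) := by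
  have := lintegral_tailFn_le' hr (F := fun _ : E n => 1) measurable_const 0
    (ENNReal.ofReal (unitVol n)) (fun s hs => by
      rw [setLIntegral_one, volume_closedBall _ (hr.le.trans hs), ENNReal.ofReal_mul (by
        have := hr.le.trans hs; positivity)])
  rw [ENNReal.ofReal_mul (by positivity)]
  refine le_trans (le_of_eq ?_) this
  simp [tailFn]

lemma integrable_tailFn {n : ℕ} {r : ℝ} (hr : 0 < r) : Integrable (tailFn n r) := by
  refine ⟨measurable_tailFn.aestronglyMeasurable, ?_⟩
  rw [hasFiniteIntegral_iff_ofReal (ae_of_all _ (tailFn_nonneg hr.le))]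
  exact (lintegral_tailFn hr).trans_lt ENNReal.ofReal_lt_top

lemma integral_tailFn {n : ℕ} {r : ℝ} (hr : 0 < r) :
    ∫ y : E n, tailFn n r y ≤ 2 ^ (n + 2) * unitVol n := by
  rw [integral_eq_lintegral_of_nonneg_ae (ae_of_all _ (tailFn_nonneg hr.le))
    measurable_tailFn.aestronglyMeasurable]
  refine ENNReal.toReal_le_of_le_ofReal ?_ (lintegral_tailFn hr)
  have := unitVol_pos n
  positivity

/-- The integrable singularity `‖y‖¹⁻ⁿ` on the ball of radius `r`. -/
def innerFn (n : ℕ) (r : ℝ) (y : E n) : ℝ := if ‖y‖ ≤ r then ‖y‖ / ‖y‖ ^ n else 0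

lemma innerFn_nonneg {n : ℕ} {r : ℝ} (y : E n) : 0 ≤ innerFn n r y := by
  unfold innerFn; split_ifs <;> positivity

lemma innerFn_aux {n : ℕ} (hn : 0 < n) (r : ℝ) : ∀ y ∈ Ioi (0 : ℝ),
    y ^ (n - 1) • (if y ≤ r then y / y ^ n else 0) = (Iic r).indicator (fun _ => (1 : ℝ)) y := by
  intro y hy
  have hy : 0 < y := hy
  obtain ⟨m, rfl⟩ := Nat.exists_eq_succ_of_ne_zero hn.ne'
  by_cases h : y ≤ r
  · simp [h]; field_simp; ring
  · simp [h]

lemma integrable_innerFn {n : ℕ} (hn : 0 < n) (r : ℝ) : Integrable (innerFn n r) := by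
  have : Nonempty (Fin n) := ⟨⟨0, hn⟩⟩
  refine (integrable_fun_norm_addHaar (E := E n) volume
    (f := fun y : ℝ => if y ≤ r then y / y ^ n else 0)).2 ?_
  rw [finrank_euclideanSpace_fin]
  rw [integrableOn_congr_fun (innerFn_aux hn r) measurableSet_Ioi,
    IntegrableOn, integrable_indicator_iff measurableSet_Iic, IntegrableOn,
    Measure.restrict_restrict measurableSet_Iic]
  refine integrable_const_iff.2 (Or.inr ⟨?_⟩)
  have : Iic r ∩ Ioi 0 = Ioc 0 r := by ext; simp [and_comm]
  rw [this]; simp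

lemma integral_innerFn {n : ℕ} (hn : 0 < n) {r : ℝ} (hr : 0 ≤ r) :
    ∫ y, innerFn n r y = n * unitVol n * r := by
  have : Nonempty (Fin n) := ⟨⟨0, hn⟩⟩
  have := integral_fun_norm_addHaar (E := E n) volume
    (f := fun y : ℝ => if y ≤ r then y / y ^ n else 0)
  rw [finrank_euclideanSpace_fin, setIntegral_congr_fun measurableSet_Ioi (innerFn_aux hn r),
    integral_indicator measurableSet_Iic, Measure.restrict_restrict measurableSet_Iic] at this
  have h2 : Iic r ∩ Ioi 0 = Ioc 0 r := by ext; simp [and_comm]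
  rw [h2] at this
  simp only [innerFn]
  rw [this]
  simp [unitVol, hr, Measure.real, mul_assoc]

/-! ### Truncated Calderón–Zygmund kernels -/

/-- Polar coordinates for the product of a function homogeneous of degree zero and a radial one. -/
lemma integral_hom_mul_radial {n : ℕ} (hn : 0 < n) (Ω : E n → ℝ)
    (hom : ∀ (x : E n) (t : ℝ), 0 < t → Ω (t • x) = Ω x) (h : ℝ → ℝ) :
    ∫ x, Ω x * h ‖x‖ = (∫ s, Ω s.1 ∂(volume : Measure (E n)).toSphere) *
      ∫ r, h r.1 ∂(Measure.volumeIoiPow (Module.finrank ℝ (E n) - 1)) := by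
  have h1 : ∫ x, Ω x * h ‖x‖ =
      ∫ x : ({(0 : E n)}ᶜ : Set (E n)), Ω x.1 * h (‖x.1‖)
        ∂((volume : Measure (E n)).comap (↑)) := by
    have : Nonempty (Fin n) := ⟨⟨0, hn⟩⟩
    rw [integral_subtype_comap (μ := (volume : Measure (E n)))
      (s := ({(0 : E n)}ᶜ : Set (E n))) (measurableSet_singleton _).compl
      fun x ↦ Ω x * h (‖x‖), restrict_compl_singleton]
  rw [h1, ← integral_prod_mul, ← (Measure.measurePreserving_homeomorphUnitSphereProd
    (volume : Measure (E n))).integral_comp (Homeomorph.measurableEmbedding _)]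
  refine integral_congr_ae (ae_of_all _ fun x => ?_)
  have hx : 0 < ‖x.1‖ := norm_pos_iff.2 x.2
  simp only [homeomorphUnitSphereProd_apply_fst_coe, homeomorphUnitSphereProd_apply_snd_coe]
  rw [hom _ _ (inv_pos.2 hx)]

/-- The cancellation of `Ω`, given on a shell, propagates to every radial weight `h`: the integral
of `Ω` over the sphere is zero. No integrability is needed, since the polar coordinate formula
also holds for the junk value of a divergent integral. -/
lemma IsCZKernel.integral_mul_radial {n : ℕ} (hn : 0 < n) {Ω : E n → ℝ} (hK : IsCZKernel Ω)
    (h : ℝ → ℝ) : ∫ x, Ω x * h ‖x‖ = 0 := by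
  rw [integral_hom_mul_radial hn Ω hK.hom]
  -- The shell `1 ≤ ‖x‖ ≤ 2` has finite positive measure, so its radial factor in polar
  -- coordinates does not vanish and the spherical factor must.
  set g : ℝ → ℝ := (Icc 1 2).indicator 1 with hg
  have hm : MeasurableSet {x : E n | 1 ≤ ‖x‖ ∧ ‖x‖ ≤ 2} :=
    (isClosed_le continuous_const continuous_norm).measurableSet.inter
      (isClosed_le continuous_norm continuous_const).measurableSet
  have hind : ∀ (F : E n → ℝ) x, F x * g ‖x‖ =
      {x : E n | 1 ≤ ‖x‖ ∧ ‖x‖ ≤ 2}.indicator F x := by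
    intro F x
    by_cases hx : 1 ≤ ‖x‖ ∧ ‖x‖ ≤ 2
    · rw [indicator_of_mem (show x ∈ {x : E n | 1 ≤ ‖x‖ ∧ ‖x‖ ≤ 2} from hx), hg,
        indicator_of_mem (show ‖x‖ ∈ Icc (1 : ℝ) 2 from hx)]
      simp
    · rw [indicator_of_notMem (show x ∉ {x : E n | 1 ≤ ‖x‖ ∧ ‖x‖ ≤ 2} from hx), hg,
        indicator_of_notMem (show ‖x‖ ∉ Icc (1 : ℝ) 2 from hx)]
      simp
  have e1 := integral_hom_mul_radial hn Ω hK.hom g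
  have e2 := integral_hom_mul_radial hn (fun _ : E n => (1 : ℝ)) (fun _ _ _ => rfl) g
  rw [integral_congr_ae (ae_of_all _ (hind _)), integral_indicator hm] at e1 e2
  rw [hK.mean] at e1
  have hpos : 0 < volume {x : E n | 1 ≤ ‖x‖ ∧ ‖x‖ ≤ 2} := by
    have h3 : closedBall (0 : E n) 2 ⊆ {x : E n | 1 ≤ ‖x‖ ∧ ‖x‖ ≤ 2} ∪ closedBall 0 1 := by
      intro x hx
      simp only [mem_closedBall, dist_zero_right, mem_union] at hx ⊢
      rcases le_total 1 ‖x‖ with h | h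
      · exact Or.inl ⟨h, hx⟩
      · exact Or.inr h
    by_contra h0
    have h0 : volume {x : E n | 1 ≤ ‖x‖ ∧ ‖x‖ ≤ 2} = 0 := by simpa using h0
    have h4 := (measure_mono h3).trans (measure_union_le (μ := (volume : Measure (E n))) _ _)
    rw [h0, zero_add, volume_closedBall _ (by norm_num), volume_closedBall _ (by norm_num),
      ENNReal.ofReal_le_ofReal_iff (by have := unitVol_pos n; positivity)] at h4
    have h5 : (1 : ℝ) ^ n < 2 ^ n := by gcongr; norm_num
    nlinarith [unitVol_pos n]
  have hfin : volume {x : E n | 1 ≤ ‖x‖ ∧ ‖x‖ ≤ 2} < ⊤ :=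
    (measure_mono (fun x hx => by simpa using hx.2)).trans_lt
      (measure_closedBall_lt_top (x := (0 : E n)) (r := 2))
  simp only [integral_const, smul_eq_mul, mul_one, MeasurableSet.univ, measureReal_restrict_apply,
    univ_inter] at e2
  have hne : ∫ r, g r.1 ∂(Measure.volumeIoiPow (Module.finrank ℝ (E n) - 1)) ≠ 0 := by
    intro h0
    rw [h0, mul_zero] at e2
    exact (ENNReal.toReal_pos hpos.ne' hfin.ne).ne' e2
  rcases mul_eq_zero.1 e1.symm with h | h
  · rw [h, zero_mul]
  · exact absurd h hne

lemma kernelFn_smul {n : ℕ} {Ω : E n → ℝ} (hK : IsCZKernel Ω) (x : E n) {t : ℝ} (ht : 0 < t) :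
    kernelFn Ω (t • x) * t ^ n = kernelFn Ω x := by
  unfold kernelFn
  rw [hK.hom x t ht, norm_smul, Real.norm_of_nonneg ht.le, mul_pow]
  field_simp

lemma contDiffOn_kernelFn {n : ℕ} {Ω : E n → ℝ} (hK : IsCZKernel Ω) :
    ContDiffOn ℝ 1 (kernelFn Ω) {x : E n | x ≠ 0} := by
  have h1 : ContDiffOn ℝ 1 Ω {x : E n | x ≠ 0} := hK.smooth.of_le (by exact_mod_cast le_top)
  refine h1.div (ContDiffOn.pow (fun x hx => (contDiffAt_norm ℝ hx).contDiffWithinAt) _) ?_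
  intro x hx
  exact pow_ne_zero _ (norm_ne_zero_iff.2 hx)

lemma isOpen_ne_zero {n : ℕ} : IsOpen {x : E n | x ≠ 0} := isOpen_ne

/-- Size and regularity of `K`: both are bounded on a compact shell together with the derivative,
and homogeneity of degree `-n` carries the bounds to all of `ℝⁿ`. -/
lemma kernelFn_bounds {n : ℕ} (hn : 0 < n) {Ω : E n → ℝ} (hK : IsCZKernel Ω) :
    ∃ A : ℝ, 0 < A ∧ (∀ x, |kernelFn Ω x| * ‖x‖ ^ n ≤ A) ∧
      ∀ x y, 2 * ‖y‖ ≤ ‖x‖ → |kernelFn Ω (x - y) - kernelFn Ω x| * ‖x‖ ^ (n + 1) ≤ A * ‖y‖ := by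
  set S : Set (E n) := {x | 1 / 2 ≤ ‖x‖} ∩ closedBall 0 2 with hS
  have hScpt : IsCompact S :=
    (isCompact_closedBall (0 : E n) 2).inter_left (isClosed_le continuous_const continuous_norm)
  have hS0 : ∀ x ∈ S, x ≠ 0 := by
    rintro x ⟨hx, -⟩ rfl
    simp at hx
    norm_num at hx
  have hcd := contDiffOn_kernelFn hK
  obtain ⟨A1, hA1⟩ := hScpt.exists_bound_of_continuousOn (hcd.continuousOn.mono hS0)
  obtain ⟨A2, hA2⟩ := hScpt.exists_bound_of_continuousOn
    ((hcd.continuousOn_fderiv_of_isOpen isOpen_ne_zero le_rfl).mono hS0)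
  refine ⟨max (max A1 A2) 1, by positivity, ?_, ?_⟩
  · intro x
    by_cases hx : x = 0
    · subst hx; simp [hn.ne']
    · have hx' : 0 < ‖x‖ := norm_pos_iff.2 hx
      have h1 := kernelFn_smul hK x (inv_pos.2 hx')
      have hm : ‖x‖⁻¹ • x ∈ S := by
        have : ‖‖x‖⁻¹ • x‖ = 1 := by rw [norm_smul, norm_inv, norm_norm]; field_simp
        constructor
        · rw [mem_ofPred_eq, this]; norm_num
        · rw [mem_closedBall, dist_zero_right, this]; norm_num
      have h2 := hA1 _ hm
      rw [← h1, abs_mul, mul_assoc, abs_of_nonneg (a := ‖x‖⁻¹ ^ n) (by positivity), ← mul_pow,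
        inv_mul_cancel₀ hx'.ne', one_pow, mul_one]
      exact h2.trans ((le_max_left _ _).trans (le_max_left _ _))
  · intro x y hxy
    by_cases hx : x = 0
    · subst hx
      have : y = 0 := by
        have := norm_nonneg y
        rw [norm_zero] at hxy
        exact norm_eq_zero.1 (by linarith)
      subst this; simp
    · have hx' : 0 < ‖x‖ := norm_pos_iff.2 hx
      set u := ‖x‖⁻¹ • x with hu
      set w := ‖x‖⁻¹ • y with hw
      have hun : ‖u‖ = 1 := by rw [norm_smul, norm_inv, norm_norm]; field_simp
      have hwn : ‖w‖ = ‖x‖⁻¹ * ‖y‖ := by rw [norm_smul, norm_inv, norm_norm]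
      have hw2 : ‖w‖ ≤ 1 / 2 := by
        rw [hwn, inv_mul_le_iff₀ hx']; linarith
      have hsub : closedBall u (1 / 2) ⊆ S := by
        intro v hv
        rw [mem_closedBall, dist_eq_norm] at hv
        constructor
        · rw [mem_ofPred_eq]
          have := norm_sub_norm_le u (u - v)
          rw [show u - (u - v) = v by abel, norm_sub_rev u v] at this
          linarith
        · rw [mem_closedBall, dist_zero_right]
          have := norm_sub_norm_le v u
          linarith
      have h3 := (convex_closedBall u (1 / 2)).norm_image_sub_le_of_norm_fderiv_le (𝕜 := ℝ)
        (f := kernelFn Ω) (C := A2) (x := u) (y := u - w)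
        (fun v hv => (hcd.differentiableOn one_ne_zero).differentiableAt
          (isOpen_ne_zero.mem_nhds (hS0 _ (hsub hv))))
        (fun v hv => hA2 v (hsub hv)) (by simp) (by simpa [dist_eq_norm] using hw2)
      have e1 := kernelFn_smul hK x (inv_pos.2 hx')
      have e2 := kernelFn_smul hK (x - y) (inv_pos.2 hx')
      rw [smul_sub] at e2
      rw [← e1, ← e2, ← hu, ← hw, ← sub_mul, abs_mul, abs_of_nonneg (a := ‖x‖⁻¹ ^ n) (by positivity)]
      rw [sub_sub_cancel_left, norm_neg, hwn, Real.norm_eq_abs] at h3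
      calc _ = |kernelFn Ω (u - w) - kernelFn Ω u| * ‖x‖ := by
            rw [pow_succ, inv_pow]; field_simp
        _ ≤ (A2 * (‖x‖⁻¹ * ‖y‖)) * ‖x‖ := by gcongr
        _ = A2 * ‖y‖ := by field_simp
        _ ≤ _ := by
          gcongr
          exact (le_max_right _ _).trans (le_max_left _ _)

/-- The piecewise linear cutoff, `0` on `(-∞, 1]` and `1` on `[2, ∞)`. -/
def chi (s : ℝ) : ℝ := max 0 (min 1 (s - 1))

lemma chi_nonneg (s : ℝ) : 0 ≤ chi s := le_max_left _ _
lemma chi_le_one (s : ℝ) : chi s ≤ 1 := max_le zero_le_one (min_le_left _ _)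
lemma chi_eq_zero {s : ℝ} (h : s ≤ 1) : chi s = 0 :=
  max_eq_left ((min_le_right _ _).trans (by linarith))
lemma chi_eq_one {s : ℝ} (h : 2 ≤ s) : chi s = 1 := by
  unfold chi; rw [min_eq_left (by linarith)]; simp
lemma abs_chi_sub_chi_le (s t : ℝ) : |chi s - chi t| ≤ |s - t| := by
  unfold chi
  have h1 := abs_max_sub_max_le_max 0 (min 1 (s - 1)) 0 (min 1 (t - 1))
  have h2 := abs_min_sub_min_le_max 1 (s - 1) 1 (t - 1)
  simp only [sub_self, abs_zero, sub_sub_sub_cancel_right, abs_nonneg, sup_of_le_right] at h1 h2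
  exact h1.trans h2
lemma continuous_chi : Continuous chi := by unfold chi; fun_prop

/-- The dilated cutoffs are Lipschitz on a logarithmic scale, uniformly in the dilation. -/
lemma abs_chi_norm_sub_le {n : ℕ} {r : ℝ} (hr : 0 < r) {x y : E n} (hxy : 2 * ‖y‖ ≤ ‖x‖) :
    |chi (‖x - y‖ / r) - chi (‖x‖ / r)| * ‖x‖ ≤ 4 * ‖y‖ := by
  have h1 : |chi (‖x - y‖ / r) - chi (‖x‖ / r)| ≤ ‖y‖ / r := by
    refine (abs_chi_sub_chi_le _ _).trans ?_
    rw [← sub_div, abs_div, abs_of_pos hr]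
    gcongr
    refine (abs_norm_sub_norm_le _ _).trans ?_
    simp
  have h2 : ‖x‖ - ‖y‖ ≤ ‖x - y‖ := norm_sub_norm_le x y
  by_cases h : ‖x‖ ≤ 4 * r
  · calc _ ≤ ‖y‖ / r * (4 * r) := by gcongr
      _ = _ := by field_simp
  · push Not at h
    rw [chi_eq_one, chi_eq_one]
    · simp
    · rw [le_div_iff₀ hr]; linarith
    · rw [le_div_iff₀ hr]; linarith

/-- The class of continuous, compactly supported Calderón–Zygmund convolution kernels with
constant `A` whose integral against every radial function vanishes. -/
structure CZ {n : ℕ} (A : ℝ) (k : E n → ℝ) : Prop where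
  cont : Continuous k
  cpt : HasCompactSupport k
  size : ∀ x, |k x| * ‖x‖ ^ n ≤ A
  reg : ∀ x y, 2 * ‖y‖ ≤ ‖x‖ → |k (x - y) - k x| * ‖x‖ ^ (n + 1) ≤ A * ‖y‖
  mean : ∀ h : ℝ → ℝ, ∫ x, k x * h ‖x‖ = 0

lemma CZ.nonneg {n : ℕ} {A : ℝ} {k : E n → ℝ} (hk : CZ A k) : 0 ≤ A :=
  le_trans (by positivity) (hk.size 0)

lemma CZ.integrable {n : ℕ} {A : ℝ} {k : E n → ℝ} (hk : CZ A k) : Integrable k :=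
  hk.cont.integrable_of_hasCompactSupport hk.cpt

lemma CZ.integral_eq_zero {n : ℕ} {A : ℝ} {k : E n → ℝ} (hk : CZ A k) : ∫ x, k x = 0 := by
  simpa using hk.mean (fun _ => 1)

lemma CZ.le_div {n : ℕ} {A : ℝ} {k : E n → ℝ} (hk : CZ A k) {x : E n} {r : ℝ} (hr : 0 < r)
    (h : r ≤ ‖x‖) : |k x| ≤ A * (r ^ n)⁻¹ := by
  rw [← div_eq_mul_inv, le_div_iff₀ (by positivity)]
  refine le_trans ?_ (hk.size x)
  gcongr

/-- The class `CZ` is stable, up to the constant, under cutting off the origin at any scale. -/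
lemma CZ.mul_chi {n : ℕ} {A : ℝ} {k : E n → ℝ} (hk : CZ A k) {r : ℝ} (hr : 0 < r) :
    CZ (5 * A) (fun x => k x * chi (‖x‖ / r)) := by
  have hA := hk.nonneg
  refine ⟨hk.cont.mul (continuous_chi.comp (by fun_prop)), hk.cpt.mul_right, ?_, ?_, ?_⟩
  · intro x
    rw [abs_mul, abs_of_nonneg (chi_nonneg _)]
    calc _ ≤ |k x| * 1 * ‖x‖ ^ n := by gcongr; exact chi_le_one _
      _ ≤ A := by simpa using hk.size x
      _ ≤ _ := by linarith
  · intro x y hxy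
    have e : k (x - y) * chi (‖x - y‖ / r) - k x * chi (‖x‖ / r)
        = (k (x - y) - k x) * chi (‖x - y‖ / r)
          + k x * (chi (‖x - y‖ / r) - chi (‖x‖ / r)) := by ring
    rw [e]
    have h1 : |(k (x - y) - k x) * chi (‖x - y‖ / r)| ≤ |k (x - y) - k x| := by
      rw [abs_mul, abs_of_nonneg (chi_nonneg _)]
      exact mul_le_of_le_one_right (abs_nonneg _) (chi_le_one _)
    calc _ ≤ (|k (x - y) - k x| + |k x| * |chi (‖x - y‖ / r) - chi (‖x‖ / r)|) * ‖x‖ ^ (n + 1) := by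
          gcongr
          refine (abs_add_le _ _).trans ?_
          rw [abs_mul (k x)]
          gcongr
      _ = |k (x - y) - k x| * ‖x‖ ^ (n + 1)
          + (|k x| * ‖x‖ ^ n) * (|chi (‖x - y‖ / r) - chi (‖x‖ / r)| * ‖x‖) := by ring
      _ ≤ A * ‖y‖ + A * (4 * ‖y‖) := by
          exact add_le_add (hk.reg x y hxy)
            (mul_le_mul (hk.size x) (abs_chi_norm_sub_le hr hxy) (by positivity) hA)
      _ = _ := by ring
  · intro h
    simpa [mul_assoc] using hk.mean (fun s => chi (s / r) * h s)

/-- The kernel `K` with Lipschitz cutoffs at the scales `ε` and `R`. -/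
def kk {n : ℕ} (Ω : E n → ℝ) (ε R : ℝ) (x : E n) : ℝ :=
  kernelFn Ω x * (chi (‖x‖ / ε) - chi (‖x‖ / R))

lemma kk_eq_zero {n : ℕ} (Ω : E n → ℝ) {ε R : ℝ} (hε : 0 < ε) (hR : ε ≤ R) {x : E n}
    (hx : ‖x‖ ≤ ε) : kk Ω ε R x = 0 := by
  unfold kk
  rw [chi_eq_zero ((div_le_one hε).2 hx),
    chi_eq_zero ((div_le_one (hε.trans_le hR)).2 (hx.trans hR))]
  simp

lemma kk_eq_zero' {n : ℕ} (Ω : E n → ℝ) {ε R : ℝ} (hε : 0 < ε) (hR : ε ≤ R) {x : E n}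
    (hx : 2 * R ≤ ‖x‖) : kk Ω ε R x = 0 := by
  unfold kk
  rw [chi_eq_one ((le_div_iff₀ hε).2 (by linarith)),
    chi_eq_one ((le_div_iff₀ (hε.trans_le hR)).2 hx)]
  simp

/-- The truncations of `K` belong to `CZ` with a constant independent of the truncation scales. -/
lemma kk_cz {n : ℕ} (hn : 0 < n) {Ω : E n → ℝ} (hK : IsCZKernel Ω) :
    ∃ A : ℝ, 0 < A ∧ ∀ ε R, 0 < ε → ε ≤ R → CZ A (kk Ω ε R) := by
  obtain ⟨A, hA, hs, hr⟩ := kernelFn_bounds hn hK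
  refine ⟨9 * A, by positivity, fun ε R hε hR => ?_⟩
  have hRpos : 0 < R := hε.trans_le hR
  have habs : ∀ x : E n, |chi (‖x‖ / ε) - chi (‖x‖ / R)| ≤ 1 := by
    intro x
    rw [abs_le]
    have := chi_nonneg (‖x‖ / ε)
    have := chi_nonneg (‖x‖ / R)
    have := chi_le_one (‖x‖ / ε)
    have := chi_le_one (‖x‖ / R)
    constructor <;> linarith
  refine ⟨?_, ?_, ?_, ?_, ?_⟩
  · rw [continuous_iff_continuousAt]
    intro x
    by_cases hx : x = 0
    · subst hx
      refine (continuousAt_const (y := (0 : ℝ))).congr ?_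
      filter_upwards [ball_mem_nhds (0 : E n) hε] with y hy
      exact (kk_eq_zero Ω hε hR (by simpa using (mem_ball.1 hy).le)).symm
    · refine ContinuousAt.mul
        ((contDiffOn_kernelFn hK).continuousOn.continuousAt (isOpen_ne_zero.mem_nhds hx)) ?_
      exact (Continuous.sub (continuous_chi.comp (by fun_prop))
        (continuous_chi.comp (by fun_prop))).continuousAt
  · refine HasCompactSupport.intro (isCompact_closedBall (0 : E n) (2 * R)) fun x hx => ?_
    refine kk_eq_zero' Ω hε hR ?_
    simp only [mem_closedBall, dist_zero_right, not_le] at hx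
    exact hx.le
  · intro x
    unfold kk
    rw [abs_mul]
    calc _ ≤ |kernelFn Ω x| * 1 * ‖x‖ ^ n := by gcongr; exact habs x
      _ ≤ A := by simpa using hs x
      _ ≤ _ := by linarith
  · intro x y hxy
    have e : kk Ω ε R (x - y) - kk Ω ε R x
        = (kernelFn Ω (x - y) - kernelFn Ω x) * (chi (‖x - y‖ / ε) - chi (‖x - y‖ / R))
          + kernelFn Ω x * ((chi (‖x - y‖ / ε) - chi (‖x‖ / ε))
            - (chi (‖x - y‖ / R) - chi (‖x‖ / R))) := by unfold kk; ring
    rw [e]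
    have h1 : |(kernelFn Ω (x - y) - kernelFn Ω x) * (chi (‖x - y‖ / ε) - chi (‖x - y‖ / R))|
        ≤ |kernelFn Ω (x - y) - kernelFn Ω x| := by
      rw [abs_mul]
      exact mul_le_of_le_one_right (abs_nonneg _) (habs _)
    calc _ ≤ (|kernelFn Ω (x - y) - kernelFn Ω x| + |kernelFn Ω x| *
          (|chi (‖x - y‖ / ε) - chi (‖x‖ / ε)| + |chi (‖x - y‖ / R) - chi (‖x‖ / R)|))
            * ‖x‖ ^ (n + 1) := by
          gcongr
          refine (abs_add_le _ _).trans ?_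
          rw [abs_mul (kernelFn Ω x)]
          gcongr
          exact abs_sub _ _
      _ = |kernelFn Ω (x - y) - kernelFn Ω x| * ‖x‖ ^ (n + 1)
          + (|kernelFn Ω x| * ‖x‖ ^ n) * (|chi (‖x - y‖ / ε) - chi (‖x‖ / ε)| * ‖x‖
            + |chi (‖x - y‖ / R) - chi (‖x‖ / R)| * ‖x‖) := by ring
      _ ≤ A * ‖y‖ + A * (4 * ‖y‖ + 4 * ‖y‖) := by
          exact add_le_add (hr x y hxy) (mul_le_mul (hs x) (add_le_add
            (abs_chi_norm_sub_le hε hxy) (abs_chi_norm_sub_le hRpos hxy)) (by positivity) hA.le)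
      _ = _ := by ring
  · intro h
    refine (integral_congr_ae (ae_of_all _ fun x => ?_)).trans
      (hK.integral_mul_radial hn (fun s => (chi (s / ε) - chi (s / R)) * h s / s ^ n))
    simp only [kk, kernelFn]
    ring

section

open scoped FourierTransform ContDiff

/-! ### The Fourier transform of a kernel -/

/-- The Fourier transform of a Calderón–Zygmund kernel is bounded, with a bound depending only on
the dimension and the kernel constant. -/
lemma fourier_bound {n : ℕ} (hn : 0 < n) (A : ℝ) : ∃ B : ℝ, 0 ≤ B ∧ ∀ k : E n → ℝ, CZ A k →
    ∀ ξ, ‖𝓕 (fun x => (k x : ℂ)) ξ‖ ≤ B := by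
  by_cases hA : 0 ≤ A
  swap
  · exact ⟨0, le_rfl, fun k hk => absurd hk.nonneg hA⟩
  have hv := (unitVol_pos (n := n)).le
  refine ⟨2 * Real.pi * A * (n * unitVol n * 2) + 5 * A * (2 ^ (n + 2) * unitVol n),
    by positivity, fun k hk ξ => ?_⟩
  rw [Real.fourier_eq]
  by_cases hξ : ξ = 0
  · have : ∫ v, Real.fourierChar (-inner ℝ v ξ) • ((k v : ℝ) : ℂ) = 0 := by
      simp only [hξ, inner_zero_right, neg_zero, AddChar.map_zero_eq_one, one_smul]
      rw [integral_complex_ofReal, hk.integral_eq_zero]; simp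
    rw [this]; simp; positivity
  have hξ' : 0 < ‖ξ‖ := norm_pos_iff.2 hξ
  -- The kernel is cut at the scale `r = 1 / ‖ξ‖` into a part `k0` near the origin and a part `k1`
  -- away from it.
  set r : ℝ := ‖ξ‖⁻¹ with hr
  have hr0 : 0 < r := by positivity
  set k1 : E n → ℝ := fun x => k x * chi (‖x‖ / r) with hk1
  have h1 : CZ (5 * A) k1 := hk.mul_chi hr0
  set k0 : E n → ℝ := fun x => k x - k1 x with hk0
  have hi1 := h1.integrable
  have hi0 : Integrable k0 := hk.integrable.sub hi1
  have hchar : ∀ g : E n → ℝ, Integrable g →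
      Integrable (fun v => Real.fourierChar (-inner ℝ v ξ) • ((g v : ℝ) : ℂ)) := by
    intro g hg
    exact (Real.fourierIntegral_convergent_iff ξ).2 hg.ofReal
  have hsplit : ∫ v, Real.fourierChar (-inner ℝ v ξ) • ((k v : ℝ) : ℂ)
      = (∫ v, Real.fourierChar (-inner ℝ v ξ) • ((k0 v : ℝ) : ℂ))
        + ∫ v, Real.fourierChar (-inner ℝ v ξ) • ((k1 v : ℝ) : ℂ) := by
    rw [← integral_add (hchar _ hi0) (hchar _ hi1)]
    congr 1; ext v; rw [← smul_add]; simp [hk0]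
  rw [hsplit]
  refine (norm_add_le _ _).trans (add_le_add ?_ ?_)
  · have hz : ∫ v, ((k0 v : ℝ) : ℂ) = 0 := by
      rw [integral_complex_ofReal, hk0, integral_sub hk.integrable hi1, hk.integral_eq_zero,
        h1.integral_eq_zero]; simp
    -- Near the origin, the mean value zero allows the character to be replaced by the character
    -- minus one, which is `O(‖v‖ ‖ξ‖)`.
    have e1 : ∫ v, Real.fourierChar (-inner ℝ v ξ) • ((k0 v : ℝ) : ℂ)
        = ∫ v, (Real.fourierChar (-inner ℝ v ξ) • ((k0 v : ℝ) : ℂ) - ((k0 v : ℝ) : ℂ)) := by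
      have hof : Integrable (fun v => ((k0 v : ℝ) : ℂ)) := hi0.ofReal
      rw [integral_sub (hchar _ hi0) hof, hz, sub_zero]
    rw [e1]
    have hb : ∀ v, ‖Real.fourierChar (-inner ℝ v ξ) • ((k0 v : ℝ) : ℂ) - ((k0 v : ℝ) : ℂ)‖
        ≤ 2 * Real.pi * ‖ξ‖ * A * innerFn n (2 * r) v := by
      intro v
      have c1 : ‖Real.fourierChar (-inner ℝ v ξ) • ((k0 v : ℝ) : ℂ) - ((k0 v : ℝ) : ℂ)‖
          ≤ 2 * Real.pi * (‖v‖ * ‖ξ‖) * |k0 v| := by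
        rw [Circle.smul_def, smul_eq_mul, ← sub_one_mul, norm_mul, Complex.norm_real,
          Real.norm_eq_abs, Real.fourierChar_apply]
        gcongr
        rw [mul_comm _ Complex.I]
        refine (Real.norm_exp_I_mul_ofReal_sub_one_le).trans ?_
        rw [norm_mul, norm_neg, norm_mul, Real.norm_eq_abs, Real.norm_eq_abs,
          abs_of_pos Real.pi_pos, Real.norm_eq_abs, abs_of_pos (two_pos)]
        gcongr
        exact abs_real_inner_le_norm v ξ
      refine c1.trans ?_
      unfold innerFn
      split_ifs with hvr
      · have c2 : |k0 v| ≤ |k v| := by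
          have : k0 v = k v * (1 - chi (‖v‖ / r)) := by simp only [hk0, hk1]; ring
          rw [this, abs_mul]
          have := chi_nonneg (‖v‖ / r); have := chi_le_one (‖v‖ / r)
          exact mul_le_of_le_one_right (abs_nonneg _) (by rw [abs_le]; constructor <;> linarith)
        rcases eq_or_ne v 0 with rfl | hv0
        · simp
        have hv1 : 0 < ‖v‖ := norm_pos_iff.2 hv0
        have c3 : |k0 v| ≤ A * (‖v‖ ^ n)⁻¹ := c2.trans (hk.le_div hv1 le_rfl)
        calc _ ≤ 2 * Real.pi * (‖v‖ * ‖ξ‖) * (A * (‖v‖ ^ n)⁻¹) := by gcongr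
          _ = _ := by rw [div_eq_mul_inv]; ring
      · have : k0 v = 0 := by
          simp only [hk0, hk1]
          rw [chi_eq_one ((le_div_iff₀ hr0).2 (not_le.1 hvr).le)]; ring
        rw [this]; simp
    refine (norm_integral_le_of_norm_le ((integrable_innerFn hn (2 * r)).const_mul _)
      (Eventually.of_forall hb)).trans ?_
    rw [integral_const_mul, integral_innerFn hn (by positivity)]
    apply le_of_eq
    rw [hr]; field_simp
  · set z : E n := (2 * ‖ξ‖ ^ 2)⁻¹ • ξ with hz
    have hzn : ‖z‖ = r / 2 := by
      rw [hz, norm_smul, Real.norm_eq_abs, abs_of_pos (by positivity), hr]; field_simp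
    have hzi : inner ℝ z ξ = 1 / 2 := by
      rw [hz, real_inner_smul_left, real_inner_self_eq_norm_sq]; field_simp
    set J := ∫ v, Real.fourierChar (-inner ℝ v ξ) • ((k1 v : ℝ) : ℂ) with hJ
    -- Translation by `z`, half a period in the direction of `ξ`, changes the sign of the character;
    -- the regularity of `k1` then bounds twice the integral.
    have hhalf : ((Real.fourierChar (1 / 2) : Circle) : ℂ) = -1 := by
      rw [Real.fourierChar_apply]
      have : ((2 * Real.pi * (1 / 2 : ℝ) : ℝ) : ℂ) * Complex.I = Real.pi * Complex.I := by
        push_cast; ring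
      rw [this, Complex.exp_pi_mul_I]
    have hi1z : Integrable (fun v => k1 (v - z)) := hi1.comp_sub_right z
    have e1 : J = - ∫ v, Real.fourierChar (-inner ℝ v ξ) • ((k1 (v - z) : ℝ) : ℂ) := by
      rw [hJ, ← integral_sub_right_eq_self _ z, ← integral_neg]
      congr 1; ext v
      rw [inner_sub_left, hzi, neg_sub, sub_eq_add_neg, AddChar.map_add_eq_mul, Circle.smul_def,
        Circle.smul_def, Circle.coe_mul, hhalf]
      simp
    have e2 : 2 * J = ∫ v, Real.fourierChar (-inner ℝ v ξ) • (((k1 v - k1 (v - z)) : ℝ) : ℂ) := by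
      rw [two_mul]; nth_rewrite 2 [e1]
      rw [← sub_eq_add_neg, hJ, ← integral_sub (hchar _ hi1) (hchar _ hi1z)]
      congr 1; ext v; rw [← smul_sub]; simp
    have hb0 : ∀ v, |k1 v| ≤ 5 * A * (r ^ n)⁻¹ := by
      intro v
      rcases le_total r ‖v‖ with h | h
      · exact h1.le_div hr0 h
      · have : k1 v = 0 := by
          simp only [hk1]; rw [chi_eq_zero ((div_le_one hr0).2 h)]; ring
        rw [this, abs_zero]; positivity
    have hb : ∀ v, ‖Real.fourierChar (-inner ℝ v ξ) • (((k1 v - k1 (v - z)) : ℝ) : ℂ)‖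
        ≤ 10 * A * tailFn n r v := by
      intro v
      rw [Circle.norm_smul, Complex.norm_real, Real.norm_eq_abs]
      unfold tailFn
      split_ifs with h
      · refine (abs_sub _ _).trans ?_
        linarith [hb0 v, hb0 (v - z)]
      · push Not at h
        have h3 := h1.reg v z (by rw [hzn]; linarith)
        rw [abs_sub_comm, mul_div_assoc', le_div_iff₀ (by positivity [hr0.trans h])]
        refine h3.trans ?_
        rw [hzn]; nlinarith
    have h4 : ‖2 * J‖ ≤ 10 * A * (2 ^ (n + 2) * unitVol n) := by
      rw [e2]
      refine (norm_integral_le_of_norm_le ((integrable_tailFn hr0).const_mul _)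
        (Eventually.of_forall hb)).trans ?_
      rw [integral_const_mul]
      gcongr
      exact integral_tailFn hr0
    rw [norm_mul] at h4
    simp at h4
    simp
    linarith

/-! ### The `L²` bound -/

/-- The convolution `k * f`. -/
def cv {n : ℕ} (k f : E n → ℝ) (x : E n) : ℝ := ∫ y, k (x - y) * f y

lemma cv_eq {n : ℕ} (k f : E n → ℝ) :
    cv k f = convolution f k (ContinuousLinearMap.mul ℝ ℝ) volume := by
  ext x
  simp only [cv, convolution_def, ContinuousLinearMap.mul_apply']
  congr 1; ext y; ring

lemma cv_integrand {n : ℕ} {k f : E n → ℝ} (hk : Continuous k) (hk' : HasCompactSupport k)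
    (hf : LocallyIntegrable f) (x : E n) : Integrable (fun y => k (x - y) * f y) := by
  have h1 : HasCompactSupport (fun y => k (x - y)) :=
    hk'.comp_homeomorph (Homeomorph.subLeft x)
  exact hf.integrable_smul_left_of_hasCompactSupport (by fun_prop) h1

lemma cv_continuous {n : ℕ} {k f : E n → ℝ} (hk : Continuous k) (hk' : HasCompactSupport k)
    (hf : LocallyIntegrable f) : Continuous (cv k f) := by
  rw [cv_eq]
  exact hk'.continuous_convolution_right _ hf hk

lemma cv_sub {n : ℕ} {k f g : E n → ℝ} (hk : Continuous k) (hk' : HasCompactSupport k)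
    (hf : LocallyIntegrable f) (hg : LocallyIntegrable g) (x : E n) :
    cv k (fun y => f y - g y) x = cv k f x - cv k g x := by
  unfold cv
  rw [← integral_sub (cv_integrand hk hk' hf x) (cv_integrand hk hk' hg x)]
  congr 1; ext y; ring

/-- Cauchy–Schwarz for convolutions. -/
lemma enorm_cv_le {n : ℕ} {k f : E n → ℝ} (hk : AEStronglyMeasurable k)
    (hf : AEStronglyMeasurable f) (x : E n) :
    ‖cv k f x‖ₑ ≤ eLpNorm k 2 * eLpNorm f 2 := by
  have mp := Measure.measurePreserving_sub_left (volume : Measure (E n)) x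
  have h1 : AEStronglyMeasurable (fun y => k (x - y)) := hk.comp_measurePreserving mp
  have h2 : eLpNorm (fun y => k (x - y)) 2 = eLpNorm k 2 := eLpNorm_comp_measurePreserving hk mp
  have h3 := eLpNorm_smul_le_mul_eLpNorm (p := 2) (q := 2) (r := 1) hf h1
  rw [h2, eLpNorm_one_eq_lintegral_enorm] at h3
  exact (enorm_integral_le_lintegral_enorm _).trans h3

/-- Plancherel's theorem for a continuous integrable function with integrable Fourier transform. -/
lemma plancherel {n : ℕ} {u : E n → ℂ} (hc : Continuous u) (hi : Integrable u)
    (hF : Integrable (𝓕 u)) : ∫ x, ‖u x‖ ^ 2 = ∫ ξ, ‖𝓕 u ξ‖ ^ 2 := by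
  have h1 := VectorFourier.integral_sesq_fourierIntegral_eq_neg_flip (innerSL ℂ (E := ℂ))
    (L := innerₗ (E n)) Real.continuous_fourierChar continuous_inner hi hF
  have h2 : ∫ ξ, (innerSL ℂ (E := ℂ)) (𝓕 u ξ) (𝓕 u ξ) = ∫ x, (innerSL ℂ (E := ℂ)) (u x) (𝓕⁻ (𝓕 u) x) := by
    simpa [Real.fourierInv_eq, VectorFourier.fourierIntegral, Real.fourier_eq] using h1
  rw [hc.fourierInv_fourier_eq hi hF] at h2
  apply Complex.ofRealLI.injective
  simpa [← LinearIsometry.integral_comp_comm, inner_self_eq_norm_sq_to_K] using h2.symm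

lemma ofReal_cv {n : ℕ} (k f : E n → ℝ) : (fun x => ((cv k f x : ℝ) : ℂ)) =
    convolution (fun x => (f x : ℂ)) (fun x => (k x : ℂ)) (ContinuousLinearMap.mul ℂ ℂ) volume := by
  ext x
  simp only [cv, convolution_def, ContinuousLinearMap.mul_apply']
  rw [← integral_complex_ofReal]
  congr 1; ext y; push_cast; ring

/-- The `L²` bound on test functions, by Plancherel's theorem. -/
lemma l2_smooth {n : ℕ} {A B : ℝ} {k : E n → ℝ} (hk : CZ A k)
    (hF : ∀ ξ, ‖𝓕 (fun x => (k x : ℂ)) ξ‖ ≤ B) {φ : E n → ℝ} (hφ : ContDiff ℝ ∞ φ)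
    (hφc : HasCompactSupport φ) : ∫ x, (cv k φ x) ^ 2 ≤ B ^ 2 * ∫ x, (φ x) ^ 2 := by
  have hcomp : HasCompactSupport (fun x => (φ x : ℂ)) := hφc.comp_left (g := Complex.ofReal) rfl
  set s : SchwartzMap (E n) ℂ := hcomp.toSchwartzMap (Complex.ofRealCLM.contDiff.comp hφ) with hs
  have hs' : ∀ x, s x = (φ x : ℂ) := fun x => rfl
  have hloc : LocallyIntegrable φ := hφ.continuous.locallyIntegrable
  set u : E n → ℂ := fun x => ((cv k φ x : ℝ) : ℂ) with hu
  have hφi : Integrable (fun x => (φ x : ℂ)) := s.integrable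
  have hki : Integrable (fun x => (k x : ℂ)) := hk.integrable.ofReal
  have huc : Continuous u := Complex.continuous_ofReal.comp (cv_continuous hk.cont hk.cpt hloc)
  have hui : Integrable u := by
    rw [hu, ofReal_cv]
    exact hφi.integrable_convolution _ hki
  have hFu : ∀ ξ, 𝓕 u ξ = 𝓕 s ξ * 𝓕 (fun x => (k x : ℂ)) ξ := by
    intro ξ
    rw [hu, ofReal_cv, Real.fourier_mul_convolution_eq hφi hki]
    rfl
  have hkc : Continuous (𝓕 (fun x => (k x : ℂ))) :=
    VectorFourier.fourierIntegral_continuous Real.continuous_fourierChar continuous_inner hki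
  have hFui : Integrable (𝓕 u) := by
    have : 𝓕 u = fun ξ => 𝓕 s ξ * 𝓕 (fun x => (k x : ℂ)) ξ := funext hFu
    rw [this]
    exact (𝓕 s).integrable.mul_bdd (c := B) hkc.aestronglyMeasurable (Eventually.of_forall hF)
  have h1 := plancherel huc hui hFui
  have h2 := SchwartzMap.integral_norm_sq_fourier s
  have h3 : ∫ x, (cv k φ x) ^ 2 = ∫ x, ‖u x‖ ^ 2 := by
    congr 1; ext x; simp [hu]
  have h4 : ∫ x, (φ x) ^ 2 = ∫ x, ‖s x‖ ^ 2 := by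
    congr 1; ext x; rw [hs']; simp
  rw [h3, h4, h1, ← h2, ← integral_const_mul]
  have hInt : Integrable (fun ξ => ‖𝓕 s ξ‖ ^ 2) := by
    have := ((𝓕 s).memLp 2).integrable_norm_pow (by norm_num)
    simpa using! this
  refine integral_mono_of_nonneg (Eventually.of_forall fun _ => by positivity)
    (hInt.const_mul _) (Eventually.of_forall fun ξ => ?_)
  simp only [hFu, norm_mul, mul_pow]
  rw [mul_comm]
  gcongr
  exact hF ξ

lemma squeeze_zero_enn {u v : ℕ → ℝ≥0∞} (hv : Tendsto v atTop (𝓝 0)) (h : ∀ m, u m ≤ v m) :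
    Tendsto u atTop (𝓝 0) :=
  tendsto_of_tendsto_of_tendsto_of_le_of_le tendsto_const_nhds hv (fun _ => bot_le) h

lemma sq_eLpNorm_two {n : ℕ} {f : E n → ℝ} (hf : MemLp f 2) :
    eLpNorm f 2 = ENNReal.ofReal (√(∫ x, (f x) ^ 2)) := by
  rw [hf.eLpNorm_eq_integral_rpow_norm (by norm_num) (by norm_num), Real.sqrt_eq_rpow]
  simp

lemma cv_memLp {n : ℕ} {k φ : E n → ℝ} (hk : Continuous k) (hk' : HasCompactSupport k)
    (hφ : Continuous φ) (hφc : HasCompactSupport φ) : MemLp (cv k φ) 2 := by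
  have : HasCompactSupport (cv k φ) := by
    rw [cv_eq]; exact hφc.convolution _ hk'
  exact (cv_continuous hk hk' hφ.locallyIntegrable).memLp_of_hasCompactSupport this

/-- Convolution with a Calderón–Zygmund kernel is bounded on `L²`, uniformly in the kernel. -/
lemma l2_bound {n : ℕ} (hn : 0 < n) (A : ℝ) : ∃ B : ℝ, 0 < B ∧ ∀ k : E n → ℝ, CZ A k →
    ∀ f : E n → ℝ, MemLp f 2 → eLpNorm (cv k f) 2 ≤ ENNReal.ofReal B * eLpNorm f 2 := by
  obtain ⟨B0, hB0, hF⟩ := fourier_bound hn A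
  refine ⟨B0 + 1, by positivity, fun k hk f hf => ?_⟩
  have hk2 : MemLp k 2 := hk.cont.memLp_of_hasCompactSupport hk.cpt
  have hk2t : eLpNorm k 2 volume ≠ ⊤ := hk2.eLpNorm_ne_top
  -- Test functions `g m` converge to `f` in `L²`, and `k * g m` converges to `k * f` pointwise
  -- because `k` is in `L²`; Fatou's lemma transfers the bound.
  have key : ∀ m : ℕ, ∃ g : E n → ℝ, HasCompactSupport g ∧ ContDiff ℝ ∞ g ∧
      eLpNorm (f - g) 2 ≤ ENNReal.ofReal (1 / ((m : ℝ) + 1)) := fun m =>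
    hf.exist_eLpNorm_sub_le (by norm_num) (by norm_num) (by positivity)
  choose g hgc hgs hg using key
  have hgm : ∀ m, MemLp (g m) 2 := fun m =>
    (hgs m).continuous.memLp_of_hasCompactSupport (hgc m)
  have hloc : LocallyIntegrable f := hf.locallyIntegrable (by norm_num)
  have hone : ∀ m, eLpNorm (cv k (g m)) 2 ≤ ENNReal.ofReal (B0 + 1) * eLpNorm (g m) 2 := by
    intro m
    rw [sq_eLpNorm_two (cv_memLp hk.cont hk.cpt (hgs m).continuous (hgc m)),
      sq_eLpNorm_two (hgm m), ← ENNReal.ofReal_mul (by positivity)]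
    apply ENNReal.ofReal_le_ofReal
    rw [Real.sqrt_le_left (by positivity), mul_pow, Real.sq_sqrt (integral_nonneg fun _ => sq_nonneg _)]
    refine (l2_smooth hk (hF k hk) (hgs m) (hgc m)).trans ?_
    have : 0 ≤ ∫ x, (g m x) ^ 2 := integral_nonneg fun _ => sq_nonneg _
    gcongr; linarith
  have ht : Tendsto (fun m : ℕ => ENNReal.ofReal (1 / ((m : ℝ) + 1))) atTop (𝓝 0) := by
    have := ENNReal.tendsto_ofReal (tendsto_one_div_add_atTop_nhds_zero_nat (𝕜 := ℝ))
    simpa using this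
  have htt : ∀ C : ℝ≥0∞, C ≠ ⊤ → Tendsto (fun m : ℕ => C * ENNReal.ofReal (1 / ((m : ℝ) + 1)))
      atTop (𝓝 0) := fun C hC => by
    have h := ENNReal.Tendsto.const_mul ht (Or.inr hC)
    rwa [mul_zero] at h
  have hpt : ∀ x, Tendsto (fun m => cv k (g m) x) atTop (𝓝 (cv k f x)) := by
    intro x
    rw [tendsto_iff_edist_tendsto_0]
    have hlim := htt _ hk2t
    refine squeeze_zero_enn hlim (fun m => ?_)
    rw [edist_comm, edist_eq_enorm_sub, ← cv_sub hk.cont hk.cpt hloc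
      (hgs m).continuous.locallyIntegrable]
    refine (enorm_cv_le hk2.1 (hf.1.sub (hgm m).1) x).trans ?_
    gcongr
    exact hg m
  have hb : ∀ m, eLpNorm (cv k (g m)) 2 ≤ ENNReal.ofReal (B0 + 1) * eLpNorm f 2
      + ENNReal.ofReal (B0 + 1) * ENNReal.ofReal (1 / ((m : ℝ) + 1)) := by
    intro m
    refine (hone m).trans ?_
    rw [← mul_add]
    gcongr
    have h1 : g m = f - (f - g m) := by simp
    have h2 : eLpNorm (f - (f - g m)) 2 volume ≤ eLpNorm f 2 volume + eLpNorm (f - g m) 2 volume :=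
      eLpNorm_sub_le hf.1 (hf.1.sub (hgm m).1) (by norm_num)
    rw [← h1] at h2
    exact h2.trans (add_le_add le_rfl (hg m))
  refine (Lp.eLpNorm_lim_le_liminf_eLpNorm (fun m =>
    (cv_continuous hk.cont hk.cpt (hgs m).continuous.locallyIntegrable).aestronglyMeasurable) _
    (Eventually.of_forall hpt)).trans ?_
  have hl : Tendsto (fun m : ℕ => ENNReal.ofReal (B0 + 1) * eLpNorm f 2
      + ENNReal.ofReal (B0 + 1) * ENNReal.ofReal (1 / ((m : ℝ) + 1))) atTop
      (𝓝 (ENNReal.ofReal (B0 + 1) * eLpNorm f 2)) := by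
    have h := (tendsto_const_nhds (x := ENNReal.ofReal (B0 + 1) * eLpNorm f 2)
      (f := (atTop : Filter ℕ))).add (htt (ENNReal.ofReal (B0 + 1)) ENNReal.ofReal_ne_top)
    rwa [add_zero] at h
  refine le_trans ?_ hl.liminf_eq.le
  exact liminf_le_liminf (Eventually.of_forall hb)

end

/-! ### The stopping cells of the Calderón–Zygmund decomposition -/

/-- `x` is a Lebesgue point of `f`: the integral of `|f - f x|` over the ball of radius `r` at `x`
is at most `η rⁿ` for small `r`. -/
def LebPt {n : ℕ} (f : E n → ℝ) (x : E n) : Prop :=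
  ∀ η : ℝ, 0 < η → ∃ ρ : ℝ, 0 < ρ ∧ ∀ r, 0 < r → r ≤ ρ →
    ∫⁻ y in closedBall x r, ENNReal.ofReal |f y - f x| ≤ ENNReal.ofReal (η * r ^ n)

lemma ae_lebPt {n : ℕ} {f : E n → ℝ} (hf : LocallyIntegrable f) : ∀ᵐ x, LebPt f x := by
  filter_upwards [(Besicovitch.vitaliFamily (volume : Measure (E n))).ae_tendsto_lintegral_enorm_sub_div
    hf] with x hx η hη
  have h1 := hx.comp (Besicovitch.tendsto_filterAt volume x)
  have hu := unitVol_pos n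
  have h2 := h1.eventually (ge_mem_nhds (b := 0) (a := ENNReal.ofReal (η / unitVol n))
    (ENNReal.ofReal_pos.2 (by positivity)))
  rw [eventually_nhdsWithin_iff, Metric.eventually_nhds_iff] at h2
  obtain ⟨ρ, hρ, h⟩ := h2
  refine ⟨ρ / 2, by positivity, fun r hr hr' => ?_⟩
  have h3 := h (y := r) (by rw [Real.dist_eq, sub_zero, abs_of_pos hr]; linarith) hr
  simp only [Function.comp] at h3
  rw [ENNReal.div_le_iff (measure_closedBall_pos _ _ hr).ne' measure_closedBall_lt_top.ne,
    volume_closedBall _ hr.le, ← ENNReal.ofReal_mul (by positivity)] at h3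
  simp only [Real.enorm_eq_ofReal_abs] at h3
  refine h3.trans (ENNReal.ofReal_le_ofReal (le_of_eq ?_))
  field_simp

/-- The index of the half-open grid cell of side `h` containing `x`. -/
def gidx {n : ℕ} (h : ℝ) (x : E n) : Fin n → ℤ := fun i => ⌊x i / h⌋

/-- The half-open grid cell of side `h` with a given index. -/
def gcell {n : ℕ} (h : ℝ) (m : Fin n → ℤ) : Set (E n) := {x | gidx h x = m}

lemma measurable_gidx {n : ℕ} (h : ℝ) : Measurable (gidx h : E n → Fin n → ℤ) := by
  unfold gidx
  refine measurable_pi_lambda _ fun i => Int.measurable_floor.comp ?_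
  fun_prop

lemma measurableSet_gcell {n : ℕ} (h : ℝ) (m : Fin n → ℤ) : MeasurableSet (gcell h m : Set (E n)) :=
  measurable_gidx h (measurableSet_singleton m)

lemma volume_gcell {n : ℕ} {h : ℝ} (hh : 0 < h) (m : Fin n → ℤ) :
    volume (gcell h m : Set (E n)) = ENNReal.ofReal (h ^ n) := by
  have h1 : (gcell h m : Set (E n)) = (MeasurableEquiv.toLp 2 (Fin n → ℝ)).symm ⁻¹'
      (Set.pi univ fun i => Ico (m i * h) (m i * h + h)) := by
    ext x
    simp only [gcell, gidx, mem_ofPred_eq, mem_preimage, Set.mem_pi, mem_univ, true_imp_iff, mem_Ico,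
      funext_iff, Int.floor_eq_iff]
    refine forall_congr' fun i => ?_
    rw [le_div_iff₀ hh, div_lt_iff₀ hh, add_one_mul]
    rfl
  rw [h1, (EuclideanSpace.volume_preserving_symm_measurableEquiv_toLp (Fin n)).measure_preimage
    (MeasurableSet.univ_pi fun _ => measurableSet_Ico).nullMeasurableSet, Real.volume_pi_Ico]
  simp [ENNReal.ofReal_pow hh.le]

lemma gcell_dist {n : ℕ} {h : ℝ} (hh : 0 < h) {x y : E n} (hxy : gidx h x = gidx h y) :
    ‖x - y‖ ≤ n * h := by
  have h1 : ∀ i, ‖(x - y) i‖ ≤ h := by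
    intro i
    have h2 := congrFun hxy i
    have h3 := Int.abs_sub_lt_one_of_floor_eq_floor h2
    rw [← sub_div, abs_div, abs_of_pos hh, div_lt_one hh] at h3
    exact h3.le
  rw [EuclideanSpace.norm_eq]
  refine (Real.sqrt_le_sqrt (Finset.sum_le_sum fun i _ => pow_le_pow_left₀ (norm_nonneg _) (h1 i) 2)).trans ?_
  rw [Finset.sum_const, Finset.card_univ, Fintype.card_fin, nsmul_eq_mul, Real.sqrt_le_left (by positivity)]
  rw [mul_pow]
  gcongr
  rcases n with _ | n
  · simp
  · have : (1 : ℝ) ≤ ((n + 1 : ℕ) : ℝ) := by norm_num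
    nlinarith

/-- The grids of sides `s / 2 ^ k` are nested. -/
lemma gidx_eq_of_le {n : ℕ} {s : ℝ} {x y : E n} {j k : ℕ} (hjk : j ≤ k)
    (h : gidx (s / 2 ^ k) x = gidx (s / 2 ^ k) y) : gidx (s / 2 ^ j) x = gidx (s / 2 ^ j) y := by
  have key : ∀ z : E n, ∀ i, gidx (s / 2 ^ j) z i = gidx (s / 2 ^ k) z i / ((2 ^ (k - j) : ℕ) : ℤ) := by
    intro z i
    simp only [gidx]
    rw [← Int.floor_div_natCast]
    congr 1
    obtain ⟨d, rfl⟩ := Nat.exists_eq_add_of_le hjk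
    simp only [Nat.add_sub_cancel_left, Nat.cast_pow, Nat.cast_ofNat, pow_add]
    by_cases hs : s = 0
    · simp [hs]
    field_simp
  ext i
  rw [key, key, h]

/-- The stopping cells of the Calderón–Zygmund decomposition at height `L`: disjoint dyadic cells
`A i` on which the average of `|f|` is comparable with `L`, with `|f| ≤ L` a.e. off their union.
The cells are the maximal dyadic cells on which the average of `|f|` exceeds `L`. -/
lemma cz_decomp {n : ℕ} (hn : 0 < n) : ∃ C : ℝ, 0 < C ∧ ∀ f : E n → ℝ, Integrable f →
    ∀ L : ℝ, 0 < L → ∃ (ι : Type) (_ : Countable ι) (A : ι → Set (E n)) (z : ι → E n) (r : ι → ℝ),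
      (∀ i, MeasurableSet (A i)) ∧ Pairwise (Function.onFun Disjoint A) ∧ (∀ i, 0 < r i) ∧
      (∀ i, A i ⊆ closedBall (z i) (r i)) ∧
      (∀ i, ENNReal.ofReal (r i ^ n) ≤ ENNReal.ofReal C * volume (A i)) ∧
      (∀ i, volume (A i) ≠ 0) ∧ (∀ i, volume (A i) ≠ ⊤) ∧
      (∀ i, ENNReal.ofReal L * volume (A i) ≤ ∫⁻ y in A i, ENNReal.ofReal |f y|) ∧
      (∀ i, ∫⁻ y in A i, ENNReal.ofReal |f y| ≤ ENNReal.ofReal (C * L) * volume (A i)) ∧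
      ∀ᵐ x, x ∉ (⋃ i, A i) → |f x| ≤ L := by
  refine ⟨max ((n : ℝ) ^ n) (2 ^ n), by positivity, fun f hf L hL => ?_⟩
  set F : E n → ℝ≥0∞ := fun y => ENNReal.ofReal |f y| with hF
  have hFi : ∫⁻ y, F y ≠ ⊤ := by
    have := hf.2.ne
    simpa [hF, Real.enorm_eq_ofReal_abs] using this
  set I : ℝ := (∫⁻ y, F y).toReal with hI
  have hI0 : 0 ≤ I := ENNReal.toReal_nonneg
  -- The initial side `s` is large enough for no cell of side `s` to be selected.
  set s : ℝ := I / L + 1 with hs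
  have hs1 : 1 ≤ s := by rw [hs]; linarith [div_nonneg hI0 hL.le]
  have hs0 : 0 < s := by linarith
  have hIs : I ≤ L * s ^ n := by
    have : s ≤ s ^ n := le_self_pow₀ hs1 hn.ne'
    have h2 : I = L * (I / L) := by field_simp
    rw [h2]; gcongr; linarith
  set h : ℕ → ℝ := fun k => s / 2 ^ k with hh
  have hpos : ∀ k, 0 < h k := fun k => by simp only [hh]; positivity
  -- `P k m`: the average of `|f|` over the cell with index `m` of side `h k` exceeds `L`.
  let P : ℕ → (Fin n → ℤ) → Prop := fun k m =>
    ENNReal.ofReal (L * h k ^ n) < ∫⁻ y in gcell (h k) m, F y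
  have hP0 : ∀ m, ¬ P 0 m := by
    intro m
    simp only [P, not_lt]
    calc _ ≤ ∫⁻ y, F y := setLIntegral_le_lintegral _ _
      _ = ENNReal.ofReal I := (ENNReal.ofReal_toReal hFi).symm
      _ ≤ _ := by apply ENNReal.ofReal_le_ofReal; simpa [hh] using hIs
  -- `S (k, m)` is the cell `(k, m)` if it is selected and no cell containing it is, and is empty
  -- otherwise.
  let S : ℕ × (Fin n → ℤ) → Set (E n) := fun p =>
    {x | gidx (h p.1) x = p.2 ∧ P p.1 p.2 ∧ ∀ j < p.1, ¬ P j (gidx (h j) x)}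
  have hScell : ∀ p, (S p).Nonempty → S p = gcell (h p.1) p.2 := by
    rintro p ⟨x, hx1, hx2, hx3⟩
    refine Subset.antisymm (fun y hy => hy.1) (fun y hy => ⟨hy, hx2, fun j hj => ?_⟩)
    have : gidx (h j) y = gidx (h j) x := gidx_eq_of_le hj.le (hy.trans hx1.symm)
    rw [this]; exact hx3 j hj
  have hdisj : ∀ p q : ℕ × (Fin n → ℤ), ∀ x, x ∈ S p → x ∈ S q → p = q := by
    rintro ⟨k, m⟩ ⟨k', m'⟩ x ⟨h1, h2, h3⟩ ⟨h4, h5, h6⟩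
    simp only at h1 h2 h3 h4 h5 h6
    have hk : k = k' := by
      rcases lt_trichotomy k k' with h | h | h
      · exact absurd (by rwa [h1]) (h6 k h)
      · exact h
      · exact absurd (by rwa [h4]) (h3 k' h)
    subst hk
    rw [h1] at h4
    rw [h4]
  refine ⟨{p : ℕ × (Fin n → ℤ) // (S p).Nonempty}, inferInstance, fun i => S i.1,
    fun i => i.2.some, fun i => n * h i.1.1, ?_, ?_, ?_, ?_, ?_, ?_, ?_, ?_, ?_, ?_⟩
  · intro i; beta_reduce; rw [hScell _ i.2]; exact measurableSet_gcell _ _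
  · intro i j hij
    refine Set.disjoint_left.2 fun x hx hx' => hij (Subtype.ext (hdisj _ _ x hx hx'))
  · intro i
    have := hpos i.1.1
    positivity
  · intro i x hx
    rw [mem_closedBall, dist_eq_norm]
    exact gcell_dist (hpos _) (hx.1.trans i.2.some_mem.1.symm)
  · intro i
    beta_reduce; rw [hScell _ i.2, volume_gcell (hpos _), mul_pow, ← ENNReal.ofReal_mul (by positivity)]
    apply ENNReal.ofReal_le_ofReal
    have := hpos i.1.1
    gcongr
    exact le_max_left _ _
  · intro i
    beta_reduce; rw [hScell _ i.2, volume_gcell (hpos _)]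
    have := hpos i.1.1
    simp; positivity
  · intro i
    beta_reduce; rw [hScell _ i.2, volume_gcell (hpos _)]
    simp
  · intro i
    have h1 := i.2.some_mem.2.1
    beta_reduce; rw [hScell _ i.2, volume_gcell (hpos _), ← ENNReal.ofReal_mul hL.le]
    exact h1.le
  · intro i
    obtain ⟨x, hx1, hx2, hx3⟩ := id i.2
    beta_reduce; rw [hScell _ i.2, volume_gcell (hpos _)]
    obtain ⟨⟨k, m⟩, hi⟩ := i
    simp only at hx1 hx2 hx3 ⊢
    rcases k with _ | k
    · exact absurd hx2 (hP0 m)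
    -- The parent of a selected cell is not selected.
    have h1 := hx3 k (Nat.lt_succ_self k)
    simp only [P, not_lt] at h1
    have hsub : (gcell (h (k + 1)) m : Set (E n)) ⊆ gcell (h k) (gidx (h k) x) := fun y hy =>
      gidx_eq_of_le (Nat.le_succ k) (hy.trans hx1.symm)
    refine (lintegral_mono_set hsub).trans (h1.trans ?_)
    rw [← ENNReal.ofReal_mul (by positivity)]
    apply ENNReal.ofReal_le_ofReal
    have h2 : h k = 2 * h (k + 1) := by simp only [hh, pow_succ]; field_simp
    have := hpos (k + 1)
    rw [h2, mul_pow]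
    have h3 : (2 : ℝ) ^ n ≤ max ((n : ℝ) ^ n) (2 ^ n) := le_max_right _ _
    calc L * (2 ^ n * h (k + 1) ^ n) = 2 ^ n * L * h (k + 1) ^ n := by ring
      _ ≤ _ := by gcongr
  · filter_upwards [ae_lebPt hf.locallyIntegrable] with x hx hnot
    -- Off the selected cells, all cells containing a Lebesgue point have average at most `L`.
    have hnP : ∀ k, ¬ P k (gidx (h k) x) := by
      intro k
      induction k using Nat.strong_induction_on with
      | _ k ih =>
        intro hk
        have hm : x ∈ S (k, gidx (h k) x) := ⟨rfl, hk, ih⟩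
        exact hnot (mem_iUnion.2 ⟨⟨_, ⟨x, hm⟩⟩, hm⟩)
    refine le_of_forall_pos_le_add fun η hη => ?_
    have hn' : (0 : ℝ) < n := by exact_mod_cast hn
    obtain ⟨ρ, hρ, hball⟩ := hx (η / n ^ n) (by positivity)
    obtain ⟨k, hk⟩ : ∃ k, n * h k ≤ ρ := by
      have ht : Tendsto (fun k : ℕ => n * h k) atTop (𝓝 0) := by
        have h1 : Tendsto (fun k : ℕ => (n * s) * (1 / 2 : ℝ) ^ k) atTop (𝓝 0) := by
          simpa using (tendsto_pow_atTop_nhds_zero_of_lt_one (by norm_num : (0:ℝ) ≤ 1 / 2)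
            (by norm_num)).const_mul (n * s)
        refine h1.congr fun k => ?_
        simp only [hh]; rw [one_div, inv_pow, div_eq_mul_inv]; ring
      exact (ht.eventually (ge_mem_nhds hρ)).exists
    have hkp := hpos k
    have h1 := hball (n * h k) (by positivity) hk
    set c := gcell (h k) (gidx (h k) x) with hc
    have hcb : (c : Set (E n)) ⊆ closedBall x (n * h k) := fun y hy => by
      rw [mem_closedBall, dist_eq_norm]; exact gcell_dist hkp hy
    have h2 : ∫⁻ y in c, F y ≤ ENNReal.ofReal (L * h k ^ n) := not_lt.1 (hnP k)
    have h3 : ENNReal.ofReal |f x| * volume c ≤ ENNReal.ofReal (L * h k ^ n)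
        + ENNReal.ofReal (η / n ^ n * (n * h k) ^ n) := by
      rw [← setLIntegral_const]
      calc _ ≤ ∫⁻ y in c, (F y + ENNReal.ofReal |f y - f x|) := by
            refine lintegral_mono fun y => ?_
            rw [hF, ← ENNReal.ofReal_add (abs_nonneg _) (abs_nonneg _)]
            apply ENNReal.ofReal_le_ofReal
            have := abs_sub_abs_le_abs_sub (f x) (f y)
            rw [abs_sub_comm] at this
            linarith
        _ = (∫⁻ y in c, F y) + ∫⁻ y in c, ENNReal.ofReal |f y - f x| := by
            refine lintegral_add_left' ?_ _
            exact (hf.1.aemeasurable.restrict.abs).ennreal_ofReal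
        _ ≤ _ := add_le_add h2 ((lintegral_mono_set hcb).trans h1)
    rw [hc, volume_gcell hkp, ← ENNReal.ofReal_add (by positivity) (by positivity),
      ← ENNReal.ofReal_mul (abs_nonneg _), ENNReal.ofReal_le_ofReal_iff (by positivity)] at h3
    have h4 : η / n ^ n * (n * h k) ^ n = η * h k ^ n := by rw [mul_pow]; field_simp
    rw [h4, ← add_mul] at h3
    exact le_of_mul_le_mul_right h3 (by positivity)

/-! ### Good and bad parts -/

/-- Calderón–Zygmund decomposition `f = (f - b) + b` with bad part `b` supported on cells of mean
value zero. -/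
lemma cz_split {n : ℕ} (hn : 0 < n) : ∃ C : ℝ, 0 < C ∧ ∀ f : E n → ℝ, Integrable f →
    ∀ L : ℝ, 0 < L → ∃ (ι : Type) (_ : Countable ι) (A : ι → Set (E n)) (z : ι → E n) (r : ι → ℝ)
      (b : E n → ℝ),
      (∀ i, MeasurableSet (A i)) ∧ Pairwise (Function.onFun Disjoint A) ∧ (∀ i, 0 < r i) ∧
      (∀ i, A i ⊆ closedBall (z i) (r i)) ∧
      Integrable b ∧ (∀ x, x ∉ (⋃ i, A i) → b x = 0) ∧ (∀ i, ∫ y in A i, b y = 0) ∧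
      (∫⁻ y, ENNReal.ofReal |b y| ≤ 2 * ∫⁻ y, ENNReal.ofReal |f y|) ∧
      (∀ᵐ x, |f x - b x| ≤ C * L) ∧
      ENNReal.ofReal L * volume (⋃ i, closedBall (z i) (2 * r i)) ≤
        ENNReal.ofReal C * ∫⁻ y, ENNReal.ofReal |f y| := by
  obtain ⟨C, hC, hdec⟩ := cz_decomp hn
  have hu := unitVol_pos n
  refine ⟨C + 1 + 2 ^ n * unitVol n * C, by positivity, fun f hf L hL => ?_⟩
  obtain ⟨ι, hι, A, z, r, hAm, hAd, hr, hAb, hrA, hA0, hAt, hlow, hup, hoff⟩ := hdec f hf L hL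
  have hCmul : 0 ≤ 2 ^ n * unitVol n * C := by positivity
  set F : E n → ℝ≥0∞ := fun y => ENNReal.ofReal |f y| with hF
  have hsumF : ∑' i, ∫⁻ y in A i, F y ≤ ∫⁻ y, F y := by
    rw [← lintegral_iUnion hAm hAd]
    exact setLIntegral_le_lintegral _ _
  have hFtop : ∫⁻ y, F y ≠ ⊤ := by
    have := hf.2.ne
    simpa [hF, Real.enorm_eq_ofReal_abs] using this
  -- `m i` is the mean of `f` over `A i`; the bad part is `f - m i` on `A i`.
  let m : ι → ℝ := fun i => (∫ y in A i, f y) / (volume (A i)).toReal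
  have hvpos : ∀ i, 0 < (volume (A i)).toReal := fun i => ENNReal.toReal_pos (hA0 i) (hAt i)
  have hm : ∀ i, ENNReal.ofReal |m i| * volume (A i) ≤ ∫⁻ y in A i, F y := by
    intro i
    have h1 : ENNReal.ofReal |m i| * volume (A i) = ENNReal.ofReal |∫ y in A i, f y| := by
      rw [← ENNReal.ofReal_toReal (hAt i), ← ENNReal.ofReal_mul (abs_nonneg _)]
      congr 1
      simp only [m]
      rw [abs_div, abs_of_pos (hvpos i)]
      exact div_mul_cancel₀ _ (hvpos i).ne'
    rw [h1, ← Real.enorm_eq_ofReal_abs]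
    refine (enorm_integral_le_lintegral_enorm _).trans (le_of_eq ?_)
    simp only [Real.enorm_eq_ofReal_abs, hF]
  have hmC : ∀ i, |m i| ≤ C * L := by
    intro i
    have h1 := (hm i).trans (hup i)
    rw [ENNReal.mul_le_mul_iff_left (hA0 i) (hAt i), ENNReal.ofReal_le_ofReal_iff (by positivity)] at h1
    exact h1
  classical
  let b : E n → ℝ := fun x => if h : ∃ i, x ∈ A i then f x - m h.choose else 0
  have hbA : ∀ i, ∀ x ∈ A i, b x = f x - m i := by
    intro i x hx
    have h : ∃ i, x ∈ A i := ⟨i, hx⟩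
    simp only [b, dif_pos h]
    have : h.choose = i := by
      by_contra hne
      exact Set.disjoint_left.1 (hAd hne) h.choose_spec hx
    rw [this]
  have hb0 : ∀ x, x ∉ (⋃ i, A i) → b x = 0 := by
    intro x hx
    have : ¬ ∃ i, x ∈ A i := by simpa using hx
    simp only [b, dif_neg this]
  have hUm : MeasurableSet (⋃ i, A i) := MeasurableSet.iUnion hAm
  have hbmeas : AEStronglyMeasurable b := by
    have h1 : AEStronglyMeasurable b (volume.restrict (⋃ i, A i)) := by
      rw [aestronglyMeasurable_iUnion_iff]
      intro i
      have : AEStronglyMeasurable (fun x => f x - m i) (volume.restrict (A i)) :=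
        hf.1.restrict.sub aestronglyMeasurable_const
      refine this.congr ?_
      filter_upwards [ae_restrict_mem (hAm i)] with x hx
      exact (hbA i x hx).symm
    have h2 : b = (⋃ i, A i).indicator b := by
      ext x
      by_cases hx : x ∈ ⋃ i, A i
      · rw [indicator_of_mem hx]
      · rw [indicator_of_notMem hx, hb0 x hx]
    rw [h2]
    exact (aestronglyMeasurable_indicator_iff hUm).2 h1
  have hbint : ∫⁻ y, ENNReal.ofReal |b y| ≤ 2 * ∫⁻ y, F y := by
    have h1 : ∫⁻ y, ENNReal.ofReal |b y| = ∑' i, ∫⁻ y in A i, ENNReal.ofReal |b y| := by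
      rw [← lintegral_iUnion hAm hAd]
      refine (setLIntegral_eq_of_support_subset ?_).symm
      intro y hy
      by_contra hy'
      exact hy (by simp [hb0 y hy'])
    rw [h1]
    calc _ ≤ ∑' i, 2 * ∫⁻ y in A i, F y := by
          refine ENNReal.tsum_le_tsum fun i => ?_
          calc ∫⁻ y in A i, ENNReal.ofReal |b y| ≤ ∫⁻ y in A i, (F y + ENNReal.ofReal |m i|) := by
                refine setLIntegral_mono' (hAm i) fun y hy => ?_
                rw [hbA i y hy, hF, ← ENNReal.ofReal_add (abs_nonneg _) (abs_nonneg _)]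
                exact ENNReal.ofReal_le_ofReal (abs_sub _ _)
            _ = (∫⁻ y in A i, F y) + ENNReal.ofReal |m i| * volume (A i) := by
                rw [lintegral_add_right _ measurable_const, setLIntegral_const]
            _ ≤ _ := by rw [two_mul]; exact add_le_add le_rfl (hm i)
      _ = 2 * ∑' i, ∫⁻ y in A i, F y := ENNReal.tsum_mul_left
      _ ≤ _ := by gcongr
  have hbi : Integrable b := by
    refine ⟨hbmeas, ?_⟩
    rw [hasFiniteIntegral_iff_enorm]
    simp only [Real.enorm_eq_ofReal_abs]
    exact hbint.trans_lt (ENNReal.mul_lt_top (by norm_num) hFtop.lt_top)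
  refine ⟨ι, hι, A, z, r, b, hAm, hAd, hr, hAb, hbi, hb0, ?_, hbint, ?_, ?_⟩
  · intro i
    rw [setIntegral_congr_fun (hAm i) (hbA i), integral_sub hf.integrableOn
      (integrableOn_const (hAt i)), setIntegral_const]
    simp only [m, measureReal_def, smul_eq_mul]
    rw [mul_div_cancel₀ _ (hvpos i).ne', sub_self]
  · filter_upwards [hoff] with x hx
    by_cases hxU : x ∈ ⋃ i, A i
    · obtain ⟨i, hi⟩ := mem_iUnion.1 hxU
      rw [hbA i x hi, _root_.sub_sub_cancel]
      exact (hmC i).trans (by gcongr; linarith)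
    · rw [hb0 x hxU, sub_zero]
      refine (hx hxU).trans ?_
      nlinarith
  · calc _ ≤ ENNReal.ofReal L * ∑' i, volume (closedBall (z i) (2 * r i)) := by
          gcongr; exact measure_iUnion_le _
      _ ≤ ENNReal.ofReal L * ∑' i, ENNReal.ofReal (2 ^ n * unitVol n * C) * volume (A i) := by
          gcongr with i
          rw [volume_closedBall _ (by linarith [hr i])]
          have e : (2 * r i) ^ n * unitVol n = (2 ^ n * unitVol n) * r i ^ n := by rw [mul_pow]; ring
          rw [e, ENNReal.ofReal_mul (by positivity), ENNReal.ofReal_mul (p := 2 ^ n * unitVol n) (q := C) (by positivity), mul_assoc]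
          gcongr
          exact hrA i
      _ = ENNReal.ofReal (2 ^ n * unitVol n * C) * ∑' i, ENNReal.ofReal L * volume (A i) := by
          rw [ENNReal.tsum_mul_left, ENNReal.tsum_mul_left]; ring
      _ ≤ ENNReal.ofReal (2 ^ n * unitVol n * C) * ∑' i, ∫⁻ y in A i, F y := by
          gcongr with i
          exact hlow i
      _ ≤ ENNReal.ofReal (C + 1 + 2 ^ n * unitVol n * C) * ∫⁻ y, F y := by
          gcongr; linarith

/-- Away from the doubled balls, the convolution with a bad part is integrable: the mean value
property of `b` on each cell brings in the regularity of the kernel. -/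
lemma bad_part {n : ℕ} {M : ℝ} {k : E n → ℝ} (hk : CZ M k) {ι : Type} [Countable ι]
    {A : ι → Set (E n)} {z : ι → E n} {r : ι → ℝ} {b : E n → ℝ} (hAm : ∀ i, MeasurableSet (A i))
    (hAd : Pairwise (Function.onFun Disjoint A)) (hr : ∀ i, 0 < r i)
    (hAb : ∀ i, A i ⊆ closedBall (z i) (r i)) (hb : Integrable b)
    (hb0 : ∀ x, x ∉ (⋃ i, A i) → b x = 0) (hbA : ∀ i, ∫ y in A i, b y = 0) :
    ∫⁻ x in (⋃ i, closedBall (z i) (2 * r i))ᶜ, ENNReal.ofReal |cv k b x| ≤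
      ENNReal.ofReal (M * (2 ^ (n + 2) * unitVol n)) * ∫⁻ y, ENNReal.ofReal |b y| := by
  have hM := hk.nonneg
  have hUm : MeasurableSet (⋃ i, A i) := MeasurableSet.iUnion hAm
  set β : ι → ℝ≥0∞ := fun i => ∫⁻ y in A i, ENNReal.ofReal |b y| with hβ
  have hβs : ∑' i, β i ≤ ∫⁻ y, ENNReal.ofReal |b y| := by
    rw [hβ, ← lintegral_iUnion hAm hAd]
    exact setLIntegral_le_lintegral _ _
  have hcell : ∀ x, ∀ i, x ∉ closedBall (z i) (2 * r i) →
      ‖∫ y in A i, k (x - y) * b y‖ₑ ≤ ENNReal.ofReal (M * tailFn n (r i) (x - z i)) * β i := by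
    intro x i hx
    have hx' : 2 * r i < ‖x - z i‖ := by simpa [mem_closedBall, dist_eq_norm] using hx
    have hInt := (cv_integrand hk.cont hk.cpt hb.locallyIntegrable x).integrableOn (s := A i)
    have e : ∫ y in A i, k (x - y) * b y = ∫ y in A i, (k (x - y) - k (x - z i)) * b y := by
      have h0 : ∫ y in A i, k (x - z i) * b y = 0 := by rw [integral_const_mul, hbA i, mul_zero]
      simp only [sub_mul]
      rw [integral_sub hInt ((hb.integrableOn (s := A i)).const_mul _), h0, sub_zero]
    rw [e]
    refine (enorm_integral_le_lintegral_enorm _).trans ?_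
    rw [hβ, ← lintegral_const_mul' _ _ ENNReal.ofReal_ne_top]
    refine setLIntegral_mono' (hAm i) fun y hy => ?_
    rw [Real.enorm_eq_ofReal_abs, abs_mul, ENNReal.ofReal_mul (abs_nonneg _)]
    gcongr
    have hy' : ‖y - z i‖ ≤ r i := by simpa [mem_closedBall, dist_eq_norm] using hAb i hy
    have h1 := hk.reg (x - z i) (y - z i) (by linarith)
    rw [sub_sub_sub_cancel_right] at h1
    have hri := hr i
    have hpos : 0 < ‖x - z i‖ := by linarith
    unfold tailFn
    rw [if_neg (by linarith), mul_div_assoc', le_div_iff₀ (by positivity)]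
    refine h1.trans (by gcongr)
  have hpt : ∀ x ∈ (⋃ i, closedBall (z i) (2 * r i))ᶜ, ENNReal.ofReal |cv k b x| ≤
      ∑' i, ENNReal.ofReal (M * tailFn n (r i) (x - z i)) * β i := by
    intro x hx
    have hx' : ∀ i, x ∉ closedBall (z i) (2 * r i) := by simpa using hx
    have h1 : cv k b x = ∫ y in ⋃ i, A i, k (x - y) * b y := by
      refine (setIntegral_eq_integral_of_forall_compl_eq_zero fun y hy => ?_).symm
      rw [hb0 y hy, mul_zero]
    have h2 := hasSum_integral_iUnion hAm hAd
      (cv_integrand hk.cont hk.cpt hb.locallyIntegrable x).integrableOn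
    rw [← Real.enorm_eq_ofReal_abs, h1, ← h2.tsum_eq]
    exact (enorm_tsum_le_tsum_enorm).trans (ENNReal.tsum_le_tsum fun i => hcell x i (hx' i))
  have hmeas : MeasurableSet (⋃ i, closedBall (z i) (2 * r i))ᶜ :=
    (MeasurableSet.iUnion fun i => isClosed_closedBall.measurableSet).compl
  calc _ ≤ ∫⁻ x in (⋃ i, closedBall (z i) (2 * r i))ᶜ,
        ∑' i, ENNReal.ofReal (M * tailFn n (r i) (x - z i)) * β i := setLIntegral_mono' hmeas hpt
    _ ≤ ∫⁻ x, ∑' i, ENNReal.ofReal (M * tailFn n (r i) (x - z i)) * β i :=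
        setLIntegral_le_lintegral _ _
    _ = ∑' i, ∫⁻ x, ENNReal.ofReal (M * tailFn n (r i) (x - z i)) * β i := by
        refine lintegral_tsum fun i => ?_
        have : Measurable fun x => ENNReal.ofReal (M * tailFn n (r i) (x - z i)) :=
          ((measurable_tailFn.comp (measurable_id.sub_const _)).const_mul _).ennreal_ofReal
        exact (this.mul_const _).aemeasurable
    _ ≤ ∑' i, ENNReal.ofReal (M * (2 ^ (n + 2) * unitVol n)) * β i := by
        refine ENNReal.tsum_le_tsum fun i => ?_
        have hmm : Measurable fun x => ENNReal.ofReal (M * tailFn n (r i) (x - z i)) :=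
          ((measurable_tailFn.comp (measurable_id.sub_const _)).const_mul _).ennreal_ofReal
        rw [lintegral_mul_const _ hmm]
        gcongr
        simp only [ENNReal.ofReal_mul hM]
        rw [lintegral_const_mul' _ _ ENNReal.ofReal_ne_top,
          lintegral_sub_right_eq_self (fun x => ENNReal.ofReal (tailFn n (r i) x))]
        gcongr
        exact lintegral_tailFn (hr i)
    _ ≤ _ := by rw [ENNReal.tsum_mul_left]; gcongr

/-! ### The weak type `(1,1)` bound and Kolmogorov's inequality -/

lemma eLpNorm_two_sq {n : ℕ} (f : E n → ℝ) :
    eLpNorm f 2 volume ^ 2 = ∫⁻ x, ENNReal.ofReal |f x| ^ 2 := by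
  have := eLpNorm_nnreal_pow_eq_lintegral (μ := (volume : Measure (E n))) (f := f) (p := 2) (by norm_num)
  simp only [Real.enorm_eq_ofReal_abs, NNReal.coe_ofNat, ENNReal.coe_ofNat, ENNReal.rpow_two] at this
  exact this

/-- The weak type `(1,1)` bound, uniform in the kernel. -/
lemma weak_one_one {n : ℕ} (hn : 0 < n) (A : ℝ) : ∃ C : ℝ, 0 < C ∧ ∀ k : E n → ℝ, CZ A k →
    ∀ f : E n → ℝ, Integrable f → ∀ L : ℝ, 0 < L →
      ENNReal.ofReal L * volume {x | L < |cv k f x|} ≤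
        ENNReal.ofReal C * ∫⁻ y, ENNReal.ofReal |f y| := by
  obtain ⟨C, hC, hs⟩ := cz_split hn
  obtain ⟨B, hB, hl2⟩ := l2_bound hn A
  set D : ℝ := |A| * (2 ^ (n + 2) * unitVol n) with hD
  have hu := unitVol_pos n
  have hD0 : 0 ≤ D := by positivity
  refine ⟨12 * B ^ 2 * C + C + 4 * D, by positivity, fun k hk f hf L hL => ?_⟩
  obtain ⟨ι, hι, U, z, r, b, hAm, hAd, hr, hAb, hb, hb0, hbA, hbi, hoff, hvol⟩ := hs f hf L hL
  set F := ∫⁻ y, ENNReal.ofReal |f y| with hF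
  set g : E n → ℝ := fun y => f y - b y with hg
  have hgi : Integrable g := hf.sub hb
  have hg1 : ∫⁻ y, ENNReal.ofReal |g y| ≤ 3 * F := by
    calc ∫⁻ y, ENNReal.ofReal |g y| ≤ ∫⁻ y, (ENNReal.ofReal |f y| + ENNReal.ofReal |b y|) := by
          refine lintegral_mono fun y => ?_
          rw [← ENNReal.ofReal_add (abs_nonneg _) (abs_nonneg _)]
          exact ENNReal.ofReal_le_ofReal (abs_sub _ _)
      _ = F + ∫⁻ y, ENNReal.ofReal |b y| := by
          rw [lintegral_add_left' hf.1.aemeasurable.abs.ennreal_ofReal]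
      _ ≤ F + 2 * F := by gcongr
      _ = 3 * F := by ring
  have hg2 : ∫⁻ y, ENNReal.ofReal |g y| ^ 2 ≤ ENNReal.ofReal (C * L) * (3 * F) := by
    calc ∫⁻ y, ENNReal.ofReal |g y| ^ 2 ≤ ∫⁻ y, ENNReal.ofReal (C * L) * ENNReal.ofReal |g y| := by
          refine lintegral_mono_ae ?_
          filter_upwards [hoff] with y hy
          rw [pow_two]
          gcongr
      _ = ENNReal.ofReal (C * L) * ∫⁻ y, ENNReal.ofReal |g y| := lintegral_const_mul' _ _ ENNReal.ofReal_ne_top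
      _ ≤ _ := by gcongr
  have hFt : F ≠ ⊤ := by
    have := hf.2.ne
    simpa [hF, Real.enorm_eq_ofReal_abs] using this
  have hgm : MemLp g 2 := by
    refine ⟨hgi.1, ?_⟩
    have h1 : eLpNorm g 2 volume ^ 2 < ⊤ := by
      rw [eLpNorm_two_sq]
      exact hg2.trans_lt (ENNReal.mul_lt_top ENNReal.ofReal_lt_top
        (ENNReal.mul_lt_top (by norm_num) hFt.lt_top))
    by_contra h
    rw [not_lt, top_le_iff] at h
    rw [h] at h1
    simp at h1
  have hcg : ∫⁻ y, ENNReal.ofReal |cv k g y| ^ 2 ≤ ENNReal.ofReal B ^ 2 * (ENNReal.ofReal (C * L) * (3 * F)) := by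
    rw [← eLpNorm_two_sq]
    calc eLpNorm (cv k g) 2 volume ^ 2 ≤ (ENNReal.ofReal B * eLpNorm g 2 volume) ^ 2 := by
          gcongr; exact hl2 k hk g hgm
      _ = ENNReal.ofReal B ^ 2 * eLpNorm g 2 volume ^ 2 := mul_pow _ _ _
      _ ≤ _ := by rw [eLpNorm_two_sq]; gcongr
  have hL0 : ENNReal.ofReal L ≠ 0 := by simpa using hL
  -- Chebyshev's inequality in `L²` for the good part
  have good : ENNReal.ofReal L * volume {x | L / 2 < |cv k g x|} ≤ ENNReal.ofReal (12 * B ^ 2 * C) * F := by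
    have h1 : ENNReal.ofReal (L / 2) ^ 2 * volume {x | L / 2 < |cv k g x|} ≤
        ∫⁻ y, ENNReal.ofReal |cv k g y| ^ 2 := by
      have hm : Measurable fun y => ENNReal.ofReal |cv k g y| ^ 2 :=
        ((cv_continuous hk.cont hk.cpt hgi.locallyIntegrable).measurable.abs.ennreal_ofReal).pow_const _
      refine le_trans ?_ (mul_meas_ge_le_lintegral hm (ENNReal.ofReal (L / 2) ^ 2))
      gcongr
      exact fun hx => by gcongr
    have h2 := h1.trans hcg
    rw [← ENNReal.mul_le_mul_iff_right hL0 ENNReal.ofReal_ne_top]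
    have e1 : ENNReal.ofReal L * (ENNReal.ofReal L * volume {x | L / 2 < |cv k g x|}) =
        4 * (ENNReal.ofReal (L / 2) ^ 2 * volume {x | L / 2 < |cv k g x|}) := by
      rw [← mul_assoc, ← mul_assoc, ← ENNReal.ofReal_mul hL.le, ← ENNReal.ofReal_pow (by positivity),
        ← ENNReal.ofReal_ofNat 4, ← ENNReal.ofReal_mul (by norm_num)]
      congr 2; ring
    rw [e1]
    calc _ ≤ 4 * (ENNReal.ofReal B ^ 2 * (ENNReal.ofReal (C * L) * (3 * F))) := by gcongr
      _ = (4 * (ENNReal.ofReal B ^ 2 * (ENNReal.ofReal (C * L) * 3))) * F := by ring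
      _ = ENNReal.ofReal (L * (12 * B ^ 2 * C)) * F := by
          rw [← ENNReal.ofReal_pow hB.le, ← ENNReal.ofReal_ofNat 3, ← ENNReal.ofReal_mul (by positivity),
            ← ENNReal.ofReal_mul (by positivity), ← ENNReal.ofReal_ofNat 4, ← ENNReal.ofReal_mul (by norm_num)]
          congr 2; ring
      _ = _ := by rw [ENNReal.ofReal_mul hL.le, mul_assoc]
      _ ≤ _ := le_rfl
  have bad : ENNReal.ofReal L * volume ({x | L / 2 < |cv k b x|} ∩ (⋃ i, closedBall (z i) (2 * r i))ᶜ) ≤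
      ENNReal.ofReal (4 * D) * F := by
    have hUm : MeasurableSet (⋃ i, closedBall (z i) (2 * r i))ᶜ :=
      (MeasurableSet.iUnion fun i => isClosed_closedBall.measurableSet).compl
    have hm : Measurable fun y => ENNReal.ofReal |cv k b y| :=
      (cv_continuous hk.cont hk.cpt hb.locallyIntegrable).measurable.abs.ennreal_ofReal
    have h1 : ENNReal.ofReal (L / 2) * volume ({x | L / 2 < |cv k b x|} ∩ (⋃ i, closedBall (z i) (2 * r i))ᶜ) ≤
        ∫⁻ x in (⋃ i, closedBall (z i) (2 * r i))ᶜ, ENNReal.ofReal |cv k b x| := by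
      refine le_trans ?_ (mul_meas_ge_le_lintegral hm (ENNReal.ofReal (L / 2)))
      rw [Measure.restrict_apply' hUm]
      gcongr
      exact fun hx => by gcongr
    have h2 := h1.trans (bad_part hk hAm hAd hr hAb hb hb0 hbA)
    have hAA : A ≤ |A| := le_abs_self A
    calc _ = 2 * (ENNReal.ofReal (L / 2) * volume ({x | L / 2 < |cv k b x|} ∩ (⋃ i, closedBall (z i) (2 * r i))ᶜ)) := by
          have e : ENNReal.ofReal L = 2 * ENNReal.ofReal (L / 2) := by
            rw [← ENNReal.ofReal_ofNat 2, ← ENNReal.ofReal_mul (by norm_num)]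
            congr 1; ring
          rw [e, mul_assoc]
      _ ≤ 2 * (ENNReal.ofReal D * (2 * F)) :=
          mul_le_mul' le_rfl (h2.trans (mul_le_mul' (ENNReal.ofReal_le_ofReal
            (mul_le_mul_of_nonneg_right hAA (by positivity))) hbi))
      _ = _ := by
          rw [ENNReal.ofReal_mul (p := 4) (q := D) (by norm_num), ENNReal.ofReal_ofNat]; ring
  -- A large value of `k * f` comes from the good part, from the enlarged cells, or from the bad
  -- part off the enlarged cells.
  have hsub : {x | L < |cv k f x|} ⊆ {x | L / 2 < |cv k g x|} ∪ ((⋃ i, closedBall (z i) (2 * r i)) ∪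
      ({x | L / 2 < |cv k b x|} ∩ (⋃ i, closedBall (z i) (2 * r i))ᶜ)) := by
    intro x hx
    have hx' : L < |cv k f x| := hx
    by_cases h1 : L / 2 < |cv k g x|
    · exact Or.inl h1
    · by_cases h2 : x ∈ ⋃ i, closedBall (z i) (2 * r i)
      · exact Or.inr (Or.inl h2)
      · refine Or.inr (Or.inr ⟨?_, h2⟩)
        have e : cv k g x = cv k f x - cv k b x :=
          cv_sub hk.cont hk.cpt hf.locallyIntegrable hb.locallyIntegrable x
        have h3 : |cv k f x| ≤ |cv k g x| + |cv k b x| := by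
          have : cv k f x = cv k g x + cv k b x := by rw [e]; ring
          rw [this]; exact abs_add_le _ _
        show L / 2 < |cv k b x|
        linarith
  calc _ ≤ ENNReal.ofReal L * (volume {x | L / 2 < |cv k g x|} + (volume (⋃ i, closedBall (z i) (2 * r i)) +
        volume ({x | L / 2 < |cv k b x|} ∩ (⋃ i, closedBall (z i) (2 * r i))ᶜ))) := by
        gcongr
        refine (measure_mono hsub).trans ((measure_union_le _ _).trans ?_)
        gcongr
        exact measure_union_le _ _
    _ ≤ ENNReal.ofReal (12 * B ^ 2 * C) * F + (ENNReal.ofReal C * F + ENNReal.ofReal (4 * D) * F) := by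
        rw [mul_add, mul_add]
        exact add_le_add good (add_le_add hvol bad)
    _ = _ := by
        rw [ENNReal.ofReal_add (by positivity) (by positivity), ENNReal.ofReal_add (by positivity) (by positivity)]
        ring

/-- Kolmogorov's inequality: a function in weak `L¹` is locally in `L^δ` for `δ < 1`. -/
lemma kolmogorov {n : ℕ} {δ : ℝ} (hδ : δ ∈ Ioo (0 : ℝ) 1) : ∃ C : ℝ, 0 < C ∧
    ∀ (u : E n → ℝ), Measurable u → ∀ W : ℝ, 0 < W →
      (∀ L : ℝ, 0 < L → ENNReal.ofReal L * volume {x | L < |u x|} ≤ ENNReal.ofReal W) →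
      ∀ (Q : Set (E n)) (V : ℝ), MeasurableSet Q → 0 < V → volume Q = ENNReal.ofReal V →
        ∫⁻ x in Q, ENNReal.ofReal (|u x| ^ δ) ≤ ENNReal.ofReal (C * (V * (W / V) ^ δ)) := by
  obtain ⟨h0, h1⟩ := hδ
  have h1' : 0 < 1 - δ := by linarith
  refine ⟨1 + δ / (1 - δ), by positivity, fun u hu W hW hw Q V hQ hV hQV => ?_⟩
  set t0 := W / V with ht0
  have ht : 0 < t0 := by positivity
  -- Layer-cake formula; the measure of `{t < |u|} ∩ Q` is at most `V` for `t ≤ W / V` and at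
  -- most `W / t` beyond.
  have key := lintegral_rpow_eq_lintegral_meas_lt_mul (volume.restrict Q) (f := fun x => |u x|)
    (Eventually.of_forall fun x => abs_nonneg _) hu.abs.aemeasurable h0
  rw [key]
  have hsplit : ∫⁻ t in Ioi (0:ℝ), (volume.restrict Q) {a | t < |u a|} * ENNReal.ofReal (t ^ (δ - 1)) ≤
      (∫⁻ t in Ioc (0:ℝ) t0, ENNReal.ofReal V * ENNReal.ofReal (t ^ (δ - 1))) +
      ∫⁻ t in Ioi t0, ENNReal.ofReal (W * t ^ (δ - 2)) := by
    rw [← Ioc_union_Ioi_eq_Ioi ht.le, lintegral_union measurableSet_Ioi (Ioc_disjoint_Ioi le_rfl)]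
    refine add_le_add (lintegral_mono fun t => ?_) (setLIntegral_mono' measurableSet_Ioi fun t htt => ?_)
    · gcongr
      rw [← hQV]
      exact (measure_mono (subset_univ _)).trans (by simp)
    · have htt' : 0 < t := ht.trans htt
      have h3 : (volume.restrict Q) {a | t < |u a|} ≤ ENNReal.ofReal (W / t) := by
        refine (Measure.restrict_apply_le _ _).trans ?_
        rw [ENNReal.ofReal_div_of_pos htt', ENNReal.le_div_iff_mul_le (by simp [htt']) (by simp), mul_comm]
        exact hw t htt'
      calc _ ≤ ENNReal.ofReal (W / t) * ENNReal.ofReal (t ^ (δ - 1)) := by gcongr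
        _ = _ := by
          rw [← ENNReal.ofReal_mul (by positivity)]
          congr 1
          rw [show δ - 1 = (δ - 2) + 1 by ring, Real.rpow_add_one htt'.ne']
          field_simp
  have hi1 : ∫⁻ t in Ioc (0:ℝ) t0, ENNReal.ofReal V * ENNReal.ofReal (t ^ (δ - 1)) =
      ENNReal.ofReal (V * (t0 ^ δ / δ)) := by
    rw [lintegral_const_mul' _ _ ENNReal.ofReal_ne_top, ENNReal.ofReal_mul hV.le]
    congr 1
    have hI : IntegrableOn (fun t : ℝ => t ^ (δ - 1)) (Ioc 0 t0) := by
      have := intervalIntegral.intervalIntegrable_rpow' (a := 0) (b := t0) (r := δ - 1) (by linarith)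
      rwa [intervalIntegrable_iff_integrableOn_Ioc_of_le ht.le] at this
    rw [← ofReal_integral_eq_lintegral_ofReal hI, ← intervalIntegral.integral_of_le ht.le,
      integral_rpow (Or.inl (by linarith))]
    · rw [show δ - 1 + 1 = δ by ring, Real.zero_rpow h0.ne', sub_zero]
    · filter_upwards [ae_restrict_mem measurableSet_Ioc] with t ht'
      exact Real.rpow_nonneg ht'.1.le _
  have hi2 : ∫⁻ t in Ioi t0, ENNReal.ofReal (W * t ^ (δ - 2)) =
      ENNReal.ofReal (W * (t0 ^ (δ - 1) / (1 - δ))) := by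
    have hI : IntegrableOn (fun t : ℝ => t ^ (δ - 2)) (Ioi t0) :=
      integrableOn_Ioi_rpow_of_lt (by linarith) ht
    rw [← ofReal_integral_eq_lintegral_ofReal (hI.const_mul W), integral_const_mul,
      integral_Ioi_rpow_of_lt (by linarith) ht]
    · congr 2
      rw [show δ - 2 + 1 = δ - 1 by ring, show δ - 1 = -(1 - δ) by ring, neg_div_neg_eq]
    · filter_upwards [ae_restrict_mem measurableSet_Ioi] with t ht'
      have : 0 < t := ht.trans ht'
      positivity
  rw [hi1, hi2] at hsplit
  calc _ ≤ ENNReal.ofReal δ * (ENNReal.ofReal (V * (t0 ^ δ / δ)) + ENNReal.ofReal (W * (t0 ^ (δ - 1) / (1 - δ)))) := by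
        gcongr
    _ = ENNReal.ofReal (δ * (V * (t0 ^ δ / δ) + W * (t0 ^ (δ - 1) / (1 - δ)))) := by
        rw [← ENNReal.ofReal_add (by positivity) (by positivity), ← ENNReal.ofReal_mul h0.le]
    _ = _ := by
        congr 1
        have e : t0 ^ δ = t0 ^ (δ - 1) * t0 := by
          rw [← Real.rpow_add_one ht.ne']; congr 1; ring
        have hW' : W = t0 * V := by rw [ht0]; field_simp
        rw [hW', e]
        field_simp

/-! ### `L²` convergence of the truncations -/

lemma CZ.abs_mul_norm_le {n : ℕ} {A : ℝ} {k : E n → ℝ} (hk : CZ A k) {ρ : ℝ} {y : E n} (hy : ‖y‖ ≤ ρ) :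
    |k y| * ‖y‖ ≤ A * innerFn n ρ y := by
  unfold innerFn
  rw [if_pos hy]
  rcases (norm_nonneg y).eq_or_lt with h | h
  · rw [← h]; simp
  · rw [mul_div_assoc', le_div_iff₀ (by positivity)]
    have := hk.size y
    calc |k y| * ‖y‖ * ‖y‖ ^ n = (|k y| * ‖y‖ ^ n) * ‖y‖ := by ring
      _ ≤ A * ‖y‖ := by gcongr

/-- Cancellation against a Lipschitz function, with the kernel localised to a ball. -/
lemma CZ.lip_bound {n : ℕ} (hn : 0 < n) {A : ℝ} {k : E n → ℝ} (hk : CZ A k) {ρ : ℝ} (hρ : 0 ≤ ρ)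
    {φ : E n → ℝ} {Λ : ℝ} (hΛ : 0 ≤ Λ) (hφ : Continuous φ) (hL : ∀ x y, |φ x - φ y| ≤ Λ * ‖x - y‖)
    (x : E n) (hsupp : ∀ y, k y * φ (x - y) ≠ 0 → ‖y‖ ≤ ρ) :
    |cv k φ x| ≤ A * Λ * (n * unitVol n * ρ) := by
  have hA := hk.nonneg
  -- The radial weight `h` localises the cancellation of `k` to the ball of radius `ρ`.
  let h : ℝ → ℝ := fun t => if t ≤ ρ then 1 else 0
  have e1 : cv k φ x = ∫ y, k y * φ (x - y) := by
    unfold cv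
    rw [← integral_sub_left_eq_self (fun y => k y * φ (x - y)) volume x]
    congr 1; ext y; congr 2; abel
  have hmh : Measurable fun y : E n => h ‖y‖ :=
    Measurable.ite (measurableSet_le measurable_norm measurable_const) measurable_const measurable_const
  have hi0 : Integrable fun y => k y * h ‖y‖ := by
    refine (hk.integrable).mul_bdd (c := 1) hmh.aestronglyMeasurable (Eventually.of_forall fun y => ?_)
    simp only [h]; split_ifs <;> simp
  have hi1 : Integrable fun y => k y * φ (x - y) :=
    (hk.cont.mul (by fun_prop)).integrable_of_hasCompactSupport hk.cpt.mul_right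
  have e2 : cv k φ x = ∫ y, k y * h ‖y‖ * (φ (x - y) - φ x) := by
    have : ∫ y, k y * h ‖y‖ * (φ (x - y) - φ x) = ∫ y, (k y * φ (x - y) - k y * h ‖y‖ * φ x) := by
      congr 1; ext y
      by_cases hy : ‖y‖ ≤ ρ
      · simp only [h, if_pos hy]; ring
      · have h0 : k y * φ (x - y) = 0 := by
          by_contra hc; exact hy (hsupp y hc)
        simp only [h, if_neg hy, h0]; ring
    rw [this, integral_sub hi1 (hi0.mul_const _), integral_mul_const, hk.mean h, e1]; ring
  rw [e2, ← Real.norm_eq_abs]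
  calc _ ≤ ∫ y, A * Λ * innerFn n ρ y := by
        refine norm_integral_le_of_norm_le ((integrable_innerFn hn ρ).const_mul _) (Eventually.of_forall fun y => ?_)
        rw [Real.norm_eq_abs]
        by_cases hy : ‖y‖ ≤ ρ
        · simp only [h, if_pos hy, mul_one]
          rw [abs_mul]
          have h1 := hL (x - y) x
          have h2 : ‖x - y - x‖ = ‖y‖ := by rw [show x - y - x = -y by abel, norm_neg]
          rw [h2] at h1
          calc |k y| * |φ (x - y) - φ x| ≤ |k y| * (Λ * ‖y‖) := by gcongr
            _ = Λ * (|k y| * ‖y‖) := by ring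
            _ ≤ Λ * (A * innerFn n ρ y) := mul_le_mul_of_nonneg_left (hk.abs_mul_norm_le hy) hΛ
            _ = _ := by ring
        · simp only [h, if_neg hy]
          simp only [mul_zero, zero_mul, abs_zero]
          have := innerFn_nonneg (r := ρ) y
          positivity
    _ = _ := by rw [integral_const_mul, integral_innerFn hn hρ]

lemma kk_add {n : ℕ} (Ω : E n → ℝ) (η ε R : ℝ) (x : E n) :
    kk Ω η R x = kk Ω η ε x + kk Ω ε R x := by
  unfold kk; ring

/-- The truncated operators are Cauchy in `L²`. -/
lemma l2_cauchy {n : ℕ} (hn : 0 < n) {Ω : E n → ℝ} (hK : IsCZKernel Ω) {f : E n → ℝ}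
    (hf : MemLp f 2) {θ : ℝ} (hθ : 0 < θ) : ∃ ε₀ : ℝ, 0 < ε₀ ∧ ∀ η ε, 0 < η → η ≤ ε → ε ≤ ε₀ →
      eLpNorm (cv (kk Ω η ε) f) 2 volume ≤ ENNReal.ofReal θ := by
  obtain ⟨A, hA, hkk⟩ := kk_cz hn hK
  obtain ⟨B, hB, hl2⟩ := l2_bound hn A
  have hθB : ENNReal.ofReal (θ / (2 * B)) ≠ 0 := by
    have : 0 < θ / (2 * B) := by positivity
    simpa using this
  -- A test function `φ` close to `f` in `L²`; the uniform `L²` bound absorbs the difference.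
  obtain ⟨φ, hφc, hφs, hφ⟩ := hf.exist_eLpNorm_sub_le (by norm_num) (by norm_num) (ε := θ / (2 * B)) (by positivity)
  have hφi : MemLp φ 2 := hφs.continuous.memLp_of_hasCompactSupport hφc
  obtain ⟨Λ, hΛ⟩ := (hφs.of_le (m := 1) (by simp)).lipschitzWith_of_hasCompactSupport hφc (by norm_num)
  have hL : ∀ x y, |φ x - φ y| ≤ Λ * ‖x - y‖ := fun x y => by
    have := hΛ.dist_le_mul x y
    rwa [Real.dist_eq, dist_eq_norm] at this
  obtain ⟨S, hS0, hS⟩ : ∃ S : ℝ, 0 < S ∧ ∀ y, φ y ≠ 0 → ‖y‖ ≤ S := by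
    obtain ⟨S, hS⟩ := hφc.isBounded.subset_closedBall 0
    refine ⟨max S 1, by positivity, fun y hy => ?_⟩
    have := hS (subset_tsupport _ hy)
    rw [mem_closedBall_zero_iff] at this
    exact this.trans (le_max_left _ _)
  set V : ℝ := (S + 2) ^ n * unitVol n with hV
  have hu := unitVol_pos n
  have hV0 : 0 < V := by positivity
  set D : ℝ := A * Λ * (n * unitVol n * 2) with hD
  have hD0 : 0 ≤ D := by positivity
  refine ⟨min 1 (θ / (2 * (D * √V + 1))), by positivity, fun η ε hη hηε hε => ?_⟩
  have hε0 : 0 < ε := hη.trans_le hηε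
  have hε1 : ε ≤ 1 := hε.trans (min_le_left _ _)
  have hk := hkk η ε hη hηε
  -- The kernel truncated between `η` and `ε` lives in the ball of radius `2 ε`, so that its
  -- convolution with the Lipschitz function `φ` is `O(ε)`.
  have hpt : ∀ x, |cv (kk Ω η ε) φ x| ≤ D * ε := fun x => by
    refine (hk.lip_bound hn (ρ := 2 * ε) (by positivity) (Λ := Λ) Λ.2 hφs.continuous hL x fun y hy => ?_).trans
      (by rw [hD]; apply le_of_eq; ring)
    by_contra hc
    exact hy (by rw [kk_eq_zero' Ω hη hηε (not_le.1 hc).le, zero_mul])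
  have hz : ∀ x, x ∉ closedBall (0 : E n) (S + 2) → cv (kk Ω η ε) φ x = 0 := fun x hx => by
    unfold cv
    rw [← integral_zero (E n) ℝ]
    congr 1; ext y
    by_cases hy : φ y = 0
    · rw [hy, mul_zero]
    · have h1 := hS y hy
      rw [mem_closedBall_zero_iff, not_le] at hx
      have h2 : ‖x‖ ≤ ‖x - y‖ + ‖y‖ := by simpa using norm_add_le (x - y) y
      rw [kk_eq_zero' Ω hη hηε (by linarith), zero_mul]
  have hsm : eLpNorm (cv (kk Ω η ε) φ) 2 volume ≤ ENNReal.ofReal (θ / 2) := by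
    have h1 : eLpNorm (cv (kk Ω η ε) φ) 2 volume ^ 2 ≤ ENNReal.ofReal (θ / 2) ^ 2 := by
      rw [eLpNorm_two_sq]
      calc ∫⁻ x, ENNReal.ofReal |cv (kk Ω η ε) φ x| ^ 2
          = ∫⁻ x in closedBall (0 : E n) (S + 2), ENNReal.ofReal |cv (kk Ω η ε) φ x| ^ 2 := by
            refine (setLIntegral_eq_of_support_subset fun x hx => ?_).symm
            by_contra hc
            exact hx (by simp [hz x hc])
        _ ≤ ∫⁻ x in closedBall (0 : E n) (S + 2), ENNReal.ofReal ((D * ε) ^ 2) := by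
            refine lintegral_mono fun x => ?_
            rw [ENNReal.ofReal_pow (by positivity)]
            gcongr
            exact hpt x
        _ = ENNReal.ofReal ((D * ε) ^ 2 * V) := by
            rw [setLIntegral_const, volume_closedBall _ (by positivity), ← ENNReal.ofReal_mul (by positivity)]
        _ ≤ _ := by
            rw [← ENNReal.ofReal_pow (by positivity)]
            refine ENNReal.ofReal_le_ofReal ?_
            have e : (D * ε) ^ 2 * V = (D * √V * ε) ^ 2 := by
              have h5 := Real.sq_sqrt hV0.le
              calc (D * ε) ^ 2 * V = (D * ε) ^ 2 * √V ^ 2 := by rw [h5]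
                _ = _ := by ring
            rw [e]
            have h3 : ε ≤ θ / (2 * (D * √V + 1)) := hε.trans (min_le_right _ _)
            rw [le_div_iff₀ (by positivity)] at h3
            have h4 : D * √V * ε ≤ θ / 2 := by linarith
            gcongr
    by_contra hc
    rw [not_le] at hc
    exact absurd h1 (not_le.2 (by gcongr))
  have hd := hl2 _ hk _ (hf.sub hφi)
  have hfl : LocallyIntegrable f := hf.locallyIntegrable (by norm_num)
  have e : cv (kk Ω η ε) f = fun x => cv (kk Ω η ε) φ x + cv (kk Ω η ε) (f - φ) x := by
    ext x
    have := cv_sub hk.cont hk.cpt hfl hφs.continuous.locallyIntegrable x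
    have h2 : cv (kk Ω η ε) (f - φ) x = cv (kk Ω η ε) (fun y => f y - φ y) x := rfl
    rw [h2, this]; ring
  rw [e]
  calc _ ≤ eLpNorm (cv (kk Ω η ε) φ) 2 volume + eLpNorm (cv (kk Ω η ε) (f - φ)) 2 volume :=
        eLpNorm_add_le (cv_continuous hk.cont hk.cpt hφs.continuous.locallyIntegrable).aestronglyMeasurable
          (cv_continuous hk.cont hk.cpt (hfl.sub hφs.continuous.locallyIntegrable)).aestronglyMeasurable (by norm_num)
    _ ≤ ENNReal.ofReal (θ / 2) + ENNReal.ofReal B * ENNReal.ofReal (θ / (2 * B)) := by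
        refine add_le_add hsm (hd.trans ?_)
        gcongr
    _ = _ := by
        rw [← ENNReal.ofReal_mul hB.le, ← ENNReal.ofReal_add (by positivity) (by positivity)]
        congr 1; field_simp; ring

/-- The `L²` limit of the truncated operators along a sequence of scales. -/
lemma l2_limit {n : ℕ} (hn : 0 < n) {Ω : E n → ℝ} (hK : IsCZKernel Ω) {f : E n → ℝ}
    (hf : MemLp f 2) {R : ℝ} (hR : 0 < R) : ∃ (η : ℕ → ℝ) (g : E n → ℝ), (∀ m, 0 < η m) ∧
      (∀ m, η m ≤ R) ∧ Tendsto η atTop (𝓝 0) ∧ MemLp g 2 ∧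
      Tendsto (fun m => eLpNorm (fun x => cv (kk Ω (η m) R) f x - g x) 2 volume) atTop (𝓝 0) := by
  obtain ⟨A, hA, hkk⟩ := kk_cz hn hK
  obtain ⟨B, hB, hl2⟩ := l2_bound hn A
  have hfl : LocallyIntegrable f := hf.locallyIntegrable (by norm_num)
  have hh : ∀ m : ℕ, (0 : ℝ) < (1 / 2) ^ m / 2 := fun m => by positivity
  choose e he0 he using fun m : ℕ => l2_cauchy hn hK hf (hh m)
  let e' : ℕ → ℝ := fun m => min (min (e m) R) (1 / ((m : ℝ) + 1))
  have he'0 : ∀ m, 0 < e' m := fun m => lt_min (lt_min (he0 m) hR) (by positivity)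
  -- Running minima make the sequence of scales monotone.
  let η : ℕ → ℝ := fun m => (Finset.range (m + 1)).inf' ⟨0, by simp⟩ e'
  have hη0 : ∀ m, 0 < η m := fun m => (Finset.lt_inf'_iff _).2 fun i _ => he'0 i
  have hηe : ∀ N m, N ≤ m → η m ≤ e' N := fun N m h =>
    Finset.inf'_le _ (by simp; omega)
  have hηR : ∀ m, η m ≤ R := fun m => (hηe m m le_rfl).trans ((min_le_left _ _).trans (min_le_right _ _))
  have hη : Tendsto η atTop (𝓝 0) :=
    squeeze_zero (fun m => (hη0 m).le) (fun m => (hηe m m le_rfl).trans (min_le_right _ _))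
      tendsto_one_div_add_atTop_nhds_zero_nat
  have hmem : ∀ m, MemLp (cv (kk Ω (η m) R) f) 2 := fun m => by
    have hk := hkk _ _ (hη0 m) (hηR m)
    exact ⟨(cv_continuous hk.cont hk.cpt hfl).aestronglyMeasurable,
      (hl2 _ hk f hf).trans_lt (ENNReal.mul_lt_top ENNReal.ofReal_lt_top hf.2)⟩
  have hdiff : ∀ a b, 0 < a → a ≤ b → b ≤ R → cv (kk Ω a R) f - cv (kk Ω b R) f = cv (kk Ω a b) f := by
    intro a b ha hab hbR
    ext x
    have h1 := hkk a b ha hab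
    have h2 := hkk b R (ha.trans_le hab) hbR
    simp only [Pi.sub_apply, cv]
    rw [sub_eq_iff_eq_add, ← integral_add (cv_integrand h1.cont h1.cpt hfl x) (cv_integrand h2.cont h2.cpt hfl x)]
    congr 1; ext y
    rw [kk_add Ω a b R]; ring
  have hcau : ∀ N a b : ℕ, N ≤ a → N ≤ b →
      eLpNorm (cv (kk Ω (η a) R) f - cv (kk Ω (η b) R) f) 2 volume < ENNReal.ofReal ((1 / 2) ^ N) := by
    have main : ∀ N a b : ℕ, N ≤ a → N ≤ b → η a ≤ η b →
        eLpNorm (cv (kk Ω (η a) R) f - cv (kk Ω (η b) R) f) 2 volume < ENNReal.ofReal ((1 / 2) ^ N) := by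
      intro N a b ha hb hab
      rw [hdiff _ _ (hη0 a) hab (hηR b)]
      refine (he N _ _ (hη0 a) hab ((hηe N b hb).trans ((min_le_left _ _).trans (min_le_left _ _)))).trans_lt ?_
      rw [ENNReal.ofReal_lt_ofReal_iff (by positivity)]
      have : (0 : ℝ) < (1 / 2) ^ N := by positivity
      linarith
    intro N a b ha hb
    rcases le_total (η a) (η b) with h | h
    · exact main N a b ha hb h
    · rw [eLpNorm_sub_comm]; exact main N b a hb ha h
  have hsum : ∑' i : ℕ, ENNReal.ofReal ((1 / 2) ^ i) ≠ ⊤ := by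
    rw [← ENNReal.ofReal_tsum_of_nonneg (fun i => by positivity) summable_geometric_two]
    exact ENNReal.ofReal_ne_top
  obtain ⟨g, hg, hlim⟩ := Lp.cauchy_complete_eLpNorm (p := 2) (by norm_num) hmem hsum hcau
  exact ⟨η, g, hη0, hηR, hη, hg, hlim⟩

/-! ### Mollification of the truncated kernels -/

/-- A Lipschitz bump supported in the ball of radius `ε`, normalised to have integral one. -/
def bump (n : ℕ) (ε : ℝ) (y : E n) : ℝ :=
  max 0 (1 - ‖y‖ / ε) / ∫ z : E n, max 0 (1 - ‖z‖ / ε)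

lemma hat_continuous {n : ℕ} (ε : ℝ) : Continuous fun y : E n => max 0 (1 - ‖y‖ / ε) := by fun_prop

lemma hat_zero {n : ℕ} {ε : ℝ} (hε : 0 < ε) {y : E n} (hy : ε ≤ ‖y‖) : max 0 (1 - ‖y‖ / ε) = 0 := by
  apply max_eq_left
  have : 1 ≤ ‖y‖ / ε := by rwa [le_div_iff₀ hε, one_mul]
  linarith

lemma hat_cpt {n : ℕ} {ε : ℝ} (hε : 0 < ε) : HasCompactSupport fun y : E n => max 0 (1 - ‖y‖ / ε) := by
  refine HasCompactSupport.intro (isCompact_closedBall 0 ε) fun y hy => hat_zero hε ?_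
  rw [mem_closedBall_zero_iff, not_le] at hy
  exact hy.le

lemma hat_integral {n : ℕ} {ε : ℝ} (hε : 0 < ε) :
    ε ^ n * (unitVol n / 2 ^ (n + 1)) ≤ ∫ z : E n, max 0 (1 - ‖z‖ / ε) := by
  have hi : Integrable fun y : E n => max 0 (1 - ‖y‖ / ε) :=
    (hat_continuous ε).integrable_of_hasCompactSupport (hat_cpt hε)
  have hv : volume.real (closedBall (0 : E n) (ε / 2)) = (ε / 2) ^ n * unitVol n := by
    rw [measureReal_def, volume_closedBall _ (by positivity), ENNReal.toReal_ofReal]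
    have := unitVol_pos n
    positivity
  calc ε ^ n * (unitVol n / 2 ^ (n + 1)) = ∫ z in closedBall (0 : E n) (ε / 2), (1 / 2 : ℝ) := by
        rw [setIntegral_const, hv, smul_eq_mul, div_pow, pow_succ]; field_simp
    _ ≤ ∫ z in closedBall (0 : E n) (ε / 2), max 0 (1 - ‖z‖ / ε) := by
        refine setIntegral_mono_on (integrableOn_const (isCompact_closedBall _ _).measure_lt_top.ne)
          hi.integrableOn isClosed_closedBall.measurableSet fun z hz => ?_
        rw [mem_closedBall_zero_iff] at hz
        refine le_trans ?_ (le_max_right _ _)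
        have : ‖z‖ / ε ≤ 1 / 2 := by rw [div_le_iff₀ hε]; linarith
        linarith
    _ ≤ _ := setIntegral_le_integral hi (Eventually.of_forall fun z => le_max_left _ _)

lemma hat_pos {n : ℕ} {ε : ℝ} (hε : 0 < ε) : 0 < ∫ z : E n, max 0 (1 - ‖z‖ / ε) := by
  have := unitVol_pos n
  exact lt_of_lt_of_le (by positivity) (hat_integral hε)

lemma bump_continuous {n : ℕ} (ε : ℝ) : Continuous (bump n ε) := (hat_continuous ε).div_const _

lemma bump_nonneg {n : ℕ} {ε : ℝ} (hε : 0 < ε) (y : E n) : 0 ≤ bump n ε y :=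
  div_nonneg (le_max_left _ _) (hat_pos hε).le

lemma bump_zero {n : ℕ} {ε : ℝ} (hε : 0 < ε) {y : E n} (hy : ε ≤ ‖y‖) : bump n ε y = 0 := by
  unfold bump; rw [hat_zero hε hy, zero_div]

lemma bump_cpt {n : ℕ} {ε : ℝ} (hε : 0 < ε) : HasCompactSupport (bump n ε) := by
  refine HasCompactSupport.intro (isCompact_closedBall 0 ε) fun y hy => bump_zero hε ?_
  rw [mem_closedBall_zero_iff, not_le] at hy
  exact hy.le

lemma bump_integrable {n : ℕ} {ε : ℝ} (hε : 0 < ε) : Integrable (bump n ε) :=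
  (bump_continuous ε).integrable_of_hasCompactSupport (bump_cpt hε)

lemma bump_integral {n : ℕ} {ε : ℝ} (hε : 0 < ε) : ∫ y, bump n ε y = 1 := by
  unfold bump
  rw [integral_div, div_self (hat_pos hε).ne']

/-- The size constant of the normalised bumps. -/
def bumpC (n : ℕ) : ℝ := 2 ^ (n + 1) / unitVol n

lemma bumpC_pos (n : ℕ) : 0 < bumpC n := by
  have := unitVol_pos n
  unfold bumpC; positivity

lemma inv_hat_le {n : ℕ} {ε : ℝ} (hε : 0 < ε) :
    (∫ z : E n, max 0 (1 - ‖z‖ / ε))⁻¹ ≤ bumpC n * (ε ^ n)⁻¹ := by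
  have := unitVol_pos n
  refine (inv_anti₀ (by positivity) (hat_integral hε)).trans (le_of_eq ?_)
  unfold bumpC; field_simp

lemma bump_le {n : ℕ} {ε : ℝ} (hε : 0 < ε) (y : E n) : bump n ε y ≤ bumpC n * (ε ^ n)⁻¹ := by
  unfold bump
  rw [div_eq_mul_inv]
  have h1 : max 0 (1 - ‖y‖ / ε) ≤ 1 := max_le zero_le_one (by
    have : 0 ≤ ‖y‖ / ε := by positivity
    linarith)
  calc _ ≤ 1 * (∫ z : E n, max 0 (1 - ‖z‖ / ε))⁻¹ := by
        have := hat_pos (n := n) hε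
        gcongr
    _ ≤ _ := by rw [one_mul]; exact inv_hat_le hε

lemma bump_lip {n : ℕ} {ε : ℝ} (hε : 0 < ε) (x y : E n) :
    |bump n ε x - bump n ε y| ≤ bumpC n * (ε ^ n)⁻¹ * ε⁻¹ * ‖x - y‖ := by
  unfold bump
  have hp := hat_pos (n := n) hε
  rw [← sub_div, abs_div, abs_of_pos hp, div_eq_mul_inv]
  have h1 : |max 0 (1 - ‖x‖ / ε) - max 0 (1 - ‖y‖ / ε)| ≤ ε⁻¹ * ‖x - y‖ := by
    rw [max_comm 0 (1 - ‖x‖ / ε), max_comm 0 (1 - ‖y‖ / ε)]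
    refine (abs_max_sub_max_le_abs (1 - ‖x‖ / ε) (1 - ‖y‖ / ε) 0).trans ?_
    rw [show (1 - ‖x‖ / ε) - (1 - ‖y‖ / ε) = -(ε⁻¹ * (‖x‖ - ‖y‖)) by field_simp; ring, abs_neg, abs_mul,
      abs_of_pos (inv_pos.2 hε)]
    gcongr
    exact abs_norm_sub_norm_le x y
  calc _ ≤ ε⁻¹ * ‖x - y‖ * (bumpC n * (ε ^ n)⁻¹) := by
        have := inv_hat_le (n := n) hε
        gcongr
    _ = _ := by ring

/-- Associativity of convolution for bounded measurable data. -/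
lemma cv_assoc {n : ℕ} {φ k h : E n → ℝ} (hφ : Continuous φ) (hφc : HasCompactSupport φ)
    (hk : Continuous k) (hkc : HasCompactSupport k) (hh : Measurable h) {M : ℝ} (hM : ∀ y, |h y| ≤ M)
    (x : E n) : cv φ (cv k h) x = cv (cv φ k) h x := by
  obtain ⟨a, ha⟩ : ∃ a : ℝ, ∀ y, φ y ≠ 0 → ‖y‖ ≤ a := by
    obtain ⟨S, hS⟩ := hφc.isBounded.subset_closedBall 0
    exact ⟨S, fun y hy => mem_closedBall_zero_iff.1 (hS (subset_tsupport _ hy))⟩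
  obtain ⟨b, hb⟩ : ∃ b : ℝ, ∀ y, k y ≠ 0 → ‖y‖ ≤ b := by
    obtain ⟨S, hS⟩ := hkc.isBounded.subset_closedBall 0
    exact ⟨S, fun y hy => mem_closedBall_zero_iff.1 (hS (subset_tsupport _ hy))⟩
  obtain ⟨N, hN⟩ := hk.bounded_above_of_compact_support hkc
  have hM0 : 0 ≤ M := (abs_nonneg _).trans (hM 0)
  have hφi : Integrable fun z => φ (x - z) :=
    (hφ.integrable_of_hasCompactSupport hφc).comp_sub_left x
  have hB : Integrable ((closedBall x (a + b)).indicator fun _ : E n => N * M) :=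
    (integrable_indicator_iff isClosed_closedBall.measurableSet).2
      (integrableOn_const (isCompact_closedBall _ _).measure_lt_top.ne)
  have hInt : Integrable (Function.uncurry fun z y => φ (x - z) * (k (z - y) * h y))
      (volume.prod volume) := by
    refine (hφi.mul_prod hB).mono ?_ (Eventually.of_forall ?_)
    · refine Measurable.aestronglyMeasurable ?_
      have h1 : Measurable fun p : E n × E n => φ (x - p.1) :=
        hφ.measurable.comp (measurable_const.sub measurable_fst)
      have h2 : Measurable fun p : E n × E n => k (p.1 - p.2) :=
        hk.measurable.comp (measurable_fst.sub measurable_snd)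
      exact h1.mul (h2.mul (hh.comp measurable_snd))
    · rintro ⟨z, y⟩
      simp only [Function.uncurry]
      rw [norm_mul, norm_mul]
      by_cases h1 : φ (x - z) = 0
      · simp [h1]
      by_cases h2 : k (z - y) = 0
      · rw [h2]; simp only [zero_mul, norm_zero, mul_zero]; positivity
      have hmem : y ∈ closedBall x (a + b) := by
        rw [mem_closedBall, dist_comm, dist_eq_norm]
        calc ‖x - y‖ = ‖(x - z) + (z - y)‖ := by congr 1; abel
          _ ≤ _ := (norm_add_le _ _).trans (add_le_add (ha _ h1) (hb _ h2))
      rw [indicator_of_mem hmem, norm_mul, norm_mul N M]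
      have hN0 : 0 ≤ N := (norm_nonneg _).trans (hN 0)
      rw [Real.norm_of_nonneg hN0, Real.norm_of_nonneg hM0]
      gcongr
      · exact hN _
      · exact hM y
  calc cv φ (cv k h) x = ∫ z, ∫ y, φ (x - z) * (k (z - y) * h y) := by
        unfold cv; congr 1; ext z; rw [integral_const_mul]
    _ = ∫ y, ∫ z, φ (x - z) * (k (z - y) * h y) := integral_integral_swap hInt
    _ = _ := by
        unfold cv; congr 1; ext y
        rw [← integral_mul_const, ← integral_sub_right_eq_self (fun z => φ (x - y - z) * k z * h y) y]
        congr 1; ext z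
        rw [show x - y - (z - y) = x - z by abel, mul_assoc]

/-- A truncated kernel differs from the mollified kernel by an integrable profile of scale `ε`. -/
lemma mollify_bound {n : ℕ} (hn : 0 < n) {Ω : E n → ℝ} (hK : IsCZKernel Ω) : ∃ C : ℝ, 0 < C ∧
    ∀ η ε R, 0 < η → η ≤ ε → ε ≤ R → ∀ x,
      |kk Ω ε R x - cv (bump n ε) (kk Ω η R) x| ≤ C * tailFn n ε x := by
  obtain ⟨A, hA, hkk⟩ := kk_cz hn hK
  have hu := unitVol_pos n
  have hbC := bumpC_pos n
  set C1 : ℝ := A + A * bumpC n * (n * unitVol n * 3) with hC1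
  have hC1p : 0 < C1 := by positivity
  refine ⟨A + 2 ^ (n + 1) * C1, by positivity, fun η ε R hη hηε hεR x => ?_⟩
  have hε := hη.trans_le hηε
  have hk := hkk η R hη (hηε.trans hεR)
  set k := kk Ω η R with hkdef
  have hb : ∀ y, bump n ε y ≠ 0 → ‖y‖ ≤ ε := fun y hy => by
    by_contra hc; exact hy (bump_zero hε (not_le.1 hc).le)
  have ht := tailFn_nonneg hε.le x
  -- Far from the origin the regularity of the kernel is used, near it the cancellation against the
  -- Lipschitz bump.
  rcases le_or_gt (2 * ε) ‖x‖ with hx | hx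
  · have e0 : kk Ω ε R x = k x := by
      have := kk_add Ω η ε R x
      rw [kk_eq_zero' Ω hη hηε hx, zero_add] at this
      exact this.symm
    have e1 : cv (bump n ε) k x = ∫ y, bump n ε y * k (x - y) := by
      unfold cv
      rw [← integral_sub_left_eq_self (fun y => bump n ε y * k (x - y)) volume x]
      congr 1; ext y; congr 2; abel
    have hi2 : Integrable fun y => bump n ε y * k (x - y) :=
      ((bump_continuous ε).mul (hk.cont.comp (by fun_prop))).integrable_of_hasCompactSupport (bump_cpt hε).mul_right
    have e2 : kk Ω ε R x - cv (bump n ε) k x = ∫ y, bump n ε y * (k x - k (x - y)) := by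
      simp only [mul_sub]
      rw [integral_sub ((bump_integrable hε).mul_const _) hi2, integral_mul_const, bump_integral hε, one_mul, e0, e1]
    have htail : tailFn n ε x = ε / ‖x‖ ^ (n + 1) := by
      unfold tailFn; rw [if_neg (by linarith)]
    have hx0 : 0 < ‖x‖ := by linarith
    rw [e2, ← Real.norm_eq_abs]
    calc _ ≤ ∫ y, bump n ε y * (A * tailFn n ε x) := by
          refine norm_integral_le_of_norm_le ((bump_integrable hε).mul_const _) (Eventually.of_forall fun y => ?_)
          rw [Real.norm_eq_abs, abs_mul, abs_of_nonneg (bump_nonneg hε y)]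
          by_cases hy : bump n ε y = 0
          · simp [hy]
          have hy' := hb y hy
          have hb0 := bump_nonneg hε y
          gcongr
          rw [htail, abs_sub_comm, mul_div_assoc', le_div_iff₀ (by positivity)]
          refine (hk.reg x y (by linarith)).trans ?_
          gcongr
      _ = A * tailFn n ε x := by rw [integral_mul_const, bump_integral hε, one_mul]
      _ ≤ _ := by gcongr; linarith [show 0 < 2 ^ (n + 1) * C1 by positivity]
  · have h1 : |kk Ω ε R x| ≤ A * (ε ^ n)⁻¹ := by
      rcases le_total ‖x‖ ε with h | h
      · rw [kk_eq_zero Ω hε hεR h, abs_zero]; positivity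
      · exact (hkk ε R hε hεR).le_div hε h
    have e1 : cv (bump n ε) k x = cv k (bump n ε) x := by
      unfold cv
      rw [← integral_sub_left_eq_self (fun y => k (x - y) * bump n ε y) volume x]
      congr 1; ext y; rw [mul_comm]; congr 2; abel
    have h2 : |cv (bump n ε) k x| ≤ A * bumpC n * (n * unitVol n * 3) * (ε ^ n)⁻¹ := by
      rw [e1]
      refine (hk.lip_bound hn (ρ := 3 * ε) (by positivity) (Λ := bumpC n * (ε ^ n)⁻¹ * ε⁻¹) (by positivity)
        (bump_continuous ε) (bump_lip hε) x fun y hy => ?_).trans (le_of_eq ?_)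
      · have h3 := hb (x - y) (right_ne_zero_of_mul hy)
        have h4 : ‖y‖ ≤ ‖x‖ + ‖x - y‖ := by
          calc ‖y‖ = ‖x - (x - y)‖ := by congr 1; abel
            _ ≤ _ := norm_sub_le _ _
        linarith
      · field_simp
    have h3 : (ε ^ n)⁻¹ ≤ 2 ^ (n + 1) * tailFn n ε x := by
      unfold tailFn
      split_ifs with h
      · have : (1 : ℝ) ≤ 2 ^ (n + 1) := one_le_pow₀ (by norm_num)
        exact le_mul_of_one_le_left (by positivity) this
      · rw [not_le] at h
        have hx0 : 0 < ‖x‖ := hε.trans h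
        rw [mul_div_assoc', le_div_iff₀ (by positivity), inv_mul_le_iff₀ (by positivity)]
        calc ‖x‖ ^ (n + 1) ≤ (2 * ε) ^ (n + 1) := by gcongr
          _ = _ := by rw [mul_pow, pow_succ ε]; ring
    calc _ ≤ |kk Ω ε R x| + |cv (bump n ε) k x| := abs_sub _ _
      _ ≤ A * (ε ^ n)⁻¹ + A * bumpC n * (n * unitVol n * 3) * (ε ^ n)⁻¹ := add_le_add h1 h2
      _ = C1 * (ε ^ n)⁻¹ := by rw [hC1]; ring
      _ ≤ C1 * (2 ^ (n + 1) * tailFn n ε x) := by gcongr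
      _ = (2 ^ (n + 1) * C1) * tailFn n ε x := by ring
      _ ≤ _ := by gcongr; linarith

/-! ### Almost everywhere convergence of the smooth truncations -/

/-- At a Lebesgue point of a bounded function, the deviation integrated against `tailFn` at scale `ε`
tends to zero. -/
lemma tail_small {n : ℕ} {f : E n → ℝ} (hf : Measurable f) {M : ℝ} (hM : ∀ y, |f y| ≤ M) {x : E n}
    (hx : LebPt f x) {θ : ℝ} (hθ : 0 < θ) : ∃ ε₀ : ℝ, 0 < ε₀ ∧ ∀ ε, 0 < ε → ε ≤ ε₀ →
      ∫⁻ y, ENNReal.ofReal (tailFn n ε (x - y)) * ENNReal.ofReal |f y - f x| ≤ ENNReal.ofReal θ := by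
  have hu := unitVol_pos n
  have hM0 : 0 ≤ M := (abs_nonneg _).trans (hM 0)
  set a : ℝ := θ / (2 * 2 ^ (n + 2)) with ha
  have ha0 : 0 < a := by positivity
  obtain ⟨ρ, hρ, hleb⟩ := hx a ha0
  set D : ℝ := 2 * M * (2 ^ (n + 2) * unitVol n) with hD
  have hD0 : 0 ≤ D := by positivity
  refine ⟨min ρ (θ * ρ / (2 * (D + 1))), by positivity, fun ε hε hεε => ?_⟩
  have hερ : ε ≤ ρ := hεε.trans (min_le_left _ _)
  have hεD : ε * (2 * (D + 1)) ≤ θ * ρ := by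
    have := hεε.trans (min_le_right _ _)
    rwa [le_div_iff₀ (by positivity)] at this
  set F : E n → ℝ≥0∞ := fun y => ENNReal.ofReal |f y - f x| with hF
  have hFm : Measurable F := (hf.sub_const _).abs.ennreal_ofReal
  -- The contribution of the ball of radius `ρ` is controlled by the Lebesgue point property, the
  -- remainder by the decay of `tailFn`.
  set G : E n → ℝ≥0∞ := (closedBall x ρ).indicator F with hG
  have hGm : Measurable G := hFm.indicator isClosed_closedBall.measurableSet
  have hGb : ∀ s, ε ≤ s → ∫⁻ y in closedBall x s, G y ≤ ENNReal.ofReal (s ^ n) * ENNReal.ofReal a := by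
    intro s hs
    have hs0 : 0 < s := hε.trans_le hs
    rw [← ENNReal.ofReal_mul (by positivity), mul_comm]
    rcases le_total s ρ with h | h
    · refine (lintegral_mono fun y => ?_).trans (hleb s hs0 h)
      exact indicator_le_self _ _ y
    · calc ∫⁻ y in closedBall x s, G y ≤ ∫⁻ y, G y := setLIntegral_le_lintegral _ _
        _ = ∫⁻ y in closedBall x ρ, F y := lintegral_indicator isClosed_closedBall.measurableSet _
        _ ≤ _ := (hleb ρ hρ le_rfl).trans (ENNReal.ofReal_le_ofReal (by gcongr))
  have h1 := lintegral_tailFn_le' hε hGm x (ENNReal.ofReal a) hGb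
  have hpt : ∀ y, ENNReal.ofReal (tailFn n ε (x - y)) * F y ≤
      ENNReal.ofReal (tailFn n ε (x - y)) * G y +
        ENNReal.ofReal (ε / ρ * (2 * M)) * ENNReal.ofReal (tailFn n ρ (x - y)) := by
    intro y
    by_cases hy : y ∈ closedBall x ρ
    · rw [hG, indicator_of_mem hy]; exact le_self_add
    · rw [hG, indicator_of_notMem hy, mul_zero, zero_add]
      rw [mem_closedBall, dist_comm, dist_eq_norm, not_le] at hy
      have e1 : tailFn n ε (x - y) = ε / ρ * tailFn n ρ (x - y) := by
        unfold tailFn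
        rw [if_neg (by linarith), if_neg (by linarith)]
        field_simp
      have ht := tailFn_nonneg hρ.le (x - y)
      have hfM : |f y - f x| ≤ 2 * M := by
        have := abs_sub (f y) (f x)
        linarith [hM y, hM x]
      rw [e1, hF, ← ENNReal.ofReal_mul (by positivity), ← ENNReal.ofReal_mul (by positivity)]
      refine ENNReal.ofReal_le_ofReal ?_
      calc ε / ρ * tailFn n ρ (x - y) * |f y - f x| ≤ ε / ρ * tailFn n ρ (x - y) * (2 * M) := by gcongr
        _ = _ := by ring
  have hmt : Measurable fun y => ENNReal.ofReal (tailFn n ρ (x - y)) :=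
    (measurable_tailFn.comp (measurable_const.sub measurable_id)).ennreal_ofReal
  calc _ ≤ ∫⁻ y, (ENNReal.ofReal (tailFn n ε (x - y)) * G y +
        ENNReal.ofReal (ε / ρ * (2 * M)) * ENNReal.ofReal (tailFn n ρ (x - y))) := lintegral_mono hpt
    _ = (∫⁻ y, ENNReal.ofReal (tailFn n ε (x - y)) * G y) +
        ENNReal.ofReal (ε / ρ * (2 * M)) * ∫⁻ y, ENNReal.ofReal (tailFn n ρ (x - y)) := by
        rw [lintegral_add_right _ (hmt.const_mul _), lintegral_const_mul _ hmt]
    _ ≤ ENNReal.ofReal (2 ^ (n + 2)) * ENNReal.ofReal a +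
        ENNReal.ofReal (ε / ρ * (2 * M)) * ENNReal.ofReal (2 ^ (n + 2) * unitVol n) := by
        gcongr
        rw [lintegral_sub_left_eq_self (fun y => ENNReal.ofReal (tailFn n ρ y)) x]
        exact lintegral_tailFn hρ
    _ = ENNReal.ofReal (2 ^ (n + 2) * a + ε / ρ * (2 * M) * (2 ^ (n + 2) * unitVol n)) := by
        rw [← ENNReal.ofReal_mul (by positivity), ← ENNReal.ofReal_mul (by positivity),
          ← ENNReal.ofReal_add (by positivity) (by positivity)]
    _ ≤ _ := by
        refine ENNReal.ofReal_le_ofReal ?_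
        have e1 : 2 ^ (n + 2) * a = θ / 2 := by rw [ha]; field_simp
        have e2 : ε / ρ * (2 * M) * (2 ^ (n + 2) * unitVol n) = ε * D / ρ := by rw [hD]; field_simp
        have e3 : ε * D / ρ ≤ θ / 2 := by
          rw [div_le_iff₀ hρ]; nlinarith
        rw [e1, e2]; linarith

/-- Mollification converges at Lebesgue points. -/
lemma bump_tendsto {n : ℕ} {g : E n → ℝ} (hg : LocallyIntegrable g) {x : E n} (hx : LebPt g x)
    {θ : ℝ} (hθ : 0 < θ) : ∃ ε₀ : ℝ, 0 < ε₀ ∧ ∀ ε, 0 < ε → ε ≤ ε₀ → |cv (bump n ε) g x - g x| ≤ θ := by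
  have hC := bumpC_pos n
  obtain ⟨ρ, hρ, hleb⟩ := hx (θ / bumpC n) (by positivity)
  refine ⟨ρ, hρ, fun ε hε hερ => ?_⟩
  have hbi : Integrable fun y => bump n ε (x - y) := (bump_integrable hε).comp_sub_left x
  have e : cv (bump n ε) g x - g x = ∫ y, bump n ε (x - y) * (g y - g x) := by
    simp only [mul_sub]
    rw [integral_sub (cv_integrand (bump_continuous ε) (bump_cpt hε) hg x) (hbi.mul_const _),
      integral_mul_const, integral_sub_left_eq_self (fun y => bump n ε y) volume x, bump_integral hε, one_mul]
    rfl
  rw [← ENNReal.ofReal_le_ofReal_iff hθ.le, ← Real.enorm_eq_ofReal_abs, e]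
  calc _ ≤ ∫⁻ y, ‖bump n ε (x - y) * (g y - g x)‖ₑ := enorm_integral_le_lintegral_enorm _
    _ = ∫⁻ y in closedBall x ε, ‖bump n ε (x - y) * (g y - g x)‖ₑ := by
        refine (setLIntegral_eq_of_support_subset fun y hy => ?_).symm
        by_contra hc
        rw [mem_closedBall, dist_comm, dist_eq_norm, not_le] at hc
        exact hy (by simp [bump_zero hε hc.le])
    _ ≤ ∫⁻ y in closedBall x ε, ENNReal.ofReal (bumpC n * (ε ^ n)⁻¹) * ENNReal.ofReal |g y - g x| := by
        refine lintegral_mono fun y => ?_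
        rw [Real.enorm_eq_ofReal_abs, abs_mul, ← ENNReal.ofReal_mul (by positivity), abs_of_nonneg (bump_nonneg hε _)]
        refine ENNReal.ofReal_le_ofReal ?_
        gcongr
        exact bump_le hε _
    _ = ENNReal.ofReal (bumpC n * (ε ^ n)⁻¹) * ∫⁻ y in closedBall x ε, ENNReal.ofReal |g y - g x| :=
        lintegral_const_mul' _ _ ENNReal.ofReal_ne_top
    _ ≤ ENNReal.ofReal (bumpC n * (ε ^ n)⁻¹) * ENNReal.ofReal (θ / bumpC n * ε ^ n) := by
        gcongr; exact hleb ε hε hερ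
    _ = _ := by
        rw [← ENNReal.ofReal_mul (by positivity)]
        congr 1; field_simp

lemma MemLinftyC.memLp {n : ℕ} {f : E n → ℝ} (hf : MemLinftyC f) (p : ℝ≥0∞) : MemLp f p volume := by
  obtain ⟨hm, ⟨C, hC⟩, hc⟩ := hf
  have h1 : f = (tsupport f).indicator f := by
    ext y
    by_cases hy : y ∈ tsupport f
    · rw [indicator_of_mem hy]
    · rw [indicator_of_notMem hy, image_eq_zero_of_notMem_tsupport hy]
  rw [h1, memLp_indicator_iff_restrict (isClosed_tsupport f).measurableSet]
  have : IsFiniteMeasure (volume.restrict (tsupport f)) := ⟨by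
    rw [Measure.restrict_apply_univ]; exact hc.measure_lt_top⟩
  exact MemLp.of_bound hm.aestronglyMeasurable C (Eventually.of_forall hC)

/-- Almost everywhere convergence of the smoothly truncated operators: at common Lebesgue points of
`f` and of an `L²` limit `g` of the truncations, they converge to `g x`. -/
lemma kk_limit {n : ℕ} (hn : 0 < n) {Ω : E n → ℝ} (hK : IsCZKernel Ω) {f : E n → ℝ}
    (hf : MemLinftyC f) {R : ℝ} (hR : 0 < R) :
    ∀ᵐ x, ∃ l : ℝ, Tendsto (fun ε => cv (kk Ω ε R) f x) (𝓝[>] 0) (𝓝 l) := by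
  obtain ⟨A, hA, hkk⟩ := kk_cz hn hK
  obtain ⟨C, hC, hmol⟩ := mollify_bound hn hK
  have hf2 := hf.memLp 2
  have hfl : LocallyIntegrable f := hf2.locallyIntegrable (by norm_num)
  obtain ⟨hfm, ⟨M, hM⟩, -⟩ := hf
  obtain ⟨η, g, hη0, hηR, hη, hg, hlim⟩ := l2_limit hn hK hf2 hR
  have hgl : LocallyIntegrable g := hg.locallyIntegrable (by norm_num)
  filter_upwards [ae_lebPt hfl, ae_lebPt hgl] with x hxf hxg
  refine ⟨g x, ?_⟩
  -- The truncation at scale `ε` is compared with the mollification of `g` at scale `ε`. The mean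
  -- value zero of the kernels permits subtracting the constant `f x` from `f`.
  have key : ∀ ε, 0 < ε → ε ≤ R → ENNReal.ofReal |cv (kk Ω ε R) f x - cv (bump n ε) g x| ≤
      ENNReal.ofReal C * ∫⁻ y, ENNReal.ofReal (tailFn n ε (x - y)) * ENNReal.ofReal |f y - f x| := by
    intro ε hε hεR
    set X := ENNReal.ofReal C * ∫⁻ y, ENNReal.ofReal (tailFn n ε (x - y)) * ENNReal.ofReal |f y - f x| with hX
    have hkε := hkk ε R hε hεR
    let h : E n → ℝ := fun y => f y - f x
    have hhm : Measurable h := hfm.sub_const _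
    have hhM : ∀ y, |h y| ≤ M + M := fun y => (abs_sub _ _).trans (add_le_add (hM _) (hM _))
    have hmean : ∀ k : E n → ℝ, CZ A k → ∀ z, cv k f z = cv k h z := by
      intro k hk z
      have h1 := cv_sub hk.cont hk.cpt hfl (locallyIntegrable_const (f x)) z
      have h2 : cv k (fun _ => f x) z = 0 := by
        unfold cv
        rw [integral_mul_const, integral_sub_left_eq_self (fun y => k y) volume z, hk.integral_eq_zero, zero_mul]
      rw [h2, sub_zero] at h1
      exact h1.symm
    have hhl : LocallyIntegrable h := hfl.sub (locallyIntegrable_const _)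
    have step : ∀ m, η m ≤ ε → ENNReal.ofReal |cv (kk Ω ε R) f x - cv (bump n ε) (cv (kk Ω (η m) R) f) x| ≤ X := by
      intro m hm
      have hkm := hkk _ _ (hη0 m) (hηR m)
      have e1 : cv (kk Ω (η m) R) f = cv (kk Ω (η m) R) h := funext (hmean _ hkm)
      rw [hmean _ hkε, e1, cv_assoc (bump_continuous ε) (bump_cpt hε) hkm.cont hkm.cpt hhm hhM]
      have hbk : Continuous (cv (bump n ε) (kk Ω (η m) R)) :=
        cv_continuous (bump_continuous ε) (bump_cpt hε) hkm.cont.locallyIntegrable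
      have hbkc : HasCompactSupport (cv (bump n ε) (kk Ω (η m) R)) := by
        rw [cv_eq]; exact hkm.cpt.convolution _ (bump_cpt hε)
      have e2 : cv (kk Ω ε R) h x - cv (cv (bump n ε) (kk Ω (η m) R)) h x =
          ∫ y, (kk Ω ε R (x - y) - cv (bump n ε) (kk Ω (η m) R) (x - y)) * h y := by
        simp only [sub_mul]
        rw [integral_sub (cv_integrand hkε.cont hkε.cpt hhl x) (cv_integrand hbk hbkc hhl x)]
        rfl
      rw [e2, ← Real.enorm_eq_ofReal_abs]
      refine (enorm_integral_le_lintegral_enorm _).trans ?_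
      rw [hX, ← lintegral_const_mul' _ _ ENNReal.ofReal_ne_top]
      refine lintegral_mono fun y => ?_
      rw [Real.enorm_eq_ofReal_abs, abs_mul, ENNReal.ofReal_mul (abs_nonneg _), ← mul_assoc,
        ← ENNReal.ofReal_mul hC.le]
      gcongr
      exact hmol _ _ _ (hη0 m) hm hεR _
    have hconv : Tendsto (fun m => cv (bump n ε) (cv (kk Ω (η m) R) f) x) atTop (𝓝 (cv (bump n ε) g x)) := by
      rw [tendsto_iff_norm_sub_tendsto_zero]
      have h1 : Tendsto (fun m => eLpNorm (bump n ε) 2 volume *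
          eLpNorm (fun x => cv (kk Ω (η m) R) f x - g x) 2 volume) atTop (𝓝 0) := by
        have hb2 : MemLp (bump n ε) 2 := (bump_continuous ε).memLp_of_hasCompactSupport (bump_cpt hε)
        have := ENNReal.Tendsto.const_mul (a := eLpNorm (bump n ε) 2 volume) hlim (Or.inr hb2.2.ne)
        rwa [mul_zero] at this
      have h2 : Tendsto (fun m => ‖cv (bump n ε) (cv (kk Ω (η m) R) f) x - cv (bump n ε) g x‖ₑ) atTop (𝓝 0) := by
        refine squeeze_zero_enn h1 fun m => ?_
        have hkm := hkk _ _ (hη0 m) (hηR m)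
        have hcl := (cv_continuous hkm.cont hkm.cpt hfl)
        rw [← cv_sub (bump_continuous ε) (bump_cpt hε) hcl.locallyIntegrable hgl]
        exact enorm_cv_le (bump_continuous ε).aestronglyMeasurable
          (hcl.aestronglyMeasurable.sub hg.1) x
      have h3 := (ENNReal.tendsto_toReal (a := 0) (by simp)).comp h2
      simpa [Function.comp_def] using h3
    have hfin : Tendsto (fun m => ENNReal.ofReal |cv (kk Ω ε R) f x - cv (bump n ε) (cv (kk Ω (η m) R) f) x|) atTop
        (𝓝 (ENNReal.ofReal |cv (kk Ω ε R) f x - cv (bump n ε) g x|)) :=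
      ENNReal.tendsto_ofReal (tendsto_const_nhds.sub hconv).abs
    refine le_of_tendsto hfin ?_
    filter_upwards [hη.eventually (ge_mem_nhds (a := ε) (b := 0) hε)] with m hm
    exact step m hm
  rw [Metric.tendsto_nhdsWithin_nhds]
  intro θ hθ
  obtain ⟨ε1, h1, H1⟩ := tail_small hfm hM hxf (θ := θ / (3 * C)) (by positivity)
  obtain ⟨ε2, h2, H2⟩ := bump_tendsto hgl hxg (θ := θ / 3) (by positivity)
  refine ⟨min R (min ε1 ε2), by positivity, fun {ε} hε hd => ?_⟩
  have hε0 : 0 < ε := hε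
  rw [Real.dist_eq, sub_zero, abs_of_pos hε0] at hd
  have hdR := hd.le.trans (min_le_left _ _)
  have hd1 := hd.le.trans ((min_le_right _ _).trans (min_le_left _ _))
  have hd2 := hd.le.trans ((min_le_right _ _).trans (min_le_right _ _))
  have h3 : |cv (kk Ω ε R) f x - cv (bump n ε) g x| ≤ θ / 3 := by
    rw [← ENNReal.ofReal_le_ofReal_iff (by positivity)]
    refine (key ε hε0 hdR).trans ((mul_le_mul' le_rfl (H1 ε hε0 hd1)).trans (le_of_eq ?_))
    rw [← ENNReal.ofReal_mul hC.le]
    congr 1; field_simp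
  have h4 := H2 ε hε0 hd2
  rw [Real.dist_eq]
  have h5 := abs_sub_le (cv (kk Ω ε R) f x) (cv (bump n ε) g x) (g x)
  linarith

/-! ### The principal value -/

lemma measurable_kernelFn {n : ℕ} {Ω : E n → ℝ} (hK : IsCZKernel Ω) : Measurable (kernelFn Ω) := by
  refine measurable_of_continuousOn_compl_singleton 0 ?_
  exact (contDiffOn_kernelFn hK).continuousOn

/-- At Lebesgue points the sharp and the smooth truncations have the same limit. -/
lemma teps_sub_small {n : ℕ} (hn : 0 < n) {Ω : E n → ℝ} (hK : IsCZKernel Ω) {f : E n → ℝ}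
    (hf : MemLinftyC f) {x : E n} (hx : LebPt f x) {R : ℝ} (hR : 0 < R)
    (hS : ∀ y, f y ≠ 0 → ‖x - y‖ ≤ R) {θ : ℝ} (hθ : 0 < θ) :
    ∃ ε₀ : ℝ, 0 < ε₀ ∧ ∀ ε, 0 < ε → ε ≤ ε₀ → |Teps Ω ε f x - cv (kk Ω ε R) f x| ≤ θ := by
  obtain ⟨A, hA, hsize, -⟩ := kernelFn_bounds hn hK
  obtain ⟨A', hA', hkk⟩ := kk_cz hn hK
  have hKm := measurable_kernelFn hK
  have hfi : Integrable f := memLp_one_iff_integrable.1 (hf.memLp 1)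
  obtain ⟨ρ, hρ, hleb⟩ := hx (θ / (A * 2 ^ n)) (by positivity)
  refine ⟨min (ρ / 2) R, by positivity, fun ε hε hεε => ?_⟩
  have hεR : ε ≤ R := hεε.trans (min_le_right _ _)
  have hερ : 2 * ε ≤ ρ := by linarith [hεε.trans (min_le_left _ _)]
  -- `h` is the difference of the sharp and the Lipschitz cutoff, supported in `[ε, 2 ε]`.
  let u : ℝ → ℝ := fun t => if ε < t then 1 else 0
  let h : ℝ → ℝ := fun t => u t - chi (t / ε)
  have hum : Measurable u := Measurable.ite measurableSet_Ioi measurable_const measurable_const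
  have hhm : Measurable h := hum.sub (continuous_chi.measurable.comp (measurable_id.div_const _))
  have hlow : ∀ t, t ≤ ε → h t = 0 := fun t ht => by
    simp only [h, u, if_neg (not_lt.2 ht)]
    rw [chi_eq_zero (by rwa [div_le_one hε]), sub_zero]
  have hhigh : ∀ t, 2 * ε < t → h t = 0 := fun t ht => by
    simp only [h, u]
    rw [if_pos (by linarith), chi_eq_one (by rw [le_div_iff₀ hε]; exact ht.le), sub_self]
  have hh1 : ∀ t, |h t| ≤ 1 := fun t => by
    have h0 := chi_nonneg (t / ε)
    have h1 := chi_le_one (t / ε)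
    simp only [h, u]
    split_ifs <;> rw [abs_le] <;> constructor <;> linarith
  have hKb : ∀ w : E n, ε < ‖w‖ → |kernelFn Ω w| ≤ A * (ε ^ n)⁻¹ := fun w hw => by
    rw [← div_eq_mul_inv, le_div_iff₀ (by positivity)]
    refine le_trans ?_ (hsize w)
    gcongr
  have hDb : ∀ w : E n, |kernelFn Ω w * h ‖w‖| ≤ A * (ε ^ n)⁻¹ := fun w => by
    rcases le_or_gt ‖w‖ ε with hw | hw
    · rw [hlow _ hw, mul_zero, abs_zero]; positivity
    · rw [abs_mul]
      calc _ ≤ |kernelFn Ω w| * 1 := by gcongr; exact hh1 _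
        _ ≤ _ := by rw [mul_one]; exact hKb w hw
  have hDm : Measurable fun w : E n => kernelFn Ω w * h ‖w‖ := hKm.mul (hhm.comp measurable_norm)
  have hDi : Integrable fun w : E n => kernelFn Ω w * h ‖w‖ := by
    have : (fun w : E n => kernelFn Ω w * h ‖w‖) = (closedBall 0 (2 * ε)).indicator fun w => kernelFn Ω w * h ‖w‖ := by
      ext w
      by_cases hw : w ∈ closedBall (0 : E n) (2 * ε)
      · rw [indicator_of_mem hw]
      · rw [indicator_of_notMem hw]
        rw [mem_closedBall_zero_iff, not_le] at hw
        rw [hhigh _ hw, mul_zero]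
    rw [this, integrable_indicator_iff isClosed_closedBall.measurableSet]
    exact Measure.integrableOn_of_bounded (isCompact_closedBall _ _).measure_lt_top.ne
      hDm.aestronglyMeasurable (Eventually.of_forall hDb)
  have hD0 : ∫ w : E n, kernelFn Ω w * h ‖w‖ = 0 := by
    have := hK.integral_mul_radial hn fun t => h t / t ^ n
    rw [← this]
    congr 1; ext w; unfold kernelFn; ring
  have hfx : Integrable fun w => f (x - w) := hfi.comp_sub_left x
  have hi1 : Integrable fun w => kernelFn Ω w * u ‖w‖ * f (x - w) := by
    refine hfx.bdd_mul (c := A * (ε ^ n)⁻¹) (hKm.mul (hum.comp measurable_norm)).aestronglyMeasurable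
      (Eventually.of_forall fun w => ?_)
    rw [Real.norm_eq_abs]
    by_cases hw : ε < ‖w‖
    · simp only [u, if_pos hw, mul_one]; exact hKb w hw
    · simp only [u, if_neg hw, mul_zero, abs_zero]; positivity
  have hkε := hkk ε R hε hεR
  have e1 : Teps Ω ε f x = ∫ w, kernelFn Ω w * u ‖w‖ * f (x - w) := by
    unfold Teps
    rw [← integral_indicator (measurableSet_lt measurable_const measurable_norm)]
    congr 1; ext w
    by_cases hw : ε < ‖w‖
    · rw [indicator_of_mem (show w ∈ {y : E n | ε < ‖y‖} from hw)]; simp only [u, if_pos hw, mul_one]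
    · rw [indicator_of_notMem (show w ∉ {y : E n | ε < ‖y‖} from hw)]; simp only [u, if_neg hw, mul_zero, zero_mul]
  have e2' : ∀ w, kernelFn Ω w * chi (‖w‖ / ε) * f (x - w) = kk Ω ε R w * f (x - w) := by
    intro w
    by_cases hw : f (x - w) = 0
    · simp [hw]
    · have h1 := hS _ hw
      rw [show x - (x - w) = w by abel] at h1
      unfold kk
      rw [chi_eq_zero (s := ‖w‖ / R) (by rwa [div_le_one hR]), sub_zero]
  have hi2' : Integrable fun w => kk Ω ε R w * f (x - w) := by
    have := (cv_integrand hkε.cont hkε.cpt hfi.locallyIntegrable x).comp_sub_left x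
    simpa [_root_.sub_sub_cancel] using this
  have hi2 : Integrable fun w => kernelFn Ω w * chi (‖w‖ / ε) * f (x - w) := by
    simp only [e2']; exact hi2'
  have e2 : cv (kk Ω ε R) f x = ∫ w, kernelFn Ω w * chi (‖w‖ / ε) * f (x - w) := by
    simp only [e2']
    unfold cv
    rw [← integral_sub_left_eq_self (fun y => kk Ω ε R y * f (x - y)) volume x]
    simp only [_root_.sub_sub_cancel]
  have hi3 : Integrable fun w => kernelFn Ω w * h ‖w‖ * f (x - w) := by
    have := hi1.sub hi2
    refine this.congr (Eventually.of_forall fun w => ?_)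
    simp only [Pi.sub_apply, h]; ring
  -- The kernel `K h` has mean value zero, so `f x` may be subtracted.
  have e3 : Teps Ω ε f x - cv (kk Ω ε R) f x = ∫ w, kernelFn Ω w * h ‖w‖ * (f (x - w) - f x) := by
    simp only [mul_sub]
    rw [integral_sub hi3 (hDi.mul_const _), integral_mul_const, hD0, zero_mul, sub_zero, e1, e2,
      ← integral_sub hi1 hi2]
    congr 1; ext w; simp only [h]; ring
  have e4 : Teps Ω ε f x - cv (kk Ω ε R) f x = ∫ y, kernelFn Ω (x - y) * h ‖x - y‖ * (f y - f x) := by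
    rw [e3, ← integral_sub_left_eq_self (fun w => kernelFn Ω w * h ‖w‖ * (f (x - w) - f x)) volume x]
    simp only [_root_.sub_sub_cancel]
  rw [← ENNReal.ofReal_le_ofReal_iff hθ.le, ← Real.enorm_eq_ofReal_abs, e4]
  calc _ ≤ ∫⁻ y, ‖kernelFn Ω (x - y) * h ‖x - y‖ * (f y - f x)‖ₑ := enorm_integral_le_lintegral_enorm _
    _ = ∫⁻ y in closedBall x (2 * ε), ‖kernelFn Ω (x - y) * h ‖x - y‖ * (f y - f x)‖ₑ := by
        refine (setLIntegral_eq_of_support_subset fun y hy => ?_).symm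
        by_contra hc
        rw [mem_closedBall, dist_comm, dist_eq_norm, not_le] at hc
        exact hy (by simp [hhigh _ hc])
    _ ≤ ∫⁻ y in closedBall x (2 * ε), ENNReal.ofReal (A * (ε ^ n)⁻¹) * ENNReal.ofReal |f y - f x| := by
        refine lintegral_mono fun y => ?_
        rw [Real.enorm_eq_ofReal_abs, abs_mul, ← ENNReal.ofReal_mul (by positivity)]
        refine ENNReal.ofReal_le_ofReal ?_
        gcongr
        exact hDb _
    _ = ENNReal.ofReal (A * (ε ^ n)⁻¹) * ∫⁻ y in closedBall x (2 * ε), ENNReal.ofReal |f y - f x| :=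
        lintegral_const_mul' _ _ ENNReal.ofReal_ne_top
    _ ≤ ENNReal.ofReal (A * (ε ^ n)⁻¹) * ENNReal.ofReal (θ / (A * 2 ^ n) * (2 * ε) ^ n) := by
        gcongr; exact hleb _ (by positivity) hερ
    _ = _ := by
        rw [← ENNReal.ofReal_mul (by positivity), mul_pow]
        congr 1; field_simp

/-- Almost everywhere, the principal value is the limit of the smooth truncations, provided
the outer truncation radius exceeds the distance to the support. -/
lemma tendsto_tsing {n : ℕ} (hn : 0 < n) {Ω : E n → ℝ} (hK : IsCZKernel Ω) {f : E n → ℝ}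
    (hf : MemLinftyC f) {R : ℝ} (hR : 0 < R) : ∀ᵐ x, (∀ y, f y ≠ 0 → ‖x - y‖ ≤ R) →
      Tendsto (fun ε => cv (kk Ω ε R) f x) (𝓝[>] 0) (𝓝 (Tsing Ω f x)) := by
  have hfi : Integrable f := memLp_one_iff_integrable.1 (hf.memLp 1)
  filter_upwards [kk_limit hn hK hf hR, ae_lebPt hfi.locallyIntegrable] with x ⟨l, hl⟩ hx hS
  have h0 : Tendsto (fun ε => Teps Ω ε f x - cv (kk Ω ε R) f x) (𝓝[>] 0) (𝓝 0) := by
    rw [Metric.tendsto_nhdsWithin_nhds]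
    intro θ hθ
    obtain ⟨ε₀, h1, h2⟩ := teps_sub_small hn hK hf hx hR hS (θ := θ / 2) (by positivity)
    refine ⟨ε₀, h1, fun {ε} hε hd => ?_⟩
    have hε0 : 0 < ε := hε
    rw [Real.dist_eq, sub_zero, abs_of_pos hε0] at hd
    rw [Real.dist_eq, sub_zero]
    linarith [h2 ε hε0 hd.le]
  have h1 : Tendsto (fun ε => Teps Ω ε f x) (𝓝[>] 0) (𝓝 l) := by
    have := h0.add hl
    simpa using this
  have h2 : Tsing Ω f x = l := h1.limUnder_eq
  rw [h2]; exact hl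

/-! ### The oscillation on a cube -/

/-- The diameter of a cube of side `h` is at most `n h`. -/
lemma cube_dist {n : ℕ} {a x y : E n} {h : ℝ} (hh : 0 < h) (hx : ∀ i, a i ≤ x i ∧ x i ≤ a i + h)
    (hy : ∀ i, a i ≤ y i ∧ y i ≤ a i + h) : ‖x - y‖ ≤ n * h := by
  rw [EuclideanSpace.norm_eq]
  have h1 : ∑ i, ‖(x - y) i‖ ^ 2 ≤ n * h ^ 2 := by
    calc ∑ i, ‖(x - y) i‖ ^ 2 ≤ ∑ _i : Fin n, h ^ 2 := by
          refine Finset.sum_le_sum fun i _ => ?_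
          have : ‖(x - y) i‖ ≤ h := by
            rw [PiLp.sub_apply, Real.norm_eq_abs, abs_le]
            constructor <;> linarith [(hx i).1, (hx i).2, (hy i).1, (hy i).2]
          gcongr
      _ = n * h ^ 2 := by simp
  have h2 : (n : ℝ) * h ^ 2 ≤ (n * h) ^ 2 := by
    have : (n : ℝ) ≤ (n : ℝ) ^ 2 := by exact_mod_cast Nat.le_self_pow (by norm_num) n
    rw [mul_pow]; gcongr
  rw [← Real.sqrt_sq (show 0 ≤ n * h by positivity)]
  exact Real.sqrt_le_sqrt (h1.trans h2)

/-- If `f2`, dominated by `f`, vanishes on the ball of radius `2 ρ` at `x`, then `k * f2` varies by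
at most a multiple of the maximal function `Mf(x)` on the ball of radius `ρ` at `x`. -/
lemma far_part {n : ℕ} {A : ℝ} (hA : 0 < A) {k f f2 : E n → ℝ} (hk : CZ A k) (hf : Measurable f)
    (hf2 : LocallyIntegrable f2) {x y : E n} {ρ : ℝ} (hρ : 0 < ρ) (hxy : ‖x - y‖ ≤ ρ)
    (hle : ∀ w, |f2 w| ≤ |f w|) (hfar : ∀ w, f2 w ≠ 0 → 2 * ρ < ‖x - w‖) {m : ℝ} (hm : 0 < m)
    (hmax : maximal f x ≤ ENNReal.ofReal m) :
    |cv k f2 y - cv k f2 x| ≤ A * (2 ^ (n + 2) * 2 ^ n) * m := by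
  have e : cv k f2 y - cv k f2 x = ∫ w, (k (y - w) - k (x - w)) * f2 w := by
    simp only [sub_mul]
    rw [integral_sub (cv_integrand hk.cont hk.cpt hf2 y) (cv_integrand hk.cont hk.cpt hf2 x)]
    rfl
  have hFm : Measurable fun w => ENNReal.ofReal |f w| := hf.abs.ennreal_ofReal
  have h1 := lintegral_tailFn_le' hρ hFm x (ENNReal.ofReal (2 ^ n) * ENNReal.ofReal m) (fun s hs => by
    have hs0 := hρ.trans_le hs
    refine (lintegral_closedBall_le_maximal f (x := x) (z := x) hs0 (by simpa using hs0.le)).trans ?_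
    rw [mul_pow, mul_comm, ENNReal.ofReal_mul (by positivity)]
    calc _ ≤ ENNReal.ofReal m * (ENNReal.ofReal (2 ^ n) * ENNReal.ofReal (s ^ n)) := by gcongr
      _ = _ := by ring)
  rw [← ENNReal.ofReal_le_ofReal_iff (by positivity), ← Real.enorm_eq_ofReal_abs, e]
  calc _ ≤ ∫⁻ w, ‖(k (y - w) - k (x - w)) * f2 w‖ₑ := enorm_integral_le_lintegral_enorm _
    _ ≤ ∫⁻ w, ENNReal.ofReal A * (ENNReal.ofReal (tailFn n ρ (x - w)) * ENNReal.ofReal |f w|) := by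
        refine lintegral_mono fun w => ?_
        have ht := tailFn_nonneg hρ.le (x - w)
        rw [Real.enorm_eq_ofReal_abs, abs_mul, ← mul_assoc, ← ENNReal.ofReal_mul hA.le,
          ← ENNReal.ofReal_mul (by positivity)]
        refine ENNReal.ofReal_le_ofReal ?_
        by_cases hw : f2 w = 0
        · rw [hw, abs_zero, mul_zero]; positivity
        have hw' := hfar w hw
        have hpos : 0 < ‖x - w‖ := by linarith
        refine mul_le_mul ?_ (hle w) (abs_nonneg _) (mul_nonneg hA.le ht)
        have hreg := hk.reg (x - w) (x - y) (by linarith)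
        rw [show x - w - (x - y) = y - w by abel] at hreg
        unfold tailFn
        rw [if_neg (by linarith), mul_div_assoc', le_div_iff₀ (by positivity)]
        refine hreg.trans ?_
        gcongr
    _ = ENNReal.ofReal A * ∫⁻ w, ENNReal.ofReal (tailFn n ρ (x - w)) * ENNReal.ofReal |f w| :=
        lintegral_const_mul' _ _ ENNReal.ofReal_ne_top
    _ ≤ ENNReal.ofReal A * (ENNReal.ofReal (2 ^ (n + 2)) * (ENNReal.ofReal (2 ^ n) * ENNReal.ofReal m)) := by gcongr
    _ = _ := by
        rw [← ENNReal.ofReal_mul (by positivity), ← ENNReal.ofReal_mul (by positivity),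
          ← ENNReal.ofReal_mul (by positivity)]
        congr 1; ring

/-- The oscillation estimate on a single cube `Q ∋ x`, for any `m ≥ Mf(x)`: Kolmogorov's inequality
bounds the part of `f` near `Q`, and the far part is nearly constant on `Q`. -/
lemma cube_bound {n : ℕ} (hn : 0 < n) {Ω : E n → ℝ} (hK : IsCZKernel Ω) {δ : ℝ} (hδ : δ ∈ Ioo (0 : ℝ) 1) :
    ∃ C : ℝ, 0 < C ∧ ∀ f : E n → ℝ, MemLinftyC f → ∀ x : E n, ∀ m : ℝ, 0 < m →
      maximal f x ≤ ENNReal.ofReal m → ∀ (a : E n) (h : ℝ), 0 < h → (∀ i, a i ≤ x i ∧ x i ≤ a i + h) →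
      ∃ c : ℝ, ∫⁻ y in {y : E n | ∀ i, a i ≤ y i ∧ y i ≤ a i + h}, ENNReal.ofReal (|Tsing Ω f y - c| ^ δ) ≤
        ENNReal.ofReal (h ^ n * (C * m ^ δ)) := by
  obtain ⟨A, hA, hkk⟩ := kk_cz hn hK
  obtain ⟨C1, hC1, hweak⟩ := weak_one_one hn A
  obtain ⟨C2, hC2, hkol⟩ := kolmogorov (n := n) hδ
  set B : ℝ := C1 * (4 * n) ^ n with hB
  set D : ℝ := A * (2 ^ (n + 2) * 2 ^ n) with hD
  have hn' : (0 : ℝ) < n := by exact_mod_cast hn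
  have hB0 : 0 < B := by positivity
  have hD0 : 0 < D := by positivity
  refine ⟨C2 * B ^ δ + D ^ δ, by positivity, fun f hf x m hm hmax a h hh hx => ?_⟩
  set Q : Set (E n) := {y : E n | ∀ i, a i ≤ y i ∧ y i ≤ a i + h} with hQ
  have hQm : MeasurableSet Q := measurableSet_cube ⟨a, h, hh, rfl⟩
  have hQv : volume Q = ENNReal.ofReal (h ^ n) := volume_cube a hh
  set ρ : ℝ := n * h with hρd
  have hρ : 0 < ρ := by positivity
  have hxy : ∀ y ∈ Q, ‖x - y‖ ≤ ρ := fun y hy => cube_dist hh hx hy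
  have hfi : Integrable f := memLp_one_iff_integrable.1 (hf.memLp 1)
  obtain ⟨S, hS0, hS⟩ : ∃ S : ℝ, 0 < S ∧ ∀ y, f y ≠ 0 → ‖y‖ ≤ S := by
    obtain ⟨S, hS⟩ := hf.2.2.isBounded.subset_closedBall 0
    refine ⟨max S 1, by positivity, fun y hy => ?_⟩
    exact (mem_closedBall_zero_iff.1 (hS (subset_tsupport _ hy))).trans (le_max_left _ _)
  -- The outer truncation radius `R` is so large that it is not seen from `Q`.
  set R : ℝ := max ρ (‖x‖ + ρ + S) with hR
  have hρR : ρ ≤ R := le_max_left _ _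
  have hR0 : 0 < R := hρ.trans_le hρR
  have hQR : ∀ y ∈ Q, ∀ w, f w ≠ 0 → ‖y - w‖ ≤ R := fun y hy w hw => by
    have h1 : ‖y‖ ≤ ‖x‖ + ‖x - y‖ := by
      calc ‖y‖ = ‖x - (x - y)‖ := by congr 1; abel
        _ ≤ _ := norm_sub_le _ _
    have h2 := norm_sub_le y w
    have h3 := hS w hw
    have h4 := hxy y hy
    exact le_trans (by linarith) (le_max_right _ _)
  let U : Set (E n) := closedBall x (2 * ρ)
  have hU : MeasurableSet U := isClosed_closedBall.measurableSet
  let f1 : E n → ℝ := U.indicator f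
  let f2 : E n → ℝ := Uᶜ.indicator f
  have hf1i : Integrable f1 := hfi.indicator hU
  have hf2i : Integrable f2 := hfi.indicator hU.compl
  have hf12 : ∀ w, f w = f1 w + f2 w := fun w => by
    simp only [f1, f2]
    exact (congrFun (indicator_self_add_compl U f) w).symm
  have hfar : ∀ w, f2 w ≠ 0 → 2 * ρ < ‖x - w‖ := fun w hw => by
    have : w ∈ Uᶜ := by
      by_contra hc
      exact hw (indicator_of_notMem hc f)
    have h2 : w ∉ closedBall x (2 * ρ) := this
    rw [mem_closedBall, dist_comm, dist_eq_norm, not_le] at h2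
    exact h2
  have hle : ∀ w, |f2 w| ≤ |f w| := fun w => by
    have := norm_indicator_le_norm_self (s := Uᶜ) f w
    simpa using this
  let ε : ℕ → ℝ := fun j => ρ * (1 / ((j : ℝ) + 1))
  have hε0 : ∀ j, 0 < ε j := fun j => by positivity
  have hερ : ∀ j, ε j ≤ ρ := fun j => by
    have : 1 / ((j : ℝ) + 1) ≤ 1 := by
      rw [div_le_one (by positivity)]; linarith [(Nat.cast_nonneg j : (0 : ℝ) ≤ j)]
    exact mul_le_of_le_one_right hρ.le this
  have hεt : Tendsto ε atTop (𝓝[>] 0) := by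
    refine tendsto_nhdsWithin_iff.2 ⟨?_, Eventually.of_forall hε0⟩
    have := (tendsto_one_div_add_atTop_nhds_zero_nat (𝕜 := ℝ)).const_mul ρ
    rwa [mul_zero] at this
  have hkj : ∀ j, CZ A (kk Ω (ε j) R) := fun j => hkk _ _ (hε0 j) ((hερ j).trans hρR)
  set c : ℝ := cv (kk Ω ρ R) f2 x with hc
  -- the value at `x` of the far part does not depend on the inner truncation
  have hcj : ∀ j, cv (kk Ω (ε j) R) f2 x = c := fun j => by
    simp only [hc, cv]
    congr 1; ext w
    by_cases hw : f2 w = 0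
    · rw [hw, mul_zero, mul_zero]
    · rw [kk_add Ω (ε j) ρ R, kk_eq_zero' Ω (hε0 j) (hερ j) (hfar w hw).le, zero_add]
  have hpt : ∀ j, ∀ y ∈ Q, ENNReal.ofReal (|cv (kk Ω (ε j) R) f y - c| ^ δ) ≤
      ENNReal.ofReal (|cv (kk Ω (ε j) R) f1 y| ^ δ) + ENNReal.ofReal ((D * m) ^ δ) := by
    intro j y hy
    have hk := hkj j
    have h1 := far_part hA hk hf.1 hf2i.locallyIntegrable hρ (hxy y hy) hle hfar hm hmax
    rw [hcj j, ← hD] at h1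
    have h2 : cv (kk Ω (ε j) R) f1 y = cv (kk Ω (ε j) R) f y - cv (kk Ω (ε j) R) f2 y := by
      rw [← cv_sub hk.cont hk.cpt hfi.locallyIntegrable hf2i.locallyIntegrable]
      congr 1; ext w; rw [hf12 w]; ring
    have h3 : |cv (kk Ω (ε j) R) f y - c| ≤ |cv (kk Ω (ε j) R) f1 y| + D * m := by
      have : cv (kk Ω (ε j) R) f y - c = cv (kk Ω (ε j) R) f1 y + (cv (kk Ω (ε j) R) f2 y - c) := by
        rw [h2]; ring
      rw [this]
      exact (abs_add_le _ _).trans (by gcongr)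
    rw [← ENNReal.ofReal_add (by positivity) (by positivity)]
    refine ENNReal.ofReal_le_ofReal ?_
    calc _ ≤ (|cv (kk Ω (ε j) R) f1 y| + D * m) ^ δ := Real.rpow_le_rpow (abs_nonneg _) h3 hδ.1.le
      _ ≤ _ := Real.rpow_add_le_add_rpow (abs_nonneg _) (by positivity) hδ.1.le hδ.2.le
  have hf1n : ∫⁻ y, ENNReal.ofReal |f1 y| ≤ ENNReal.ofReal ((4 * ρ) ^ n * m) := by
    have h1 : ∫⁻ y, ENNReal.ofReal |f1 y| = ∫⁻ y in U, ENNReal.ofReal |f y| := by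
      rw [← lintegral_indicator hU]
      congr 1; ext y
      by_cases hy : y ∈ U
      · simp only [f1]; rw [indicator_of_mem hy, indicator_of_mem hy]
      · simp only [f1]; rw [indicator_of_notMem hy, indicator_of_notMem hy]; simp
    rw [h1]
    refine (lintegral_closedBall_le_maximal f (x := x) (z := x) (r := 2 * ρ) (by positivity)
      (by simpa using hρ.le)).trans ?_
    rw [ENNReal.ofReal_mul (by positivity), show 2 * (2 * ρ) = 4 * ρ by ring]
    gcongr
  have hInt : ∀ j, ∫⁻ y in Q, ENNReal.ofReal (|cv (kk Ω (ε j) R) f y - c| ^ δ) ≤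
      ENNReal.ofReal (h ^ n * ((C2 * B ^ δ + D ^ δ) * m ^ δ)) := by
    intro j
    have hk := hkj j
    have hm1 : Measurable (cv (kk Ω (ε j) R) f1) :=
      (cv_continuous hk.cont hk.cpt hf1i.locallyIntegrable).measurable
    have hV : 0 < h ^ n := by positivity
    have h2 := hkol _ hm1 (C1 * ((4 * ρ) ^ n * m)) (by positivity) (fun L hL => by
      refine (hweak _ hk f1 hf1i L hL).trans ?_
      rw [ENNReal.ofReal_mul hC1.le]
      gcongr) Q (h ^ n) hQm hV hQv
    have e : C1 * ((4 * ρ) ^ n * m) / h ^ n = B * m := by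
      rw [hB, hρd, ← mul_assoc 4, mul_pow _ h]; field_simp
    rw [e, Real.mul_rpow hB0.le hm.le] at h2
    calc _ ≤ ∫⁻ y in Q, (ENNReal.ofReal (|cv (kk Ω (ε j) R) f1 y| ^ δ) + ENNReal.ofReal ((D * m) ^ δ)) :=
          setLIntegral_mono' hQm (hpt j)
      _ = (∫⁻ y in Q, ENNReal.ofReal (|cv (kk Ω (ε j) R) f1 y| ^ δ)) + ENNReal.ofReal ((D * m) ^ δ) * volume Q := by
          rw [lintegral_add_right _ measurable_const, setLIntegral_const]
      _ ≤ ENNReal.ofReal (C2 * (h ^ n * (B ^ δ * m ^ δ))) + ENNReal.ofReal ((D * m) ^ δ) * ENNReal.ofReal (h ^ n) := by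
          rw [hQv]; gcongr
      _ = _ := by
          rw [← ENNReal.ofReal_mul (by positivity), ← ENNReal.ofReal_add (by positivity) (by positivity),
            Real.mul_rpow hD0.le hm.le]
          congr 1; ring
  refine ⟨c, ?_⟩
  -- Fatou's lemma along the scales `ε j`
  have hmeas : ∀ j, Measurable fun y => ENNReal.ofReal (|cv (kk Ω (ε j) R) f y - c| ^ δ) := fun j => by
    have hk := hkj j
    have := (cv_continuous hk.cont hk.cpt hfi.locallyIntegrable).measurable
    exact (((this.sub_const c).abs).pow_const δ).ennreal_ofReal
  calc ∫⁻ y in Q, ENNReal.ofReal (|Tsing Ω f y - c| ^ δ)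
      = ∫⁻ y in Q, liminf (fun j => ENNReal.ofReal (|cv (kk Ω (ε j) R) f y - c| ^ δ)) atTop := by
        refine setLIntegral_congr_fun_ae hQm ?_
        filter_upwards [tendsto_tsing hn hK hf hR0] with y hy hyQ
        have h1 := (hy (hQR y hyQ)).comp hεt
        have h2 : Tendsto (fun j => ENNReal.ofReal (|cv (kk Ω (ε j) R) f y - c| ^ δ)) atTop
            (𝓝 (ENNReal.ofReal (|Tsing Ω f y - c| ^ δ))) :=
          ENNReal.tendsto_ofReal (((h1.sub_const c).abs).rpow_const (Or.inr hδ.1.le))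
        exact h2.liminf_eq.symm
    _ ≤ liminf (fun j => ∫⁻ y in Q, ENNReal.ofReal (|cv (kk Ω (ε j) R) f y - c| ^ δ)) atTop :=
        lintegral_liminf_le hmeas
    _ ≤ liminf (fun _ : ℕ => ENNReal.ofReal (h ^ n * ((C2 * B ^ δ + D ^ δ) * m ^ δ))) atTop :=
        liminf_le_liminf (Eventually.of_forall hInt)
    _ = _ := liminf_const _

end

/-- Alvarez–Pérez pointwise estimate: if `0 < δ < 1`, there is a constant
`c_{δ,n}` (depending only on `δ`, `n` and the kernel) with
`(Tf)_δ^#(x) ≤ c_{δ,n} Mf(x)` for all `f ∈ L^∞_c` and all `x`. -/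
theorem statement7 {n : ℕ} (hn : 0 < n) (Ω : E n → ℝ) (hK : IsCZKernel Ω)
    (δ : ℝ) (hδ : δ ∈ Set.Ioo (0 : ℝ) 1) :
    ∃ c : ℝ, 0 < c ∧ ∀ f : E n → ℝ, MemLinftyC f → ∀ x : E n,
      sharpDelta δ (Tsing Ω f) x ≤ ENNReal.ofReal c * maximal f x := by
  obtain ⟨C, hC, hcube⟩ := cube_bound hn hK hδ
  have hδ0 := hδ.1
  have hc : 0 < C ^ (1 / δ) := by positivity
  refine ⟨C ^ (1 / δ), hc, fun f hf x => ?_⟩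
  have main : ∀ m : ℝ, 0 < m → maximal f x ≤ ENNReal.ofReal m →
      sharpDelta δ (Tsing Ω f) x ≤ ENNReal.ofReal (C ^ (1 / δ)) * ENNReal.ofReal m := by
    intro m hm hmax
    unfold sharpDelta
    refine iSup₂_le fun Q hQx => ?_
    obtain ⟨⟨a, h, hh, rfl⟩, hx⟩ := hQx
    obtain ⟨c, hcb⟩ := hcube f hf x m hm hmax a h hh hx
    refine (iInf_le _ c).trans ?_
    have hV : 0 < h ^ n := by positivity
    calc _ ≤ (ENNReal.ofReal (C * m ^ δ)) ^ (1 / δ) := by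
          refine ENNReal.rpow_le_rpow ?_ (by positivity)
          rw [volume_cube a hh]
          refine ENNReal.div_le_of_le_mul' ?_
          rwa [← ENNReal.ofReal_mul hV.le]
      _ = ENNReal.ofReal ((C * m ^ δ) ^ (1 / δ)) :=
          ENNReal.ofReal_rpow_of_nonneg (by positivity) (by positivity)
      _ = _ := by
          rw [Real.mul_rpow hC.le (by positivity), ← Real.rpow_mul hm.le, mul_one_div_cancel hδ0.ne',
            Real.rpow_one, ENNReal.ofReal_mul hc.le]
  by_cases htop : maximal f x = ⊤
  · rw [htop, ENNReal.mul_top (by simpa using hc)]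
    exact le_top
  -- a positive margin covers the case where the maximal function vanishes
  have hlim : Tendsto (fun t : ℝ => ENNReal.ofReal (C ^ (1 / δ)) * ENNReal.ofReal ((maximal f x).toReal + t))
      (𝓝[>] 0) (𝓝 (ENNReal.ofReal (C ^ (1 / δ)) * maximal f x)) := by
    refine ENNReal.Tendsto.const_mul ?_ (Or.inr ENNReal.ofReal_ne_top)
    have h1 : Tendsto (fun t : ℝ => (maximal f x).toReal + t) (𝓝[>] 0) (𝓝 ((maximal f x).toReal + 0)) :=
      (tendsto_const_nhds.add tendsto_id).mono_left nhdsWithin_le_nhds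
    have h2 := ENNReal.tendsto_ofReal h1
    rwa [add_zero, ENNReal.ofReal_toReal htop] at h2
  refine ge_of_tendsto hlim ?_
  filter_upwards [self_mem_nhdsWithin] with t ht
  have ht0 : (0 : ℝ) < t := ht
  refine main _ (by positivity) ?_
  rw [← ENNReal.ofReal_toReal htop]
  refine ENNReal.ofReal_le_ofReal ?_
  rw [ENNReal.toReal_ofReal ENNReal.toReal_nonneg]
  linarith

end VarExp
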